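/- Let n ≥ 3 and 1 ≤ k ≤ m. A tuple (φ⁰, φ¹, …, φ^k) ∈ (𝒮(T𝕊^{n−1}))^{k+1} belongs to the range of the operator 𝓘^k on 𝒮(S^m) if and only if: (1) φ^ℓ(x,−ξ) = (−1)^{m−ℓ} φ^ℓ(x,ξ) for ℓ = 0,1,…,k; and (2) the function ψ^k ∈ C^∞(ℝⁿ×(ℝⁿ∖{0})) defined by ψ^k(x,ξ) = |ξ|^{m−2k−1} Σ_{r=0}^k (−1)^{k−r} C(k,r) |ξ|^r ⟨ξ,x⟩^{k−r} φ^r(x − (⟨x,ξ⟩/|ξ|²)ξ, ξ/|ξ|) satisfies the iterated John equations (∂²/∂x^{i₁}∂ξ^{j₁} − ∂²/∂x^{j₁}∂ξ^{i₁}) ⋯ (∂²/∂x^{i_{m+1}}∂ξ^{j_{m+1}} − ∂²/∂x^{j_{m+1}}∂ξ^{i_{m+1}}) ψ^k = 0 for all indices 1 ≤ i₁,j₁,…,i_{m+1},j_{m+1} ≤ n. -/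

import Mathlib

noncomputable section

open MeasureTheory Filter
open scoped RealInnerProductSpace BigOperators

/-- `ℝⁿ` with the Euclidean structure. -/
abbrev En (n : ℕ) := EuclideanSpace ℝ (Fin n)

/-- A symmetric `m`-tensor on `ℝⁿ` (pointwise): a family of reals indexed by
`(i₁,…,i_m)`, invariant under permutations of the indices. -/
def IsSymTensor {n m : ℕ} (F : (Fin m → Fin n) → ℝ) : Prop :=
  ∀ (π : Equiv.Perm (Fin m)) (i : Fin m → Fin n), F (i ∘ π) = F i

/-- A symmetric `m`-tensor field on `ℝⁿ`. -/
def IsSymField {n m : ℕ} (f : (Fin m → Fin n) → En n → ℝ) : Prop :=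
  ∀ (π : Equiv.Perm (Fin m)) (i : Fin m → Fin n), f (i ∘ π) = f i

/-- All components of the field are Schwartz functions. -/
def IsSchwartzField {n m : ℕ} (f : (Fin m → Fin n) → En n → ℝ) : Prop :=
  ∀ i, ∃ φ : SchwartzMap (En n) ℝ, ⇑φ = f i

/-- Symmetrization `σ` of a tensor: average over all permutations of the indices. -/
def symz {n m : ℕ} {α : Type*} [AddCommMonoid α] [Module ℝ α]
    (F : (Fin m → Fin n) → α) : (Fin m → Fin n) → α :=
  fun i => ((m.factorial : ℝ))⁻¹ • ∑ π : Equiv.Perm (Fin m), F (i ∘ π)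

/-- The `q`-th momentum ray transform
`(J^q f)(x,ξ) = ∫ t^q f_{i₁…i_m}(x+tξ) ξ^{i₁}⋯ξ^{i_m} dt`, as a function on all of
`ℝⁿ × ℝⁿ`; its restriction to `TSⁿ⁻¹ = {|ξ|=1, ⟨x,ξ⟩=0}` is `I^q f`. -/
def momRT {n m : ℕ} (q : ℕ) (f : (Fin m → Fin n) → En n → ℝ) (x ξ : En n) : ℝ :=
  ∫ t : ℝ, t ^ q * ∑ i : Fin m → Fin n, f i (x + t • ξ) * ∏ r, ξ (i r)

/-- Coordinate partial derivative `∂/∂x^j`. -/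
def pd {n : ℕ} (j : Fin n) (u : En n → ℝ) : En n → ℝ :=
  fun x => fderiv ℝ u x (EuclideanSpace.single j 1)

/-- Inner differentiation (symmetrized derivative) `d`. -/
def dsym {n m : ℕ} (u : (Fin m → Fin n) → En n → ℝ) :
    (Fin (m + 1) → Fin n) → En n → ℝ :=
  symz (fun i => pd (i (Fin.last m)) (u (fun s => i s.castSucc)))

/-- Iterated inner differentiation `d^k`. -/
def dpow {n m : ℕ} : (k : ℕ) → ((Fin m → Fin n) → En n → ℝ) →
    (Fin (m + k) → Fin n) → En n → ℝ
  | 0, u => u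
  | k + 1, u => dsym (dpow k u)

/-- Divergence `δ`. -/
def divg {n m : ℕ} (u : (Fin (m + 1) → Fin n) → En n → ℝ) :
    (Fin m → Fin n) → En n → ℝ :=
  fun i x => ∑ j : Fin n, pd j (u (Fin.snoc i j)) x

/-- Iterated divergence `δ^k`. -/
def divpow {n : ℕ} : (k : ℕ) → {p : ℕ} → ((Fin (p + k) → Fin n) → En n → ℝ) →
    (Fin p → Fin n) → En n → ℝ
  | 0, _, u => u
  | k + 1, _, u => divpow k (divg u)

/-- Partial derivative `∂/∂x^j` in the first slot of a function of `(x, ξ)`. -/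
def pdx {n : ℕ} (j : Fin n) (F : En n → En n → ℝ) : En n → En n → ℝ :=
  fun x ξ => fderiv ℝ (fun x' => F x' ξ) x (EuclideanSpace.single j 1)

/-- Partial derivative `∂/∂ξ^j` in the second slot of a function of `(x, ξ)`. -/
def pdxi {n : ℕ} (j : Fin n) (F : En n → En n → ℝ) : En n → En n → ℝ :=
  fun x ξ => fderiv ℝ (fun ξ' => F x ξ') ξ (EuclideanSpace.single j 1)

/-- Iterated `∂x` derivatives along a list of indices. -/
def pdxList {n : ℕ} (l : List (Fin n)) (F : En n → En n → ℝ) : En n → En n → ℝ :=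
  l.foldr pdx F

/-- Iterated `∂ξ` derivatives along a list of indices. -/
def pdxiList {n : ℕ} (l : List (Fin n)) (F : En n → En n → ℝ) : En n → En n → ℝ :=
  l.foldr pdxi F

/-- The John operator `J_{ij} = ∂²/∂x^i∂ξ^j − ∂²/∂x^j∂ξ^i`. -/
def johnOp {n : ℕ} (i j : Fin n) (F : En n → En n → ℝ) : En n → En n → ℝ :=
  fun x ξ => pdx i (pdxi j F) x ξ - pdx j (pdxi i F) x ξ

/-- Iterated John operators `J_{i₁j₁} ⋯ J_{i_r j_r}`. -/
def johnIter {n : ℕ} (l : List (Fin n × Fin n)) (F : En n → En n → ℝ) : En n → En n → ℝ :=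
  l.foldr (fun ij G => johnOp ij.1 ij.2 G) F

/-- Sharafutdinov's Schwartz space `𝒮(TSⁿ⁻¹)`: a function on
`TSⁿ⁻¹ = {(x,ξ) : |ξ|=1, ⟨x,ξ⟩=0}` is Schwartz iff it is the restriction of a
Schwartz function on `ℝⁿ × ℝⁿ`. -/
def IsSchwartzOnTS {n : ℕ} (φ : En n → En n → ℝ) : Prop :=
  ∃ Φ : SchwartzMap (En n × En n) ℝ, ∀ x ξ : En n, ‖ξ‖ = 1 → ⟪x, ξ⟫ = 0 → φ x ξ = Φ (x, ξ)

/-- Symmetric multiplication `i_{x^{⊗k}} : S^m → S^{m+k}`. -/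
def iPowTens {n m k : ℕ} (x : En n) (V : (Fin m → Fin n) → ℝ) :
    (Fin (m + k) → Fin n) → ℝ :=
  symz (fun i => (∏ r : Fin k, x (i (Fin.natAdd m r))) * V (fun s => i (Fin.castAdd k s)))

/-- Convolution (contraction) `j_{x^{⊗k}} : S^{m+k} → S^m`. -/
def jPowTens {n m k : ℕ} (x : En n) (F : (Fin (m + k) → Fin n) → ℝ) :
    (Fin m → Fin n) → ℝ :=
  fun i => ∑ j : Fin k → Fin n, (∏ r, x (j r)) * F (Fin.append i j)

/-!
Lift the tuple to a function `U (x, ξ)` which is Schwartz in `x`, positively homogeneous of degree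
`m` in `ξ ≠ 0`, and whose moments `J^r U (x, ξ) = ∫ t ^ r * U (x + t • ξ, ξ) dt` restrict to `φ^r`
for `r ≤ k`. Then `ψ^k = J^k U`. For a tensor field, `U` may be taken to be a form of degree `m` in
`ξ`; each John operator lowers the degree by one and commutes with `J^k`, hence `m + 1` of them
annihilate `ψ^k`.

Conversely, `J^q v = 0` implies `J^r v = 0` for all `r ≤ q`, so all the moments of order `≤ k` of
the `(m + 1)`-fold John derivatives of `U` vanish. One replaces `U` by a form of degree `m` with
Schwartz coefficients, one moment at a time. If the moments of order `< ℓ` already vanish, then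
`⟪x, ξ⟫ ^ ℓ * ‖ξ‖ ^ (-2 * ℓ) * U`, of degree `m - ℓ`, has `J^ℓ U` as its `0`-th moment; if a form
`p` of degree `m - ℓ` has this `0`-th moment, then `(-1) ^ ℓ / ℓ! * ⟪ξ, ∂ₓ⟫ ^ ℓ p` has the moments
of `U` up to order `ℓ`.

There remains the case of `J^0`. By the Fourier slice theorem, `J^0 v` depends only on the partial
Fourier transform `v̂ (y, ξ)` of `v` in `x` on `{⟪y, ξ⟫ = 0}`, and one shows by induction on the
degree `d` that it agrees there with a form of degree `d` in `ξ` with Schwartz coefficients. The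
John derivatives of `v` give the combinations `y_i ∂v̂/∂ξ_j - y_j ∂v̂/∂ξ_i` on `{⟪y, ξ⟫ = 0}`. If
all of them vanish, `v̂ (y, ·)` is locally constant on `y^⊥ ∖ 0`, which is connected as `3 ≤ n`:
this settles `d = 0`, and for `d < 0` homogeneity makes `v̂` vanish there. If they are forms of
degree `d`, the sum over `i, j` of `ξ_j ∂/∂y_i` applied to them is, by Euler's identity
`∑ ξ_j ∂v̂/∂ξ_j = (d + 1) v̂`, equal to `(d + 1) (n - 1 + ⟪y, ∂_y⟫) v̂` on the hyperplane `ξ^⊥`; the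
operator `n - 1 + ⟪y, ∂_y⟫` is inverted by averaging along rays in `y`, which preserves forms.
-/

namespace RayTransform

open scoped SchwartzMap FourierTransform ContDiff Topology LineDeriv

section SchwartzMap

variable {V W F : Type*} [NormedAddCommGroup V] [NormedSpace ℝ V]
  [NormedAddCommGroup W] [NormedSpace ℝ W] [NormedAddCommGroup F] [NormedSpace ℝ F]

theorem norm_iteratedFDeriv_comp_clm_le (L : V →L[ℝ] W) (hL : ‖L‖ ≤ 1) (f : 𝓢(W, F)) (i : ℕ)
    (z : V) : ‖iteratedFDeriv ℝ i (fun z => f (L z)) z‖ ≤ ‖iteratedFDeriv ℝ i f (L z)‖ := by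
  change ‖iteratedFDeriv ℝ i (⇑f ∘ ⇑L) z‖ ≤ _
  rw [L.iteratedFDeriv_comp_right (f.smooth ⊤) z (mod_cast le_top)]
  exact (ContinuousMultilinearMap.norm_compContinuousLinearMap_le _ _).trans
    (mul_le_of_le_one_right (norm_nonneg _)
      (Finset.prod_le_one (fun _ _ => norm_nonneg _) fun _ _ => hL))

theorem norm_iteratedFDeriv_prod_mul_le (f : 𝓢(V, ℝ)) (g : 𝓢(W, ℝ)) (N : ℕ) (p : V × W) :
    ‖iteratedFDeriv ℝ N (fun p : V × W => f p.1 * g p.2) p‖ ≤ ∑ i ∈ Finset.range (N + 1),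
      (N.choose i : ℝ) * ‖iteratedFDeriv ℝ i f p.1‖ * ‖iteratedFDeriv ℝ (N - i) g p.2‖ := by
  refine (norm_iteratedFDeriv_mul_le ((f.smooth ⊤).comp contDiff_fst)
    ((g.smooth ⊤).comp contDiff_snd) p (mod_cast le_top)).trans ?_
  gcongr with i
  · exact norm_iteratedFDeriv_comp_clm_le (ContinuousLinearMap.fst ℝ V W)
      (ContinuousLinearMap.norm_fst_le ..) f i p
  · exact norm_iteratedFDeriv_comp_clm_le (ContinuousLinearMap.snd ℝ V W)
      (ContinuousLinearMap.norm_snd_le ..) g (N - i) p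

theorem exists_schwartzMap_prod_mul (f : 𝓢(V, ℝ)) (g : 𝓢(W, ℝ)) :
    ∃ h : 𝓢(V × W, ℝ), ∀ a b, h (a, b) = f a * g b := by
  refine ⟨⟨fun p => f p.1 * g p.2,
    ((f.smooth ⊤).comp contDiff_fst).mul ((g.smooth ⊤).comp contDiff_snd), ?_⟩, fun a b => rfl⟩
  intro k N
  choose C hC using f.decay
  choose D hD using g.decay
  refine ⟨∑ i ∈ Finset.range (N + 1), (N.choose i : ℝ) *
    (C k i * D 0 (N - i) + C 0 i * D k (N - i)), ?_⟩
  rintro ⟨a, b⟩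
  have norm_pow_le : ‖((a, b) : V × W)‖ ^ k ≤ ‖a‖ ^ k + ‖b‖ ^ k := by
    rw [Prod.norm_mk]
    rcases max_cases ‖a‖ ‖b‖ with h | h <;> rw [h.1] <;> simp
  calc ‖((a, b) : V × W)‖ ^ k * _ ≤ (‖a‖ ^ k + ‖b‖ ^ k) * ∑ i ∈ Finset.range (N + 1),
        (N.choose i : ℝ) * ‖iteratedFDeriv ℝ i f a‖ * ‖iteratedFDeriv ℝ (N - i) g b‖ :=
        mul_le_mul norm_pow_le (norm_iteratedFDeriv_prod_mul_le f g N (a, b)) (norm_nonneg _)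
          (by positivity)
    _ = ∑ i ∈ Finset.range (N + 1), (N.choose i : ℝ) *
        ((‖a‖ ^ k * ‖iteratedFDeriv ℝ i f a‖) * (‖b‖ ^ 0 * ‖iteratedFDeriv ℝ (N - i) g b‖) +
        (‖a‖ ^ 0 * ‖iteratedFDeriv ℝ i f a‖) * (‖b‖ ^ k * ‖iteratedFDeriv ℝ (N - i) g b‖)) := by
        rw [Finset.mul_sum]
        exact Finset.sum_congr rfl fun i _ => by ring
    _ ≤ _ := by
        gcongr with i
        · exact (hC k i).1.le
        · exact (hC _ _).2 _
        · exact (hD _ _).2 _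
        · exact (hC 0 i).1.le
        · exact (hC _ _).2 _
        · exact (hD _ _).2 _

theorem exists_one_add_norm_pow_mul_le (g : 𝓢(V, F)) (k : ℕ) :
    ∃ C : ℝ, 0 ≤ C ∧ ∀ z, (1 + ‖z‖) ^ k * ‖g z‖ ≤ C := by
  refine ⟨2 ^ k * ((Finset.Iic (k, 0)).sup fun m => SchwartzMap.seminorm ℝ m.1 m.2) g,
    by positivity, fun z => ?_⟩
  simpa using SchwartzMap.one_add_le_sup_seminorm_apply (𝕜 := ℝ) (m := (k, 0)) le_rfl le_rfl g z

theorem lineDerivOp_comm (s : 𝓢(V, F)) (v w x : V) :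
    (∂_{v} (∂_{w} s)) x = (∂_{w} (∂_{v} s)) x := by
  have lineDerivOp_eq_fderiv_fderiv (v w : V) :
      (∂_{v} (∂_{w} s)) x = fderiv ℝ (fderiv ℝ s) x v w := by
    have hs : DifferentiableAt ℝ (fderiv ℝ s) x :=
      ((s.smooth 2).fderiv_right (m := 1) (by norm_num)).differentiable (by simp) x
    have coe_lineDerivOp : ⇑(∂_{w} s : 𝓢(V, F)) = fun x => fderiv ℝ s x w :=
      funext fun x => SchwartzMap.lineDerivOp_apply_eq_fderiv ..
    rw [SchwartzMap.lineDerivOp_apply_eq_fderiv, coe_lineDerivOp,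
      fderiv_clm_apply hs (differentiableAt_const w)]
    simp
  rw [lineDerivOp_eq_fderiv_fderiv, lineDerivOp_eq_fderiv_fderiv]
  exact (s.smooth 2).contDiffAt.isSymmSndFDerivAt (by simp) v w

end SchwartzMap

section Coordinates

variable {ι F : Type*} [Fintype ι] [DecidableEq ι] [NormedAddCommGroup F] [NormedSpace ℝ F]

theorem clm_apply_eq_sum_single (L : EuclideanSpace ℝ ι →L[ℝ] F) (v : EuclideanSpace ℝ ι) :
    L v = ∑ j, v j • L (EuclideanSpace.single j 1) := by
  conv_lhs => rw [← (EuclideanSpace.basisFun ι ℝ).sum_repr v]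
  simp

/-- The linear map `w ↦ (v ↦ v j • w)` which rebuilds the `j`-th summand of a differential from a
partial derivative. -/
def coordSmulRight (F : Type*) [NormedAddCommGroup F] [NormedSpace ℝ F] (j : ι) :
    F →L[ℝ] EuclideanSpace ℝ ι →L[ℝ] F :=
  ContinuousLinearMap.smulRightL ℝ (EuclideanSpace ℝ ι) F (EuclideanSpace.proj j)

theorem fderiv_eq_sum_coordSmulRight {g : EuclideanSpace ℝ ι → F}
    {g' : EuclideanSpace ℝ ι → EuclideanSpace ℝ ι →L[ℝ] F} (hg : ∀ y, HasFDerivAt g (g' y) y) :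
    fderiv ℝ g = fun y => ∑ j, coordSmulRight F j (g' y (EuclideanSpace.single j 1)) := by
  funext y
  ext v
  rw [(hg y).fderiv, clm_apply_eq_sum_single (g' y) v]
  simp [coordSmulRight]

theorem contDiff_and_decay_of_partials_mem (C : Set (EuclideanSpace ℝ ι → F)) (p : ℕ)
    (partials_mem : ∀ g ∈ C, ∃ g' : EuclideanSpace ℝ ι → (EuclideanSpace ℝ ι →L[ℝ] F),
      (∀ y, HasFDerivAt g (g' y) y) ∧ ∀ j, (fun y => g' y (EuclideanSpace.single j 1)) ∈ C)
    (decay : ∀ g ∈ C, ∃ K : ℝ, ∀ y, ‖y‖ ^ p * ‖g y‖ ≤ K) (N : ℕ) :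
    ∀ g ∈ C, ContDiff ℝ N g ∧ ∃ K : ℝ, ∀ y, ‖y‖ ^ p * ‖iteratedFDeriv ℝ N g y‖ ≤ K := by
  induction N with
  | zero =>
    intro g hg
    obtain ⟨g', hg', -⟩ := partials_mem g hg
    refine ⟨?_, by simpa using decay g hg⟩
    rw [Nat.cast_zero, contDiff_zero]
    exact continuous_iff_continuousAt.2 fun y => (hg' y).continuousAt
  | succ N ih =>
    intro g hg
    obtain ⟨g', hg', hC⟩ := partials_mem g hg
    have contDiff_summand (j : ι) :
        ContDiff ℝ N fun y => coordSmulRight F j (g' y (EuclideanSpace.single j 1)) :=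
      (ContinuousLinearMap.contDiff _).comp (ih _ (hC j)).1
    refine ⟨?_, ?_⟩
    · push_cast
      rw [contDiff_succ_iff_fderiv, fderiv_eq_sum_coordSmulRight hg']
      exact ⟨fun y => (hg' y).differentiableAt, by simp, ContDiff.sum fun j _ => contDiff_summand j⟩
    · choose K hK using fun j => (ih _ (hC j)).2
      refine ⟨∑ j : ι, ‖coordSmulRight (ι := ι) F j‖ * K j, fun y => ?_⟩
      rw [← norm_iteratedFDeriv_fderiv, fderiv_eq_sum_coordSmulRight hg',
        iteratedFDeriv_fun_sum_apply fun j _ => (contDiff_summand j).contDiffAt]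
      refine (mul_le_mul_of_nonneg_left (norm_sum_le _ _) (by positivity)).trans ?_
      rw [Finset.mul_sum]
      refine Finset.sum_le_sum fun j _ => ?_
      have norm_summand_le := (coordSmulRight F j).norm_iteratedFDeriv_comp_left
        ((ih _ (hC j)).1.contDiffAt (x := y)) (n := N) le_rfl
      refine (mul_le_mul_of_nonneg_left norm_summand_le (by positivity)).trans ?_
      rw [mul_left_comm]
      exact mul_le_mul_of_nonneg_left (hK j y) (norm_nonneg _)

end Coordinates

section Bump

variable {E F : Type*} [NormedAddCommGroup E] [NormedSpace ℝ E]
  [NormedAddCommGroup F] [NormedSpace ℝ F]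

theorem contDiff_smul_of_eventually_zero {β : E → ℝ} (hβ : ContDiff ℝ ∞ β)
    (hβ0 : ∀ᶠ ξ in 𝓝 0, β ξ = 0) {h : E → F} (hh : ∀ ξ, ξ ≠ 0 → ContDiffAt ℝ ∞ h ξ) :
    ContDiff ℝ ∞ (fun ξ => β ξ • h ξ) := by
  rw [contDiff_iff_contDiffAt]
  intro ξ
  rcases eq_or_ne ξ 0 with rfl | hξ
  · exact (contDiffAt_const (c := (0 : F))).congr_of_eventuallyEq (hβ0.mono fun ξ h => by simp [h])
  · exact hβ.contDiffAt.smul (hh ξ hξ)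

variable [FiniteDimensional ℝ E]

theorem exists_bump_away_from_zero {ξ₀ : E} (hξ₀ : ξ₀ ≠ 0) : ∃ β : E → ℝ, ContDiff ℝ ∞ β ∧
    HasCompactSupport β ∧ (∀ ξ, 0 ≤ β ξ) ∧ (∀ ξ, β ξ ≤ 1) ∧ (∀ᶠ ξ in 𝓝 ξ₀, β ξ = 1) ∧
    (∀ᶠ ξ in 𝓝 0, β ξ = 0) := by
  have norm_pos : 0 < ‖ξ₀‖ := norm_pos_iff.2 hξ₀
  let b : ContDiffBump ξ₀ := ⟨‖ξ₀‖ / 4, ‖ξ₀‖ / 2, by positivity, by linarith⟩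
  refine ⟨b, b.contDiff, b.hasCompactSupport, fun _ => b.nonneg, fun _ => b.le_one,
    b.eventuallyEq_one, ?_⟩
  have zero_notMem : (0 : E) ∉ tsupport b := by
    rw [b.tsupport_eq, Metric.mem_closedBall, dist_eq_norm]
    simp only [zero_sub, norm_neg, not_le, b]
    linarith
  exact notMem_tsupport_iff_eventuallyEq.1 zero_notMem

end Bump

section LocSchwartz

variable {V W : Type*} [NormedAddCommGroup V] [NormedSpace ℝ V]
  [NormedAddCommGroup W] [NormedSpace ℝ W]

/-- `u (x, ξ)` is Schwartz in `x`, smoothly and locally uniformly in `ξ ≠ 0`: near each `ξ₀ ≠ 0` it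
coincides with a Schwartz function of both variables. No condition is imposed at `ξ = 0`, where
the homogeneous functions below may be singular. -/
def IsLocSchwartz (u : V → W → ℝ) : Prop :=
  ∀ ξ₀ : W, ξ₀ ≠ 0 → ∃ U : 𝓢(V × W, ℝ), ∀ᶠ ξ in 𝓝 ξ₀, ∀ x, u x ξ = U (x, ξ)

/-- The multipliers of `IsLocSchwartz` functions: near each `ξ₀ ≠ 0`, `g` coincides with a function
of temperate growth. -/
def IsLocTemperate (g : V → W → ℝ) : Prop :=
  ∀ ξ₀ : W, ξ₀ ≠ 0 → ∃ G : V × W → ℝ, G.HasTemperateGrowth ∧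
    ∀ᶠ ξ in 𝓝 ξ₀, ∀ x, g x ξ = G (x, ξ)

variable {u v g h : V → W → ℝ}

theorem IsLocSchwartz.add (hu : IsLocSchwartz u) (hv : IsLocSchwartz v) :
    IsLocSchwartz (fun x ξ => u x ξ + v x ξ) := by
  intro ξ₀ hξ₀
  obtain ⟨U, hU⟩ := hu ξ₀ hξ₀
  obtain ⟨V, hV⟩ := hv ξ₀ hξ₀
  exact ⟨U + V, by filter_upwards [hU, hV] with ξ hu hv x; simp [hu, hv]⟩

theorem IsLocSchwartz.mul_left (hg : IsLocTemperate g) (hu : IsLocSchwartz u) :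
    IsLocSchwartz (fun x ξ => g x ξ * u x ξ) := by
  intro ξ₀ hξ₀
  obtain ⟨U, hU⟩ := hu ξ₀ hξ₀
  obtain ⟨G, temperate, hG⟩ := hg ξ₀ hξ₀
  refine ⟨SchwartzMap.smulLeftCLM ℝ G U, ?_⟩
  filter_upwards [hU, hG] with ξ hu hg x
  rw [SchwartzMap.smulLeftCLM_apply_apply temperate, hu, hg, smul_eq_mul]

theorem IsLocTemperate.of_hasTemperateGrowth {G : V × W → ℝ} (hG : G.HasTemperateGrowth) :
    IsLocTemperate (fun x ξ => G (x, ξ)) :=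
  fun _ _ => ⟨G, hG, Eventually.of_forall fun _ _ => rfl⟩

theorem IsLocTemperate.const (c : ℝ) : IsLocTemperate (fun (_ : V) (_ : W) => c) :=
  of_hasTemperateGrowth (.const c)

theorem IsLocTemperate.mul (hg : IsLocTemperate g) (hh : IsLocTemperate h) :
    IsLocTemperate (fun x ξ => g x ξ * h x ξ) := by
  intro ξ₀ hξ₀
  obtain ⟨G, temperateG, hG⟩ := hg ξ₀ hξ₀
  obtain ⟨H, temperateH, hH⟩ := hh ξ₀ hξ₀
  exact ⟨_, temperateG.mul temperateH, by filter_upwards [hG, hH] with ξ hg hh x; simp [hg, hh]⟩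

theorem IsLocTemperate.pow (hg : IsLocTemperate g) (k : ℕ) :
    IsLocTemperate (fun x ξ => g x ξ ^ k) := by
  intro ξ₀ hξ₀
  obtain ⟨G, temperate, hG⟩ := hg ξ₀ hξ₀
  exact ⟨_, temperate.pow k, by filter_upwards [hG] with ξ hg x; simp [hg]⟩

theorem IsLocSchwartz.const_mul (hu : IsLocSchwartz u) (c : ℝ) :
    IsLocSchwartz (fun x ξ => c * u x ξ) :=
  .mul_left (.const c) hu

theorem IsLocSchwartz.sub (hu : IsLocSchwartz u) (hv : IsLocSchwartz v) :
    IsLocSchwartz (fun x ξ => u x ξ - v x ξ) := by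
  simpa [sub_eq_add_neg] using hu.add (hv.const_mul (-1))

theorem IsLocSchwartz.sum {ι : Type*} (s : Finset ι) {f : ι → V → W → ℝ}
    (hf : ∀ i ∈ s, IsLocSchwartz (f i)) : IsLocSchwartz (fun x ξ => ∑ i ∈ s, f i x ξ) := by
  classical
  induction s using Finset.induction_on with
  | empty => exact fun _ _ => ⟨0, Eventually.of_forall fun _ _ => by simp⟩
  | insert a s ha ih =>
    simp only [Finset.sum_insert ha]
    exact (hf a (by simp)).add (ih fun i hi => hf i (by simp [hi]))

theorem IsLocTemperate.of_snd [FiniteDimensional ℝ W] {h : W → ℝ}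
    (hh : ∀ ξ, ξ ≠ 0 → ContDiffAt ℝ ∞ h ξ) : IsLocTemperate (fun (_ : V) ξ => h ξ) := by
  intro ξ₀ hξ₀
  obtain ⟨β, smooth, compact, -, -, eq_one, eq_zero⟩ := exists_bump_away_from_zero hξ₀
  have compact_smul : HasCompactSupport (fun ξ => β ξ • h ξ) := compact.smul_right
  refine ⟨fun p => β p.2 • h p.2,
    (compact_smul.hasTemperateGrowth (contDiff_smul_of_eventually_zero smooth eq_zero hh)).comp
      (ContinuousLinearMap.snd ℝ V W).hasTemperateGrowth, ?_⟩
  filter_upwards [eq_one] with ξ hβ _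
  simp [hβ]

theorem IsLocSchwartz.exists_slice (hu : IsLocSchwartz u) {ξ : W} (hξ : ξ ≠ 0) :
    ∃ s : 𝓢(V, ℝ), ∀ x, s x = u x ξ := by
  obtain ⟨U, hU⟩ := hu ξ hξ
  have temperate : (fun x : V => (x, ξ)).HasTemperateGrowth := by
    have := (ContinuousLinearMap.inl ℝ V W).hasTemperateGrowth.add
      (Function.HasTemperateGrowth.const ((0, ξ) : V × W))
    convert this using 2
    simp
  refine ⟨SchwartzMap.compCLM ℝ temperate ⟨1, 1, fun x => ?_⟩ U, fun x => ?_⟩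
  · have : ‖x‖ ≤ ‖((x, ξ) : V × W)‖ := le_max_left _ _
    simp only [pow_one, one_mul]
    linarith
  · rw [hU.self_of_nhds x]; rfl

theorem hasFDerivAt_fst (U : 𝓢(V × W, ℝ)) (x : V) (ξ : W) :
    HasFDerivAt (fun x' => U (x', ξ))
      ((fderiv ℝ U (x, ξ)).comp (ContinuousLinearMap.inl ℝ V W)) x :=
  U.differentiableAt.hasFDerivAt.comp x (hasFDerivAt_prodMk_left x ξ)

theorem hasFDerivAt_snd (U : 𝓢(V × W, ℝ)) (x : V) (ξ : W) :
    HasFDerivAt (fun ξ' => U (x, ξ'))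
      ((fderiv ℝ U (x, ξ)).comp (ContinuousLinearMap.inr ℝ V W)) ξ :=
  U.differentiableAt.hasFDerivAt.comp ξ (hasFDerivAt_prodMk_right x ξ)

theorem IsLocSchwartz.differentiableAt_fst (hu : IsLocSchwartz u) {ξ : W} (hξ : ξ ≠ 0) (x : V) :
    DifferentiableAt ℝ (fun x' => u x' ξ) x := by
  obtain ⟨s, hs⟩ := hu.exists_slice hξ
  rw [show (fun x' => u x' ξ) = s from funext fun x => (hs x).symm]
  exact s.differentiableAt

theorem IsLocSchwartz.differentiableAt_snd (hu : IsLocSchwartz u) {ξ : W} (hξ : ξ ≠ 0) (x : V) :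
    DifferentiableAt ℝ (fun ξ' => u x ξ') ξ := by
  obtain ⟨U, hU⟩ := hu ξ hξ
  exact (hasFDerivAt_snd U x ξ).differentiableAt.congr_of_eventuallyEq (hU.mono fun ξ' h => h x)

theorem isLocTemperate_inner_const {E : Type*} [NormedAddCommGroup E] [InnerProductSpace ℝ E]
    (v : E) : IsLocTemperate (fun x (_ : W) => ⟪x, v⟫) :=
  .of_hasTemperateGrowth (G := fun p : E × W => ⟪p.1, v⟫)
    ((Function.hasTemperateGrowth_inner_left v).comp
      (ContinuousLinearMap.fst ℝ E W).hasTemperateGrowth)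

end LocSchwartz

section InnerProduct

variable {E : Type*} [NormedAddCommGroup E] [InnerProductSpace ℝ E]

theorem isLocTemperate_inner : IsLocTemperate (fun x ξ : E => ⟪x, ξ⟫) :=
  .of_hasTemperateGrowth (G := fun p : E × E => ⟪p.1, p.2⟫)
    ((innerSL ℝ (E := E)).bilinear_hasTemperateGrowth
      (ContinuousLinearMap.fst ℝ E E).hasTemperateGrowth
      (ContinuousLinearMap.snd ℝ E E).hasTemperateGrowth)

theorem isLocTemperate_norm_zpow [FiniteDimensional ℝ E] (d : ℤ) :
    IsLocTemperate (fun _ ξ : E => ‖ξ‖ ^ d) := by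
  refine .of_snd fun ξ hξ => ?_
  have contDiffAt_norm := contDiffAt_norm ℝ hξ (n := ∞)
  rcases d with d | d
  · simpa using contDiffAt_norm.pow d
  · simp only [zpow_negSucc]
    exact (contDiffAt_norm.pow (d + 1)).inv (by simpa using hξ)

end InnerProduct

section PartialDerivatives

variable {n : ℕ} {u : En n → En n → ℝ}

theorem isLocTemperate_coord (j : Fin n) : IsLocTemperate (fun _ ξ : En n => ξ j) :=
  .of_hasTemperateGrowth (G := fun p => ((EuclideanSpace.proj j : En n →L[ℝ] ℝ).comp
    (ContinuousLinearMap.snd ℝ (En n) (En n))) p) (ContinuousLinearMap.hasTemperateGrowth _)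

theorem pdx_eq_lineDerivOp {U : 𝓢(En n × En n, ℝ)} {ξ : En n} (h : ∀ x, u x ξ = U (x, ξ))
    (j : Fin n) (x : En n) :
    pdx j u x ξ = (∂_{((EuclideanSpace.single j 1, 0) : En n × En n)} U) (x, ξ) := by
  unfold pdx
  rw [show (fun x' => u x' ξ) = fun x' => U (x', ξ) from funext h,
    (hasFDerivAt_fst U x ξ).fderiv, SchwartzMap.lineDerivOp_apply_eq_fderiv]
  simp

theorem pdxi_eq_lineDerivOp {U : 𝓢(En n × En n, ℝ)} {ξ : En n}
    (h : ∀ᶠ ξ' in 𝓝 ξ, ∀ x, u x ξ' = U (x, ξ')) (j : Fin n) (x : En n) :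
    pdxi j u x ξ = (∂_{((0, EuclideanSpace.single j 1) : En n × En n)} U) (x, ξ) := by
  unfold pdxi
  have : (fun ξ' => u x ξ') =ᶠ[𝓝 ξ] fun ξ' => U (x, ξ') := h.mono fun ξ' h' => h' x
  rw [this.fderiv_eq, (hasFDerivAt_snd U x ξ).fderiv, SchwartzMap.lineDerivOp_apply_eq_fderiv]
  simp

theorem pdx_eq_lineDerivOp_slice {ξ : En n} {s : 𝓢(En n, ℝ)} (hs : ∀ x, s x = u x ξ)
    (i : Fin n) (x : En n) : pdx i u x ξ = (∂_{(EuclideanSpace.single i 1 : En n)} s) x := by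
  unfold pdx
  rw [show (fun x' => u x' ξ) = s from funext fun x => (hs x).symm,
    SchwartzMap.lineDerivOp_apply_eq_fderiv]

theorem IsLocSchwartz.pdx (hu : IsLocSchwartz u) (j : Fin n) : IsLocSchwartz (pdx j u) := by
  intro ξ₀ hξ₀
  obtain ⟨U, hU⟩ := hu ξ₀ hξ₀
  exact ⟨_, hU.mono fun ξ h => pdx_eq_lineDerivOp h j⟩

theorem IsLocSchwartz.pdxi (hu : IsLocSchwartz u) (j : Fin n) : IsLocSchwartz (pdxi j u) := by
  intro ξ₀ hξ₀
  obtain ⟨U, hU⟩ := hu ξ₀ hξ₀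
  exact ⟨_, hU.eventually_nhds.mono fun ξ h => pdxi_eq_lineDerivOp h j⟩

theorem IsLocSchwartz.johnOp (hu : IsLocSchwartz u) (i j : Fin n) :
    IsLocSchwartz (johnOp i j u) :=
  ((hu.pdxi j).pdx i).sub ((hu.pdxi i).pdx j)

theorem IsLocSchwartz.johnIter (hu : IsLocSchwartz u) (l : List (Fin n × Fin n)) :
    IsLocSchwartz (johnIter l u) := by
  induction l with
  | nil => exact hu
  | cons a l ih => exact ih.johnOp a.1 a.2

theorem pdx_pdx_comm (hu : IsLocSchwartz u) {ξ : En n} (hξ : ξ ≠ 0) (i j : Fin n) (x : En n) :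
    pdx i (pdx j u) x ξ = pdx j (pdx i u) x ξ := by
  obtain ⟨s, hs⟩ := hu.exists_slice hξ
  rw [pdx_eq_lineDerivOp_slice fun x => (pdx_eq_lineDerivOp_slice hs j x).symm,
    pdx_eq_lineDerivOp_slice fun x => (pdx_eq_lineDerivOp_slice hs i x).symm, lineDerivOp_comm]

end PartialDerivatives

section RayMoment

variable {E F : Type*} [NormedAddCommGroup E] [NormedSpace ℝ E]
  [NormedAddCommGroup F] [NormedSpace ℝ F]

/-- The momentum ray transform `J^q` of a function of `(x, ξ)`; `momRT` is the case of a polynomial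
in `ξ`. -/
def rayMoment (q : ℕ) (u : E → E → ℝ) (x ξ : E) : ℝ :=
  ∫ t : ℝ, t ^ q * u (x + t • ξ) ξ

theorem one_add_abs_le_of_norm_le {x ξ : E} {R δ : ℝ} (hδ : 0 < δ) (hx : ‖x‖ ≤ R) (hξ : δ ≤ ‖ξ‖)
    (t : ℝ) : 1 + |t| ≤ (1 + (1 + R) / δ) * (1 + ‖x + t • ξ‖) := by
  have R_nonneg : 0 ≤ R := (norm_nonneg _).trans hx
  have mul_norm_le : |t| * ‖ξ‖ ≤ ‖x + t • ξ‖ + ‖x‖ := by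
    simpa [norm_smul] using norm_sub_le (x + t • ξ) x
  have mul_le : |t| * δ ≤ ‖x + t • ξ‖ + R :=
    (mul_le_mul_of_nonneg_left hξ (abs_nonneg t)).trans (mul_norm_le.trans (by linarith))
  have abs_le : |t| ≤ (‖x + t • ξ‖ + R) / δ := by rwa [le_div_iff₀ hδ]
  have div_le : (‖x + t • ξ‖ + R) / δ ≤ (1 + R) / δ * (1 + ‖x + t • ξ‖) := by
    rw [div_mul_eq_mul_div]
    gcongr
    nlinarith [norm_nonneg (x + t • ξ)]
  nlinarith [norm_nonneg (x + t • ξ)]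

theorem exists_schwartzMap_line (s : 𝓢(E, F)) (x : E) {ξ : E} (hξ : ξ ≠ 0) :
    ∃ r : 𝓢(ℝ, F), ∀ t, r t = s (x + t • ξ) := by
  have temperate : (fun t : ℝ => x + t • ξ).HasTemperateGrowth :=
    (Function.HasTemperateGrowth.const x).add
      (ContinuousLinearMap.toSpanSingleton ℝ ξ).hasTemperateGrowth
  refine ⟨SchwartzMap.compCLM ℝ temperate ⟨1, 1 + (1 + ‖x‖) / ‖ξ‖, fun t => ?_⟩ s, fun t => rfl⟩
  have := one_add_abs_le_of_norm_le (norm_pos_iff.2 hξ) (le_refl ‖x‖) (le_refl ‖ξ‖) t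
  rw [pow_one, Real.norm_eq_abs]
  linarith

theorem integrable_pow_mul_line (s : 𝓢(E, ℝ)) (q : ℕ) (x : E) {ξ : E} (hξ : ξ ≠ 0) :
    Integrable (fun t : ℝ => t ^ q * s (x + t • ξ)) := by
  obtain ⟨r, hr⟩ := exists_schwartzMap_line s x hξ
  have integrable := (SchwartzMap.smulLeftCLM ℝ (fun t : ℝ => t ^ q) r).integrable (μ := volume)
  refine integrable.congr (Eventually.of_forall fun t => ?_)
  have temperate : (fun t : ℝ => t ^ q).HasTemperateGrowth := Function.HasTemperateGrowth.id'.pow q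
  simp only
  rw [SchwartzMap.smulLeftCLM_apply_apply temperate, hr, smul_eq_mul]

theorem IsLocSchwartz.integrable_pow_mul_line {u : E → E → ℝ} (hu : IsLocSchwartz u) (q : ℕ)
    (x : E) {ξ : E} (hξ : ξ ≠ 0) : Integrable (fun t : ℝ => t ^ q * u (x + t • ξ) ξ) := by
  obtain ⟨s, hs⟩ := hu.exists_slice hξ
  simpa [hs] using RayTransform.integrable_pow_mul_line s q x hξ

theorem integrable_inv_one_add_abs_sq : Integrable (fun t : ℝ => ((1 + |t|) ^ 2)⁻¹) := by
  have integrable := integrable_one_add_norm (E := ℝ) (μ := volume) (r := 2) (by simp)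
  refine integrable.congr (Eventually.of_forall fun t => ?_)
  simp only [Real.norm_eq_abs]
  rw [Real.rpow_neg (by positivity)]
  norm_cast

/-- The shear `(x, ξ) ↦ (x + tξ, ξ)`, which makes `rayMoment` an integral over `t` of pullbacks
of one function by linear maps. -/
def rayShear (E : Type*) [NormedAddCommGroup E] [NormedSpace ℝ E] (t : ℝ) : E × E →L[ℝ] E × E :=
  (ContinuousLinearMap.fst ℝ E E + t • ContinuousLinearMap.snd ℝ E E).prod
    (ContinuousLinearMap.snd ℝ E E)

theorem rayShear_apply (t : ℝ) (p : E × E) : rayShear E t p = (p.1 + t • p.2, p.2) := rfl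

theorem norm_rayShear_le (t : ℝ) : ‖rayShear E t‖ ≤ 1 + |t| := by
  refine ContinuousLinearMap.opNorm_le_bound _ (by positivity) fun p => ?_
  have norm_fst : ‖p.1‖ ≤ ‖p‖ := norm_fst_le p
  have norm_snd : ‖p.2‖ ≤ ‖p‖ := norm_snd_le p
  rw [rayShear_apply, Prod.norm_mk]
  refine max_le ((norm_add_le _ _).trans ?_) ?_
  · rw [norm_smul, Real.norm_eq_abs]
    nlinarith [abs_nonneg t]
  · nlinarith [abs_nonneg t, norm_nonneg p]

theorem continuous_rayShear : Continuous (fun t : ℝ => rayShear E t) := by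
  have rayShear_eq : (fun t : ℝ => rayShear E t) = fun t => rayShear E 0 + t •
      ((ContinuousLinearMap.snd ℝ E E).prod (0 : E × E →L[ℝ] E)) := by
    funext t
    ext p <;> simp [rayShear]
  rw [rayShear_eq]
  fun_prop

theorem exists_norm_pow_smul_comp_rayShear_le {G : Type*} [NormedAddCommGroup G] [NormedSpace ℝ G]
    (g : 𝓢(E × E, E × E →L[ℝ] G)) (q : ℕ) {R δ : ℝ} (hR : 0 ≤ R) (hδ : 0 < δ) :
    ∃ C : ℝ, ∀ (t : ℝ) (p : E × E), ‖p.1‖ ≤ R → δ ≤ ‖p.2‖ →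
      ‖t ^ q • (g (rayShear E t p)).comp (rayShear E t)‖ ≤ C * ((1 + |t|) ^ 2)⁻¹ := by
  obtain ⟨C, -, hC⟩ := exists_one_add_norm_pow_mul_le g (q + 3)
  set K := 1 + (1 + R) / δ
  refine ⟨K ^ (q + 3) * C, fun t p hx hξ => ?_⟩
  have one_add_abs_le : 1 + |t| ≤ K * (1 + ‖rayShear E t p‖) := by
    refine (one_add_abs_le_of_norm_le hδ hx hξ t).trans ?_
    gcongr
    exact norm_fst_le (rayShear E t p)
  rw [← div_eq_mul_inv, le_div_iff₀ (by positivity), norm_smul, norm_pow, Real.norm_eq_abs]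
  calc |t| ^ q * ‖(g (rayShear E t p)).comp (rayShear E t)‖ * (1 + |t|) ^ 2
      ≤ (1 + |t|) ^ q * (‖g (rayShear E t p)‖ * (1 + |t|)) * (1 + |t|) ^ 2 := by
        gcongr
        · linarith
        · exact (ContinuousLinearMap.opNorm_comp_le _ _).trans
            (mul_le_mul_of_nonneg_left (norm_rayShear_le t) (norm_nonneg _))
    _ = (1 + |t|) ^ (q + 3) * ‖g (rayShear E t p)‖ := by ring
    _ ≤ (K * (1 + ‖rayShear E t p‖)) ^ (q + 3) * ‖g (rayShear E t p)‖ := by gcongr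
    _ = K ^ (q + 3) * ((1 + ‖rayShear E t p‖) ^ (q + 3) * ‖g (rayShear E t p)‖) := by
        rw [mul_pow, mul_assoc]
    _ ≤ K ^ (q + 3) * C := by gcongr; exact hC _

theorem hasFDerivAt_integral_rayShear [FiniteDimensional ℝ E] (U : 𝓢(E × E, ℝ)) (q : ℕ)
    (x₀ : E) {ξ₀ : E} (hξ₀ : ξ₀ ≠ 0) :
    Integrable (fun t : ℝ => t ^ q • (fderiv ℝ U (rayShear E t (x₀, ξ₀))).comp (rayShear E t)) ∧
    HasFDerivAt (fun p : E × E => ∫ t : ℝ, t ^ q * U (rayShear E t p))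
      (∫ t : ℝ, t ^ q • (fderiv ℝ U (rayShear E t (x₀, ξ₀))).comp (rayShear E t)) (x₀, ξ₀) := by
  have hδ : 0 < ‖ξ₀‖ / 2 := by have := norm_pos_iff.2 hξ₀; positivity
  obtain ⟨C, hC⟩ := exists_norm_pow_smul_comp_rayShear_le (SchwartzMap.fderivCLM ℝ _ _ U) q
    (R := ‖x₀‖ + ‖ξ₀‖ / 2) (by positivity) hδ
  have continuous_rayShear_apply (p : E × E) : Continuous fun t : ℝ => rayShear E t p :=
    continuous_rayShear.clm_apply continuous_const
  have bound (t : ℝ) (p : E × E) (hp : p ∈ Metric.ball (x₀, ξ₀) (‖ξ₀‖ / 2)) :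
      ‖t ^ q • (fderiv ℝ U (rayShear E t p)).comp (rayShear E t)‖ ≤ C * ((1 + |t|) ^ 2)⁻¹ := by
    rw [Metric.mem_ball, dist_eq_norm] at hp
    have norm_fst_sub : ‖p.1 - x₀‖ < ‖ξ₀‖ / 2 := (norm_fst_le (p - (x₀, ξ₀))).trans_lt hp
    have norm_snd_sub : ‖p.2 - ξ₀‖ < ‖ξ₀‖ / 2 := (norm_snd_le (p - (x₀, ξ₀))).trans_lt hp
    refine hC t p ?_ ?_
    · linarith [norm_le_norm_sub_add p.1 x₀]
    · linarith [norm_sub_norm_le ξ₀ p.2, norm_sub_rev ξ₀ p.2]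
  have measurable : AEStronglyMeasurable
      (fun t : ℝ => t ^ q • (fderiv ℝ U (rayShear E t (x₀, ξ₀))).comp (rayShear E t)) volume :=
    ((continuous_pow q).smul ((((U.smooth 1).continuous_fderiv (by simp)).comp
      (continuous_rayShear_apply _)).clm_comp continuous_rayShear)).aestronglyMeasurable
  have integrable_bound : Integrable fun t : ℝ => C * ((1 + |t|) ^ 2)⁻¹ :=
    integrable_inv_one_add_abs_sq.const_mul _
  refine ⟨integrable_bound.mono' measurable
    (Eventually.of_forall fun t => bound t _ (Metric.mem_ball_self hδ)), ?_⟩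
  refine hasFDerivAt_integral_of_dominated_of_fderiv_le (𝕜 := ℝ)
    (bound := fun t => C * ((1 + |t|) ^ 2)⁻¹)
    (F' := fun p t => t ^ q • (fderiv ℝ U (rayShear E t p)).comp (rayShear E t))
    (Metric.ball_mem_nhds _ hδ) ?_ ?_ measurable (Eventually.of_forall bound) integrable_bound ?_
  · exact Eventually.of_forall fun p => ((continuous_pow q).mul
      (U.continuous.comp (continuous_rayShear_apply p))).aestronglyMeasurable
  · have isLocSchwartz : IsLocSchwartz (fun x ξ => U (x, ξ)) :=
      fun _ _ => ⟨U, Eventually.of_forall fun _ _ => rfl⟩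
    exact isLocSchwartz.integrable_pow_mul_line q x₀ hξ₀
  · exact Eventually.of_forall fun t p _ =>
      (U.differentiableAt.hasFDerivAt.comp p (rayShear E t).hasFDerivAt).const_smul (t ^ q)

theorem IsLocSchwartz.differentiableAt_rayMoment [FiniteDimensional ℝ E] {u : E → E → ℝ}
    (hu : IsLocSchwartz u) (q : ℕ) (x : E) {ξ : E} (hξ : ξ ≠ 0) :
    DifferentiableAt ℝ (fun x' => rayMoment q u x' ξ) x := by
  obtain ⟨U, hU⟩ := hu ξ hξ
  have := HasFDerivAt.comp (f := fun e : E => (e, ξ)) x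
    (hasFDerivAt_integral_rayShear U q x hξ).2 (hasFDerivAt_prodMk_left (𝕜 := ℝ) x ξ)
  refine this.differentiableAt.congr_of_eventuallyEq (Eventually.of_forall fun x' => ?_)
  simp [rayMoment, rayShear_apply, hU.self_of_nhds]

end RayMoment

section JohnOperator

variable {n : ℕ} {u : En n → En n → ℝ}

theorem pdx_rayMoment (hu : IsLocSchwartz u) (q : ℕ) (x : En n) {ξ : En n} (hξ : ξ ≠ 0)
    (j : Fin n) : pdx j (rayMoment q u) x ξ = rayMoment q (pdx j u) x ξ := by
  obtain ⟨U, hU⟩ := hu ξ hξ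
  have u_eq := hU.self_of_nhds
  obtain ⟨integrable, hasFDerivAt⟩ := hasFDerivAt_integral_rayShear U q x hξ
  have hasFDerivAt_comp := HasFDerivAt.comp (f := fun e : En n => (e, ξ)) x hasFDerivAt
    (hasFDerivAt_prodMk_left (𝕜 := ℝ) x ξ)
  have rayMoment_eq : (fun x' => rayMoment q u x' ξ) =
      (fun p : En n × En n => ∫ t : ℝ, t ^ q * U (rayShear _ t p)) ∘ fun e => (e, ξ) := by
    funext x'
    simp [rayMoment, rayShear_apply, u_eq]
  rw [pdx, rayMoment_eq, hasFDerivAt_comp.fderiv, ContinuousLinearMap.comp_apply,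
    ContinuousLinearMap.integral_apply integrable, rayMoment]
  refine integral_congr_ae (Eventually.of_forall fun t => ?_)
  simp only
  rw [pdx_eq_lineDerivOp u_eq, SchwartzMap.lineDerivOp_apply_eq_fderiv]
  simp [rayShear_apply]

theorem pdxi_rayMoment (hu : IsLocSchwartz u) (q : ℕ) (x : En n) {ξ : En n} (hξ : ξ ≠ 0)
    (j : Fin n) : pdxi j (rayMoment q u) x ξ =
      rayMoment q (pdxi j u) x ξ + rayMoment (q + 1) (pdx j u) x ξ := by
  obtain ⟨U, hU⟩ := hu ξ hξ
  obtain ⟨integrable, hasFDerivAt⟩ := hasFDerivAt_integral_rayShear U q x hξ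
  have hasFDerivAt_comp := hasFDerivAt.comp ξ (hasFDerivAt_prodMk_right x ξ)
  have rayMoment_eq : (fun ξ' => rayMoment q u x ξ') =ᶠ[𝓝 ξ]
      (fun p : En n × En n => ∫ t : ℝ, t ^ q * U (rayShear _ t p)) ∘ fun e => (x, e) := by
    filter_upwards [hU] with ξ' h
    simp [rayMoment, rayShear_apply, h]
  rw [pdxi, rayMoment_eq.fderiv_eq, hasFDerivAt_comp.fderiv, ContinuousLinearMap.comp_apply,
    ContinuousLinearMap.integral_apply integrable, rayMoment, rayMoment,
    ← integral_add ((hu.pdxi j).integrable_pow_mul_line q x hξ)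
      ((hu.pdx j).integrable_pow_mul_line (q + 1) x hξ)]
  refine integral_congr_ae (Eventually.of_forall fun t => ?_)
  have rayShear_inr : rayShear _ t ((0 : En n), EuclideanSpace.single j (1 : ℝ)) =
      (0, EuclideanSpace.single j (1 : ℝ)) + t • (EuclideanSpace.single j (1 : ℝ), 0) := by
    simp [rayShear_apply]
  simp only
  rw [pdx_eq_lineDerivOp hU.self_of_nhds, pdxi_eq_lineDerivOp hU,
    SchwartzMap.lineDerivOp_apply_eq_fderiv, SchwartzMap.lineDerivOp_apply_eq_fderiv]
  simp only [FunLike.coe_smul, Pi.smul_apply, ContinuousLinearMap.comp_apply,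
    ContinuousLinearMap.inr_apply, rayShear_inr, map_add, map_smul, rayShear_apply, smul_eq_mul]
  ring

theorem pdx_pdxi_rayMoment (hu : IsLocSchwartz u) (q : ℕ) (x : En n) {ξ : En n} (hξ : ξ ≠ 0)
    (i j : Fin n) : pdx i (pdxi j (rayMoment q u)) x ξ =
      rayMoment q (pdx i (pdxi j u)) x ξ + rayMoment (q + 1) (pdx i (pdx j u)) x ξ := by
  conv_lhs => unfold pdx
  rw [show (fun x' => pdxi j (rayMoment q u) x' ξ) = fun x' =>
      rayMoment q (pdxi j u) x' ξ + rayMoment (q + 1) (pdx j u) x' ξ from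
      funext fun x' => pdxi_rayMoment hu q x' hξ j,
    fderiv_fun_add ((hu.pdxi j).differentiableAt_rayMoment q x hξ)
      ((hu.pdx j).differentiableAt_rayMoment (q + 1) x hξ), add_apply,
    ← pdx_rayMoment (hu.pdxi j) q x hξ i, ← pdx_rayMoment (hu.pdx j) (q + 1) x hξ i]
  rfl

theorem johnOp_rayMoment (hu : IsLocSchwartz u) (q : ℕ) (x : En n) {ξ : En n} (hξ : ξ ≠ 0)
    (i j : Fin n) : johnOp i j (rayMoment q u) x ξ = rayMoment q (johnOp i j u) x ξ := by
  have pdx_comm : rayMoment (q + 1) (pdx i (pdx j u)) x ξ =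
      rayMoment (q + 1) (pdx j (pdx i u)) x ξ := by
    unfold rayMoment
    simp_rw [pdx_pdx_comm hu hξ i j]
  have rayMoment_johnOp : rayMoment q (johnOp i j u) x ξ =
      rayMoment q (pdx i (pdxi j u)) x ξ - rayMoment q (pdx j (pdxi i u)) x ξ := by
    unfold rayMoment
    rw [← integral_sub (((hu.pdxi j).pdx i).integrable_pow_mul_line q x hξ)
      (((hu.pdxi i).pdx j).integrable_pow_mul_line q x hξ)]
    simp [johnOp, mul_sub]
  rw [johnOp, pdx_pdxi_rayMoment hu q x hξ, pdx_pdxi_rayMoment hu q x hξ, pdx_comm,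
    rayMoment_johnOp]
  ring

theorem johnOp_congr {G H : En n → En n → ℝ} (h : ∀ x ξ, ξ ≠ 0 → G x ξ = H x ξ) (i j : Fin n)
    (x : En n) {ξ : En n} (hξ : ξ ≠ 0) : johnOp i j G x ξ = johnOp i j H x ξ := by
  have pdxi_congr (j : Fin n) (x : En n) : pdxi j G x ξ = pdxi j H x ξ := by
    unfold pdxi
    have : (fun ξ' => G x ξ') =ᶠ[𝓝 ξ] (fun ξ' => H x ξ') := by
      filter_upwards [isOpen_ne.mem_nhds hξ] with ξ' h'
      exact h x ξ' h'
    rw [this.fderiv_eq]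
  unfold johnOp pdx
  simp_rw [pdxi_congr]

theorem johnIter_congr {G H : En n → En n → ℝ} (h : ∀ x ξ, ξ ≠ 0 → G x ξ = H x ξ)
    (l : List (Fin n × Fin n)) :
    ∀ (x ξ : En n), ξ ≠ 0 → johnIter l G x ξ = johnIter l H x ξ := by
  induction l with
  | nil => exact h
  | cons a l ih => exact fun x ξ hξ => johnOp_congr ih a.1 a.2 x hξ

theorem johnIter_rayMoment (hu : IsLocSchwartz u) (q : ℕ) (l : List (Fin n × Fin n)) :
    ∀ (x ξ : En n), ξ ≠ 0 → johnIter l (rayMoment q u) x ξ = rayMoment q (johnIter l u) x ξ := by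
  induction l with
  | nil => exact fun x ξ _ => rfl
  | cons a l ih =>
    intro x ξ hξ
    exact (johnOp_congr ih a.1 a.2 x hξ).trans (johnOp_rayMoment (hu.johnIter l) q x hξ a.1 a.2)

end JohnOperator

section RayDerivative

variable {n : ℕ} {u : En n → En n → ℝ}

/-- The derivative `⟨ξ, ∂_x⟩` of `u` along the ray. -/
def rayDeriv (u : En n → En n → ℝ) : En n → En n → ℝ :=
  fun x ξ => ∑ j, ξ j * pdx j u x ξ

theorem IsLocSchwartz.rayDeriv (hu : IsLocSchwartz u) : IsLocSchwartz (rayDeriv u) :=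
  .sum _ fun j _ => .mul_left (isLocTemperate_coord j) (hu.pdx j)

theorem rayDeriv_eq_fderiv_slice {ξ : En n} {s : 𝓢(En n, ℝ)} (hs : ∀ x, s x = u x ξ) (x : En n) :
    rayDeriv u x ξ = fderiv ℝ s x ξ := by
  rw [clm_apply_eq_sum_single (fderiv ℝ s x) ξ]
  unfold rayDeriv pdx
  rw [show (fun x' => u x' ξ) = s from funext fun x => (hs x).symm]
  simp

theorem hasDerivAt_line (hu : IsLocSchwartz u) (x : En n) {ξ : En n} (hξ : ξ ≠ 0) (t : ℝ) :
    HasDerivAt (fun t : ℝ => u (x + t • ξ) ξ) (rayDeriv u (x + t • ξ) ξ) t := by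
  obtain ⟨s, hs⟩ := hu.exists_slice hξ
  rw [rayDeriv_eq_fderiv_slice hs]
  simp_rw [← hs]
  have hasDerivAt_ray : HasDerivAt (fun t : ℝ => x + t • ξ) ξ t := by
    simpa using ((hasDerivAt_id t).smul_const ξ).const_add x
  exact s.differentiableAt.hasFDerivAt.comp_hasDerivAt t hasDerivAt_ray

theorem rayMoment_rayDeriv (hu : IsLocSchwartz u) (q : ℕ) (x : En n) {ξ : En n} (hξ : ξ ≠ 0) :
    rayMoment q (rayDeriv u) x ξ = -(q * rayMoment (q - 1) u x ξ) := by
  have integrable := (hu.integrable_pow_mul_line (q - 1) x hξ).const_mul (q : ℝ)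
  have by_parts := integral_mul_deriv_eq_deriv_mul_of_integrable
    (fun t _ => hasDerivAt_pow q t) (fun t _ => hasDerivAt_line hu x hξ t)
    (hu.rayDeriv.integrable_pow_mul_line q x hξ)
    (integrable.congr (Eventually.of_forall fun t => by simp only [Pi.mul_apply]; ring))
    (hu.integrable_pow_mul_line q x hξ)
  unfold rayMoment
  rw [by_parts, ← integral_const_mul]
  simp_rw [mul_assoc]

theorem rayMoment_rayDeriv_eq_sum (hu : IsLocSchwartz u) (q : ℕ) (x : En n) {ξ : En n}
    (hξ : ξ ≠ 0) :
    rayMoment q (rayDeriv u) x ξ = ∑ j, ξ j * rayMoment q (pdx j u) x ξ := by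
  unfold rayMoment rayDeriv
  simp_rw [← integral_const_mul]
  rw [← integral_finsetSum _ fun j _ =>
    ((hu.pdx j).integrable_pow_mul_line q x hξ).const_mul _]
  refine integral_congr_ae (Eventually.of_forall fun t => ?_)
  simp only [Finset.mul_sum]
  exact Finset.sum_congr rfl fun j _ => by ring

theorem rayMoment_eq_zero_of_succ (hu : IsLocSchwartz u) {q : ℕ}
    (h : ∀ x ξ, ξ ≠ 0 → rayMoment (q + 1) u x ξ = 0) (x : En n) {ξ : En n} (hξ : ξ ≠ 0) :
    rayMoment q u x ξ = 0 := by
  have rayMoment_pdx (j : Fin n) : rayMoment (q + 1) (pdx j u) x ξ = 0 := by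
    rw [← pdx_rayMoment hu (q + 1) x hξ j, pdx,
      show (fun x' => rayMoment (q + 1) u x' ξ) = fun _ => 0 from funext fun x' => h x' ξ hξ]
    simp
  have by_parts := rayMoment_rayDeriv hu (q + 1) x hξ
  simp only [rayMoment_rayDeriv_eq_sum hu (q + 1) x hξ, rayMoment_pdx, mul_zero,
    Finset.sum_const_zero, Nat.add_sub_cancel] at by_parts
  exact (mul_eq_zero.1 (neg_eq_zero.1 by_parts.symm)).resolve_left (by positivity)

theorem rayMoment_eq_zero_of_le (hu : IsLocSchwartz u) {q r : ℕ} (hrq : r ≤ q)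
    (h : ∀ x ξ, ξ ≠ 0 → rayMoment q u x ξ = 0) : ∀ x ξ, ξ ≠ 0 → rayMoment r u x ξ = 0 := by
  induction hrq using Nat.decreasingInduction with
  | self => exact h
  | of_succ q _ ih => exact fun x ξ hξ => rayMoment_eq_zero_of_succ hu ih x hξ

end RayDerivative

section SchwartzForm

variable {n : ℕ} {F G : Type*} [NormedAddCommGroup F] [NormedSpace ℝ F]
  [NormedAddCommGroup G] [NormedSpace ℝ G]

/-- Forms of degree `d` in `ξ` with Schwartz coefficients: the functions that the momentum ray
transforms of tensor fields integrate. -/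
inductive IsSchwartzForm : ℕ → (En n → 𝓢(En n, F)) → Prop
  | base (f : 𝓢(En n, F)) : IsSchwartzForm 0 (fun _ => f)
  | zero (d : ℕ) : IsSchwartzForm d (fun _ => 0)
  | mul (j : Fin n) {d : ℕ} {s : En n → 𝓢(En n, F)} :
      IsSchwartzForm d s → IsSchwartzForm (d + 1) (fun ξ => ξ j • s ξ)
  | add {d : ℕ} {s t : En n → 𝓢(En n, F)} :
      IsSchwartzForm d s → IsSchwartzForm d t → IsSchwartzForm d (fun ξ => s ξ + t ξ)

variable {d : ℕ} {s t : En n → 𝓢(En n, F)}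

theorem IsSchwartzForm.map {T : 𝓢(En n, F) → 𝓢(En n, G)} (hT : IsLinearMap ℝ T)
    (h : IsSchwartzForm d s) : IsSchwartzForm d (fun ξ => T (s ξ)) := by
  induction h with
  | base f => exact .base _
  | zero d => simpa [hT.map_zero] using IsSchwartzForm.zero d
  | mul j h ih => simpa [hT.map_smul] using ih.mul j
  | add h₁ h₂ ih₁ ih₂ => simpa [hT.map_add] using ih₁.add ih₂

theorem isLinearMap_lineDerivOp (v : En n) :
    IsLinearMap ℝ (fun s : 𝓢(En n, F) => (∂_{v} s : 𝓢(En n, F))) :=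
  (LineDeriv.lineDerivOpCLM ℝ 𝓢(En n, F) v).toLinearMap.isLinear

theorem IsSchwartzForm.smul (c : ℝ) (h : IsSchwartzForm d s) :
    IsSchwartzForm d (fun ξ => c • s ξ) :=
  h.map (c • LinearMap.id (R := ℝ)).isLinear

theorem IsSchwartzForm.sub (hs : IsSchwartzForm d s) (ht : IsSchwartzForm d t) :
    IsSchwartzForm d (fun ξ => s ξ - t ξ) := by
  simpa [sub_eq_add_neg] using hs.add (ht.smul (-1))

theorem IsSchwartzForm.sum {ι : Type*} (S : Finset ι) {s : ι → En n → 𝓢(En n, F)}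
    (h : ∀ i ∈ S, IsSchwartzForm d (s i)) : IsSchwartzForm d (fun ξ => ∑ i ∈ S, s i ξ) := by
  classical
  induction S using Finset.induction_on with
  | empty => simpa using IsSchwartzForm.zero d
  | insert a S ha ih =>
    simp_rw [Finset.sum_insert ha]
    exact (h a (by simp)).add (ih fun i hi => h i (by simp [hi]))

theorem IsSchwartzForm.monomial (I : Fin d → Fin n) (f : 𝓢(En n, F)) :
    IsSchwartzForm d (fun ξ : En n => (∏ r, ξ (I r)) • f) := by
  induction d with
  | zero => simpa using IsSchwartzForm.base f
  | succ d ih =>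
    simp_rw [Fin.prod_univ_succ, mul_smul]
    exact (ih fun r => I r.succ).mul (I 0)

theorem IsSchwartzForm.exists_coeff (h : IsSchwartzForm d s) :
    ∃ a : (Fin d → Fin n) → 𝓢(En n, F), ∀ ξ, s ξ = ∑ I, (∏ r, ξ (I r)) • a I := by
  induction h with
  | base f => exact ⟨fun _ => f, by simp⟩
  | zero d => exact ⟨fun _ => 0, by simp⟩
  | @mul j d s _ ih =>
    obtain ⟨a, ha⟩ := ih
    refine ⟨fun I => if I 0 = j then a (Fin.tail I) else 0, fun ξ => ?_⟩
    change ξ j • s ξ = _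
    rw [← (Fin.consEquiv (fun _ : Fin (d + 1) => Fin n)).sum_comp, Fintype.sum_prod_type, ha,
      Finset.sum_eq_single j]
    · simp [Fin.consEquiv, Fin.prod_univ_succ, Finset.smul_sum, mul_smul]
    · intro b _ hb
      simp [Fin.consEquiv, hb]
    · simp
  | add _ _ ih₁ ih₂ =>
    obtain ⟨a, ha⟩ := ih₁
    obtain ⟨b, hb⟩ := ih₂
    exact ⟨fun I => a I + b I, fun ξ => by simp [ha, hb, Finset.sum_add_distrib]⟩

end SchwartzForm

section OfSlices

variable {n : ℕ}

/-- The function of `(x, ξ)` whose slice at `ξ` is `s ξ`. -/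
def ofSlices (s : En n → 𝓢(En n, ℝ)) : En n → En n → ℝ := fun x ξ => s ξ x

theorem pdx_ofSlices (s : En n → 𝓢(En n, ℝ)) (j : Fin n) :
    pdx j (ofSlices s) = ofSlices (fun ξ => ∂_{(EuclideanSpace.single j 1 : En n)} (s ξ)) := by
  funext x ξ
  exact pdx_eq_lineDerivOp_slice (u := ofSlices s) (s := s ξ) (fun _ => rfl) j x

theorem rayDeriv_ofSlices (s : En n → 𝓢(En n, ℝ)) : rayDeriv (ofSlices s) =
    ofSlices (fun ξ => ∑ j, ξ j • ∂_{(EuclideanSpace.single j 1 : En n)} (s ξ)) := by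
  funext x ξ
  unfold rayDeriv
  simp [pdx_ofSlices, ofSlices]

theorem pdxi_coord_mul {u : En n → En n → ℝ} {x ξ : En n}
    (hu : DifferentiableAt ℝ (fun ξ' => u x ξ') ξ) (j k : Fin n) :
    pdxi j (fun x ξ => ξ k * u x ξ) x ξ =
      (EuclideanSpace.single j (1 : ℝ) : En n) k * u x ξ + ξ k * pdxi j u x ξ := by
  have hasFDerivAt_coord : HasFDerivAt (fun ξ : En n => ξ k)
      (EuclideanSpace.proj k : En n →L[ℝ] ℝ) ξ :=
    (EuclideanSpace.proj k : En n →L[ℝ] ℝ).hasFDerivAt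
  unfold pdxi
  rw [(hasFDerivAt_coord.fun_mul hu.hasFDerivAt).fderiv, add_apply, smul_apply, smul_apply,
    smul_eq_mul, smul_eq_mul, add_comm, mul_comm (u x ξ)]
  rfl

variable {d : ℕ} {s : En n → 𝓢(En n, ℝ)}

theorem IsSchwartzForm.exists_rayDeriv_iterate (h : IsSchwartzForm d s) (l : ℕ) :
    ∃ s', IsSchwartzForm (d + l) s' ∧ rayDeriv^[l] (ofSlices s) = ofSlices s' := by
  induction l with
  | zero => exact ⟨s, h, rfl⟩
  | succ l ih =>
    obtain ⟨s', hs', eq⟩ := ih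
    exact ⟨_, .sum _ fun j _ => (hs'.map (isLinearMap_lineDerivOp _)).mul j,
      by rw [Function.iterate_succ_apply', eq, rayDeriv_ofSlices]⟩

theorem IsSchwartzForm.differentiableAt_ofSlices (h : IsSchwartzForm d s) (x ξ : En n) :
    DifferentiableAt ℝ (fun ξ => ofSlices s x ξ) ξ := by
  unfold ofSlices
  induction h with
  | base f => simp
  | zero _ => simp
  | mul j _ ih =>
    simp only [smul_apply, smul_eq_mul]
    exact DifferentiableAt.mul (EuclideanSpace.proj j : En n →L[ℝ] ℝ).differentiableAt ih
  | add _ _ ih₁ ih₂ => exact ih₁.add ih₂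

theorem IsSchwartzForm.exists_pdxi (h : IsSchwartzForm d s) (j : Fin n) :
    ∃ s', IsSchwartzForm (d - 1) s' ∧ pdxi j (ofSlices s) = ofSlices s' ∧
      (d = 0 → s' = fun _ => 0) := by
  induction h with
  | base f =>
    exact ⟨fun _ => 0, .zero _, by funext x ξ; simp [pdxi, ofSlices], fun _ => rfl⟩
  | zero d =>
    exact ⟨fun _ => 0, .zero _, by funext x ξ; simp [pdxi, ofSlices], fun _ => rfl⟩
  | @mul k d s h ih =>
    obtain ⟨s', hs', eq, eq_zero⟩ := ih
    refine ⟨fun ξ => (EuclideanSpace.single j (1 : ℝ) : En n) k • s ξ + ξ k • s' ξ,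
      (h.smul _).add ?_, ?_, by simp⟩
    · rcases d with _ | d
      · simpa [eq_zero rfl] using IsSchwartzForm.zero 0
      · exact hs'.mul k
    · funext x ξ
      change pdxi j (fun x ξ => ξ k * ofSlices s x ξ) x ξ = _
      rw [pdxi_coord_mul (h.differentiableAt_ofSlices x ξ), eq]
      rfl
  | @add d s t hs ht ihs iht =>
    obtain ⟨s', hs', eq_s, zero_s⟩ := ihs
    obtain ⟨t', ht', eq_t, zero_t⟩ := iht
    refine ⟨_, hs'.add ht', ?_, fun hd => by simp [zero_s hd, zero_t hd]⟩
    funext x ξ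
    change fderiv ℝ (fun ξ' => ofSlices s x ξ' + ofSlices t x ξ') ξ _ = _
    rw [fderiv_fun_add (hs.differentiableAt_ofSlices x ξ) (ht.differentiableAt_ofSlices x ξ)]
    exact congrArg₂ (· + ·) (congrFun₂ eq_s x ξ) (congrFun₂ eq_t x ξ)

theorem IsSchwartzForm.exists_johnOp (h : IsSchwartzForm d s) (i j : Fin n) :
    ∃ s', IsSchwartzForm (d - 1) s' ∧ johnOp i j (ofSlices s) = ofSlices s' ∧
      (d = 0 → s' = fun _ => 0) := by
  obtain ⟨si, hsi, eq_i, zero_i⟩ := h.exists_pdxi i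
  obtain ⟨sj, hsj, eq_j, zero_j⟩ := h.exists_pdxi j
  refine ⟨_, (hsj.map (isLinearMap_lineDerivOp (EuclideanSpace.single i 1))).sub
    (hsi.map (isLinearMap_lineDerivOp (EuclideanSpace.single j 1))), ?_, fun hd => ?_⟩
  · unfold johnOp
    rw [eq_i, eq_j, pdx_ofSlices, pdx_ofSlices]
    rfl
  · simp [zero_i hd, zero_j hd, (isLinearMap_lineDerivOp _).map_zero]

theorem johnIter_append_singleton (l : List (Fin n × Fin n)) (a : Fin n × Fin n)
    (u : En n → En n → ℝ) : johnIter (l ++ [a]) u = johnIter l (johnOp a.1 a.2 u) := by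
  simp [johnIter]

theorem johnIter_zero (l : List (Fin n × Fin n)) : johnIter l (fun _ _ => 0) = fun _ _ => 0 := by
  induction l with
  | nil => rfl
  | cons a l ih =>
    change johnOp a.1 a.2 (johnIter l _) = _
    rw [ih]
    funext x ξ
    simp [johnOp, pdx, pdxi]

theorem IsSchwartzForm.johnIter_eq_zero (h : IsSchwartzForm d s) (l : List (Fin n × Fin n))
    (hl : d < l.length) : johnIter l (ofSlices s) = fun _ _ => 0 := by
  induction l using List.reverseRecOn generalizing d s with
  | nil => simp at hl
  | append_singleton l a ih =>
    obtain ⟨s', hs', eq, eq_zero⟩ := h.exists_johnOp a.1 a.2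
    rw [johnIter_append_singleton, eq]
    rcases d with _ | d
    · rw [eq_zero rfl]
      exact johnIter_zero l
    · refine ih hs' ?_
      simp only [List.length_append, List.length_cons, List.length_nil] at hl
      omega

theorem IsSchwartzForm.isLocSchwartz (h : IsSchwartzForm d s) : IsLocSchwartz (ofSlices s) := by
  unfold ofSlices
  induction h with
  | base f =>
    intro ξ₀ hξ₀
    obtain ⟨β, smooth, compact, -, -, eq_one, -⟩ := exists_bump_away_from_zero hξ₀
    obtain ⟨U, hU⟩ := exists_schwartzMap_prod_mul f (compact.toSchwartzMap smooth)
    refine ⟨U, ?_⟩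
    filter_upwards [eq_one] with ξ hξ x
    rw [hU]
    change _ = _ * β ξ
    rw [hξ, mul_one]
  | zero _ => exact fun _ _ => ⟨0, by simp⟩
  | mul j _ ih => exact .mul_left (isLocTemperate_coord j) ih
  | add _ _ ih₁ ih₂ => exact ih₁.add ih₂

end OfSlices

section Homogeneous

/-- Positive homogeneity of degree `d` in `ξ`. -/
def IsPosHomogeneous {V W : Type*} [AddCommGroup W] [Module ℝ W] (d : ℤ) (u : V → W → ℝ) : Prop :=
  ∀ x ξ (c : ℝ), 0 < c → ξ ≠ 0 → u x (c • ξ) = c ^ d * u x ξ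

namespace IsPosHomogeneous

section Module

variable {V W : Type*} [AddCommGroup W] [Module ℝ W] {d : ℤ} {u v : V → W → ℝ}

theorem add (hu : IsPosHomogeneous d u) (hv : IsPosHomogeneous d v) :
    IsPosHomogeneous d (fun x ξ => u x ξ + v x ξ) := by
  intro x ξ c hc hξ
  simp only [hu x ξ c hc hξ, hv x ξ c hc hξ]
  ring

theorem const_mul (hu : IsPosHomogeneous d u) (a : ℝ) :
    IsPosHomogeneous d (fun x ξ => a * u x ξ) := by
  intro x ξ c hc hξ
  simp only [hu x ξ c hc hξ]
  ring

theorem sub (hu : IsPosHomogeneous d u) (hv : IsPosHomogeneous d v) :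
    IsPosHomogeneous d (fun x ξ => u x ξ - v x ξ) := by
  simpa [sub_eq_add_neg] using hu.add (hv.const_mul (-1))

end Module

variable {n : ℕ} {d : ℤ} {u : En n → En n → ℝ}

theorem pdx (hu : IsPosHomogeneous d u) (hL : IsLocSchwartz u) (j : Fin n) :
    IsPosHomogeneous d (pdx j u) := by
  intro x ξ c hc hξ
  unfold _root_.pdx
  rw [show (fun x' => u x' (c • ξ)) = fun x' => c ^ d * u x' ξ from
    funext fun x' => hu x' ξ c hc hξ, fderiv_const_mul (hL.differentiableAt_fst hξ x)]
  simp

theorem pdxi (hu : IsPosHomogeneous d u) (hL : IsLocSchwartz u) (j : Fin n) :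
    IsPosHomogeneous (d - 1) (pdxi j u) := by
  intro x ξ c hc hξ
  unfold _root_.pdxi
  have homogeneous : (fun ξ' => u x (c • ξ')) =ᶠ[𝓝 ξ] fun ξ' => c ^ d * u x ξ' := by
    filter_upwards [isOpen_ne.mem_nhds hξ] with ξ' h'
    exact hu x ξ' c hc h'
  have chain_rule : HasFDerivAt (fun ξ' => u x (c • ξ'))
      ((fderiv ℝ (fun ξ' => u x ξ') (c • ξ)).comp (c • ContinuousLinearMap.id ℝ (En n))) ξ :=
    HasFDerivAt.comp ξ (g := fun ξ' => u x ξ') (f := fun ξ' => c • ξ')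
      (hL.differentiableAt_snd (smul_ne_zero hc.ne' hξ) x).hasFDerivAt
      ((hasFDerivAt_id (𝕜 := ℝ) ξ).const_smul c)
  have fderiv_eq := homogeneous.fderiv_eq (𝕜 := ℝ)
  rw [chain_rule.fderiv, fderiv_const_mul (hL.differentiableAt_snd hξ x)] at fderiv_eq
  have pdxi_eq := congrArg (fun L => L (EuclideanSpace.single j (1 : ℝ))) fderiv_eq
  simp only [ContinuousLinearMap.comp_apply, smul_apply, ContinuousLinearMap.id_apply, map_smul,
    smul_eq_mul] at pdxi_eq
  rw [zpow_sub_one₀ hc.ne', mul_assoc, mul_comm c⁻¹, ← mul_assoc, ← pdxi_eq]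
  field_simp

theorem johnOp (hu : IsPosHomogeneous d u) (hL : IsLocSchwartz u) (i j : Fin n) :
    IsPosHomogeneous (d - 1) (johnOp i j u) :=
  ((hu.pdxi hL j).pdx (hL.pdxi j) i).sub ((hu.pdxi hL i).pdx (hL.pdxi i) j)

theorem johnIter (hu : IsPosHomogeneous d u) (hL : IsLocSchwartz u) (l : List (Fin n × Fin n)) :
    IsPosHomogeneous (d - l.length) (johnIter l u) := by
  induction l with
  | nil => simpa [_root_.johnIter] using hu
  | cons a l ih =>
    rw [List.length_cons, Nat.cast_succ, ← sub_sub]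
    exact ih.johnOp (hL.johnIter l) a.1 a.2

theorem rayDeriv (hu : IsPosHomogeneous d u) (hL : IsLocSchwartz u) :
    IsPosHomogeneous (d + 1) (rayDeriv u) := by
  intro x ξ c hc hξ
  unfold RayTransform.rayDeriv
  rw [Finset.mul_sum]
  refine Finset.sum_congr rfl fun j _ => ?_
  rw [hu.pdx hL j x ξ c hc hξ, zpow_add_one₀ hc.ne', PiLp.smul_apply, smul_eq_mul]
  ring

theorem euler (hu : IsPosHomogeneous d u) (hL : IsLocSchwartz u) (x : En n) {ξ : En n}
    (hξ : ξ ≠ 0) : ∑ j, ξ j * _root_.pdxi j u x ξ = d * u x ξ := by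
  have hasDerivAt_chain :
      HasDerivAt (fun c : ℝ => u x (c • ξ)) (fderiv ℝ (fun ξ' => u x ξ') ξ ξ) 1 := by
    have differentiableAt := hL.differentiableAt_snd (ξ := (1 : ℝ) • ξ) (by simpa using hξ) x
    have hasDerivAt_smul : HasDerivAt (fun c : ℝ => c • ξ) ξ 1 := by
      simpa using (hasDerivAt_id (1 : ℝ)).smul_const ξ
    have := differentiableAt.hasFDerivAt.comp_hasDerivAt (1 : ℝ) hasDerivAt_smul
    rwa [one_smul] at this
  have hasDerivAt_zpow : HasDerivAt (fun c : ℝ => u x (c • ξ)) (d * u x ξ) 1 := by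
    have : HasDerivAt (fun c : ℝ => c ^ d * u x ξ) (d * u x ξ) 1 := by
      simpa using (hasDerivAt_zpow d (1 : ℝ) (by simp)).mul_const (u x ξ)
    refine this.congr_of_eventuallyEq ?_
    filter_upwards [lt_mem_nhds (zero_lt_one (α := ℝ))] with c hc
    exact hu x ξ c hc hξ
  rw [← hasDerivAt_chain.unique hasDerivAt_zpow, clm_apply_eq_sum_single _ ξ]
  rfl

end IsPosHomogeneous

theorem IsSchwartzForm.isPosHomogeneous {n d : ℕ} {s : En n → 𝓢(En n, ℝ)}
    (h : IsSchwartzForm d s) : IsPosHomogeneous d (ofSlices s) := by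
  intro x ξ c _ _
  unfold ofSlices
  rw [zpow_natCast]
  induction h with
  | base f => simp
  | zero _ => simp
  | mul j _ ih =>
    simp only [smul_apply, PiLp.smul_apply, smul_eq_mul, ih, pow_succ]
    ring
  | add _ _ ih₁ ih₂ => simp [ih₁, ih₂, mul_add]

end Homogeneous

section Moments

variable {E : Type*} [NormedAddCommGroup E] [NormedSpace ℝ E] {u v : E → E → ℝ} {d : ℤ}

theorem rayMoment_add (hu : IsLocSchwartz u) (hv : IsLocSchwartz v) (q : ℕ) (x : E) {ξ : E}
    (hξ : ξ ≠ 0) :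
    rayMoment q (fun x ξ => u x ξ + v x ξ) x ξ = rayMoment q u x ξ + rayMoment q v x ξ := by
  unfold rayMoment
  rw [← integral_add (hu.integrable_pow_mul_line q x hξ) (hv.integrable_pow_mul_line q x hξ)]
  simp [mul_add]

theorem rayMoment_const_mul (u : E → E → ℝ) (c : ℝ) (q : ℕ) (x ξ : E) :
    rayMoment q (fun x ξ => c * u x ξ) x ξ = c * rayMoment q u x ξ := by
  unfold rayMoment
  simp_rw [← integral_const_mul, mul_left_comm c]

theorem rayMoment_sub (hu : IsLocSchwartz u) (hv : IsLocSchwartz v) (q : ℕ) (x : E) {ξ : E}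
    (hξ : ξ ≠ 0) :
    rayMoment q (fun x ξ => u x ξ - v x ξ) x ξ = rayMoment q u x ξ - rayMoment q v x ξ := by
  unfold rayMoment
  rw [← integral_sub (hu.integrable_pow_mul_line q x hξ) (hv.integrable_pow_mul_line q x hξ)]
  simp [mul_sub]

theorem rayMoment_add_smul (hu : IsLocSchwartz u) (q : ℕ) (x : E) {ξ : E} (hξ : ξ ≠ 0) (a : ℝ) :
    rayMoment q u (x + a • ξ) ξ =
      ∑ r ∈ Finset.range (q + 1), (-a) ^ (q - r) * q.choose r * rayMoment r u x ξ := by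
  unfold rayMoment
  have line_eq (t : ℝ) : t ^ q * u (x + a • ξ + t • ξ) ξ =
      (fun s : ℝ => (s + -a) ^ q * u (x + s • ξ) ξ) (t + a) := by
    simp only [add_neg_cancel_right]
    rw [add_assoc, ← add_smul, add_comm a t]
  simp_rw [line_eq, ← integral_const_mul]
  rw [integral_add_right_eq_self (fun s : ℝ => (s + -a) ^ q * u (x + s • ξ) ξ) a,
    ← integral_finsetSum _ fun r _ => (hu.integrable_pow_mul_line r x hξ).const_mul _]
  refine integral_congr_ae (Eventually.of_forall fun s => ?_)
  simp only [add_pow, Finset.sum_mul]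
  exact Finset.sum_congr rfl fun r _ => by ring

theorem IsPosHomogeneous.rayMoment (hu : IsPosHomogeneous d u) (q : ℕ) :
    IsPosHomogeneous (d - q - 1) (rayMoment q u) := by
  intro x ξ c hc hξ
  unfold RayTransform.rayMoment
  have line_eq (t : ℝ) : t ^ q * u (x + t • c • ξ) (c • ξ) =
      (fun s : ℝ => c ^ (d - q) * (s ^ q * u (x + s • ξ) ξ)) (c * t) := by
    simp only
    rw [hu _ _ c hc hξ, zpow_sub₀ hc.ne', mul_pow, smul_smul, mul_comm t c, zpow_natCast]
    field_simp
  simp_rw [line_eq]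
  rw [Measure.integral_comp_mul_left (fun s : ℝ => c ^ (d - q) * (s ^ q * u (x + s • ξ) ξ)) c,
    integral_const_mul, abs_of_pos (inv_pos.2 hc), smul_eq_mul, zpow_sub_one₀ hc.ne']
  ring

end Moments

section Potential

variable {E : Type*} [NormedAddCommGroup E] [InnerProductSpace ℝ E]

/-- The function `ψ^k` of `(x, ξ)`, `ξ ≠ 0`, built from the restrictions `φ⁰, …, φ^k` of the first
`k + 1` moments to `TSⁿ⁻¹`. -/
def johnPotential (m k : ℕ) (φ : ℕ → E → E → ℝ) : E → E → ℝ :=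
  fun x ξ => ‖ξ‖ ^ ((m : ℤ) - 2 * k - 1) *
    ∑ r ∈ Finset.range (k + 1),
      (-1 : ℝ) ^ (k - r) * (k.choose r) * ‖ξ‖ ^ r * ⟪ξ, x⟫ ^ (k - r) *
        φ r (x - (⟪x, ξ⟫ / ‖ξ‖ ^ 2) • ξ) (‖ξ‖⁻¹ • ξ)

theorem inner_sub_proj_smul_inv_norm (x : E) {ξ : E} (hξ : ξ ≠ 0) :
    ⟪x - (⟪x, ξ⟫ / ‖ξ‖ ^ 2) • ξ, ‖ξ‖⁻¹ • ξ⟫ = 0 := by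
  have norm_sq_ne_zero : ‖ξ‖ ^ 2 ≠ 0 := pow_ne_zero _ (norm_ne_zero_iff.2 hξ)
  rw [inner_smul_right, inner_sub_left, real_inner_smul_left, real_inner_self_eq_norm_sq,
    div_mul_cancel₀ _ norm_sq_ne_zero, sub_self, mul_zero]

variable {u : E → E → ℝ} {m : ℕ}

theorem johnPotential_rayMoment (hu : IsLocSchwartz u) (hd : IsPosHomogeneous m u) (k : ℕ)
    (x : E) {ξ : E} (hξ : ξ ≠ 0) :
    johnPotential m k (fun r => rayMoment r u) x ξ = rayMoment k u x ξ := by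
  have norm_pos : 0 < ‖ξ‖ := norm_pos_iff.2 hξ
  set a : ℝ := ⟪x, ξ⟫ / ‖ξ‖ ^ 2 with ha
  unfold johnPotential
  conv_rhs => rw [← sub_add_cancel x (a • ξ), rayMoment_add_smul hu k _ hξ]
  rw [Finset.mul_sum]
  refine Finset.sum_congr rfl fun r hr => ?_
  obtain ⟨j, rfl⟩ := Nat.exists_eq_add_of_le (Finset.mem_range_succ_iff.1 hr)
  beta_reduce
  rw [hd.rayMoment r _ ξ _ (inv_pos.2 norm_pos) hξ, real_inner_comm x ξ, ← ha,
    Nat.add_sub_cancel_left, neg_pow, inv_zpow, ← zpow_neg,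
    show ⟪x, ξ⟫ = a * ‖ξ‖ ^ 2 by rw [ha]; field_simp, mul_pow, ← pow_mul, ← zpow_natCast ‖ξ‖ r]
  have norm_powers_cancel : ‖ξ‖ ^ ((m : ℤ) - 2 * (r + j : ℕ) - 1) * ‖ξ‖ ^ (r : ℤ) *
      ‖ξ‖ ^ (-((m : ℤ) - r - 1)) * ‖ξ‖ ^ (2 * j) = 1 := by
    rw [← zpow_natCast ‖ξ‖ (2 * j), ← zpow_add₀ norm_pos.ne', ← zpow_add₀ norm_pos.ne',
      ← zpow_add₀ norm_pos.ne']
    convert zpow_zero ‖ξ‖ using 2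
    push_cast
    ring
  linear_combination
    (-1) ^ j * (r + j).choose r * a ^ j * rayMoment r u (x - a • ξ) ξ * norm_powers_cancel

theorem johnPotential_eq_rayMoment (hu : IsLocSchwartz u) (hd : IsPosHomogeneous m u) {k : ℕ}
    {φ : ℕ → E → E → ℝ}
    (h : ∀ r ≤ k, ∀ x ξ : E, ‖ξ‖ = 1 → ⟪x, ξ⟫ = 0 → φ r x ξ = rayMoment r u x ξ)
    (x ξ : E) (hξ : ξ ≠ 0) : johnPotential m k φ x ξ = rayMoment k u x ξ := by
  rw [← johnPotential_rayMoment hu hd k x hξ]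
  unfold johnPotential
  congr 1
  refine Finset.sum_congr rfl fun r hr => ?_
  have norm_eq_one : ‖‖ξ‖⁻¹ • ξ‖ = 1 := norm_smul_inv_norm (𝕜 := ℝ) hξ
  rw [h r (Finset.mem_range_succ_iff.1 hr) _ _ norm_eq_one
    (inner_sub_proj_smul_inv_norm x hξ)]

end Potential

section Necessity

variable {n m k : ℕ}

theorem momRT_eq_rayMoment_ofSlices (g : (Fin m → Fin n) → 𝓢(En n, ℝ)) (q : ℕ) :
    momRT q (fun I => g I) = rayMoment q (ofSlices fun ξ => ∑ I, (∏ r, ξ (I r)) • g I) := by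
  funext x ξ
  unfold momRT rayMoment ofSlices
  simp [mul_comm]

theorem momRT_neg (f : (Fin m → Fin n) → En n → ℝ) {q : ℕ} (hq : q ≤ m) (x ξ : En n) :
    momRT q f x (-ξ) = (-1) ^ (m - q) * momRT q f x ξ := by
  unfold momRT
  rw [← integral_const_mul, ← integral_neg_eq_self]
  refine integral_congr_ae (Eventually.of_forall fun t => ?_)
  simp only [smul_neg, neg_smul, neg_neg, PiLp.neg_apply, Finset.prod_neg, Finset.card_univ,
    Fintype.card_fin, Finset.mul_sum]
  refine Finset.sum_congr rfl fun i _ => ?_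
  obtain ⟨j, rfl⟩ := Nat.exists_eq_add_of_le hq
  have neg_one_pow_mul_self : (-1 : ℝ) ^ q * (-1) ^ q = 1 := by rw [← mul_pow]; simp
  rw [Nat.add_sub_cancel_left, neg_pow, pow_add]
  linear_combination
    (t ^ q * f i (x + t • ξ) * (-1) ^ j * ∏ r, ξ (i r)) * neg_one_pow_mul_self

theorem johnIter_johnPotential_eq_zero {φ : ℕ → En n → En n → ℝ} {f : (Fin m → Fin n) → En n → ℝ}
    (hf : IsSchwartzField f)
    (h : ∀ ℓ ≤ k, ∀ x ξ : En n, ‖ξ‖ = 1 → ⟪x, ξ⟫ = 0 → φ ℓ x ξ = momRT ℓ f x ξ)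
    (l : List (Fin n × Fin n)) (hl : m < l.length) (x ξ : En n) (hξ : ξ ≠ 0) :
    johnIter l (johnPotential m k φ) x ξ = 0 := by
  choose g hg using hf
  obtain rfl : (fun I => ⇑(g I)) = f := funext hg
  have hs : IsSchwartzForm m fun ξ : En n => ∑ I, (∏ r, ξ (I r)) • g I :=
    .sum _ fun I _ => .monomial I (g I)
  simp only [momRT_eq_rayMoment_ofSlices] at h
  rw [johnIter_congr (johnPotential_eq_rayMoment hs.isLocSchwartz hs.isPosHomogeneous h) l x ξ hξ,
    johnIter_rayMoment hs.isLocSchwartz k l x ξ hξ, hs.johnIter_eq_zero l hl]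
  simp [rayMoment]

end Necessity

section Lift

variable {E : Type*} [NormedAddCommGroup E] [InnerProductSpace ℝ E]

theorem exists_schwartzMap_integral_eq_one : ∃ w : 𝓢(ℝ, ℝ), ∫ t, w t = 1 := by
  let b : ContDiffBump (0 : ℝ) := ⟨1, 2, by norm_num, by norm_num⟩
  exact ⟨(b.hasCompactSupport_normed (μ := volume)).toSchwartzMap b.contDiff_normed,
    b.integral_normed⟩

theorem hasTemperateGrowth_prodMk {D V W : Type*} [NormedAddCommGroup D] [NormedSpace ℝ D]
    [NormedAddCommGroup V] [NormedSpace ℝ V] [NormedAddCommGroup W] [NormedSpace ℝ W]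
    {f : D → V} {g : D → W} (hf : f.HasTemperateGrowth) (hg : g.HasTemperateGrowth) :
    (fun x => (f x, g x)).HasTemperateGrowth := by
  convert ((ContinuousLinearMap.inl ℝ V W).hasTemperateGrowth.comp hf).add
    ((ContinuousLinearMap.inr ℝ V W).hasTemperateGrowth.comp hg) using 2
  simp

/-- The coordinates `(x - ⟪x, θ ξ⟫ θ ξ, θ ξ)` on `TSⁿ⁻¹` and `(⟪x, θ ξ⟫, ξ)` along the fibres, for a
given choice `θ` of directions. -/
def directionSplit (θ : E → E) (p : E × E) : (E × E) × (ℝ × E) :=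
  ((p.1 - ⟪p.1, θ p.2⟫ • θ p.2, θ p.2), (⟪p.1, θ p.2⟫, p.2))

theorem hasTemperateGrowth_directionSplit {θ : E → E} (hθ : θ.HasTemperateGrowth) :
    (directionSplit θ).HasTemperateGrowth := by
  have fst : (fun p : E × E => p.1).HasTemperateGrowth :=
    (ContinuousLinearMap.fst ℝ E E).hasTemperateGrowth
  have snd : (fun p : E × E => p.2).HasTemperateGrowth :=
    (ContinuousLinearMap.snd ℝ E E).hasTemperateGrowth
  have direction : (fun p : E × E => θ p.2).HasTemperateGrowth := hθ.comp snd
  have inner_direction : (fun p : E × E => ⟪p.1, θ p.2⟫).HasTemperateGrowth :=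
    (innerSL ℝ (E := E)).bilinear_hasTemperateGrowth fst direction
  exact hasTemperateGrowth_prodMk
    (hasTemperateGrowth_prodMk (fst.sub (inner_direction.smul direction)) direction)
    (hasTemperateGrowth_prodMk inner_direction snd)

theorem norm_le_two_mul_norm_directionSplit {θ : E → E} (hθ : ∀ ξ, ‖θ ξ‖ ≤ 1) (p : E × E) :
    ‖p‖ ≤ 2 * (1 + ‖directionSplit θ p‖) := by
  obtain ⟨x, ξ⟩ := p
  set a : ℝ := ⟪x, θ ξ⟫
  set N := ‖directionSplit θ (x, ξ)‖
  have norm_sub_le : ‖x - a • θ ξ‖ ≤ N := (le_max_left _ _).trans (le_max_left _ _)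
  have norm_inner_le : ‖a‖ ≤ N := (le_max_left _ _).trans (le_max_right _ _)
  have norm_snd_le : ‖ξ‖ ≤ N := (le_max_right _ _).trans (le_max_right _ _)
  have norm_fst_le : ‖x‖ ≤ ‖x - a • θ ξ‖ + ‖a‖ * ‖θ ξ‖ := by
    simpa [norm_smul] using norm_add_le (x - a • θ ξ) (a • θ ξ)
  have norm_mul_le : ‖a‖ * ‖θ ξ‖ ≤ ‖a‖ := mul_le_of_le_one_right (norm_nonneg _) (hθ ξ)
  exact max_le (by linarith) (by linarith [norm_nonneg ξ])

theorem norm_smul_inv_norm_smul_le {β : E → ℝ} (nonneg : ∀ ξ, 0 ≤ β ξ) (le_one : ∀ ξ, β ξ ≤ 1)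
    (ξ : E) : ‖β ξ • ‖ξ‖⁻¹ • ξ‖ ≤ 1 := by
  rw [norm_smul, Real.norm_of_nonneg (nonneg ξ)]
  refine mul_le_one₀ (le_one ξ) (norm_nonneg _) ?_
  rcases eq_or_ne ξ 0 with rfl | hξ
  · simp
  · exact (norm_smul_inv_norm (𝕜 := ℝ) hξ).le

theorem isLocSchwartz_comp_directionSplit [FiniteDimensional ℝ E] (Φ : 𝓢(E × E, ℝ))
    (w : 𝓢(ℝ, ℝ)) :
    IsLocSchwartz fun x ξ : E => Φ (directionSplit (fun ξ => ‖ξ‖⁻¹ • ξ) (x, ξ)).1 *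
      w (directionSplit (fun ξ => ‖ξ‖⁻¹ • ξ) (x, ξ)).2.1 := by
  intro ξ₀ hξ₀
  obtain ⟨β, smooth, compact, nonneg, le_one, eq_one, eq_zero⟩ := exists_bump_away_from_zero hξ₀
  set θ : E → E := fun ξ => β ξ • ‖ξ‖⁻¹ • ξ with hθ
  have smooth_direction : ContDiff ℝ ∞ θ := contDiff_smul_of_eventually_zero smooth eq_zero
    fun ξ hξ => ((contDiffAt_norm ℝ hξ).inv (norm_ne_zero_iff.2 hξ)).smul contDiffAt_id
  have compact_direction : HasCompactSupport θ := compact.smul_right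
  obtain ⟨H, hH⟩ := exists_schwartzMap_prod_mul w (compact.toSchwartzMap smooth)
  obtain ⟨K, hK⟩ := exists_schwartzMap_prod_mul Φ H
  refine ⟨SchwartzMap.compCLM ℝ
    (hasTemperateGrowth_directionSplit (compact_direction.hasTemperateGrowth smooth_direction))
    ⟨1, 2, fun p => (norm_le_two_mul_norm_directionSplit
      (norm_smul_inv_norm_smul_le nonneg le_one) p).trans_eq (by rw [pow_one])⟩ K, ?_⟩
  filter_upwards [eq_one] with ξ hβ x
  have direction_eq : θ ξ = ‖ξ‖⁻¹ • ξ := by rw [hθ]; simp only [hβ, one_smul]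
  change _ = K (directionSplit θ (x, ξ))
  simp only [directionSplit, hK, hH, direction_eq]
  change _ = _ * (_ * β ξ)
  rw [hβ, mul_one]

theorem exists_lift_rayMoment_zero [FiniteDimensional ℝ E] (Φ : 𝓢(E × E, ℝ)) (d : ℤ) :
    ∃ u : E → E → ℝ, IsLocSchwartz u ∧ IsPosHomogeneous d u ∧
      ∀ x ξ : E, ‖ξ‖ = 1 → ⟪x, ξ⟫ = 0 → rayMoment 0 u x ξ = Φ (x, ξ) := by
  obtain ⟨w, integral_eq_one⟩ := exists_schwartzMap_integral_eq_one
  refine ⟨_, .mul_left (isLocTemperate_norm_zpow d) (isLocSchwartz_comp_directionSplit Φ w),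
    fun x ξ c hc hξ => ?_, fun x ξ hξ hx => ?_⟩
  · have direction_smul : ‖c • ξ‖⁻¹ • c • ξ = ‖ξ‖⁻¹ • ξ := by
      rw [norm_smul, Real.norm_of_nonneg hc.le, smul_smul]
      congr 1
      field_simp
    simp only [directionSplit, direction_smul]
    rw [norm_smul, Real.norm_of_nonneg hc.le, mul_zpow, mul_assoc]
  · have inner_line (t : ℝ) : ⟪x + t • ξ, ξ⟫ = t := by
      simp [inner_add_left, real_inner_smul_left, hξ, hx]
    simp only [rayMoment, directionSplit, hξ, inv_one, one_smul, one_zpow, inner_line,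
      add_sub_cancel_right, pow_zero, one_mul]
    rw [integral_const_mul, integral_eq_one, mul_one]

/-- The homogenized weight `(⟪x, ξ⟫ / ‖ξ‖²) ^ l g`, whose `0`-th moment over a line is the `l`-th
moment of `g` measured from the point of the line nearest to the origin. -/
def centeredWeight (l : ℕ) (g : E → E → ℝ) : E → E → ℝ :=
  fun x ξ => ⟪x, ξ⟫ ^ l * (‖ξ‖ ^ (-2 * l : ℤ) * g x ξ)

variable {g : E → E → ℝ}

theorem IsLocSchwartz.centeredWeight [FiniteDimensional ℝ E] (hg : IsLocSchwartz g) (l : ℕ) :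
    IsLocSchwartz (centeredWeight l g) :=
  .mul_left (isLocTemperate_inner.pow l) (.mul_left (isLocTemperate_norm_zpow _) hg)

theorem IsPosHomogeneous.centeredWeight {d : ℤ} (hg : IsPosHomogeneous d g) (l : ℕ) :
    IsPosHomogeneous (d - l) (centeredWeight l g) := by
  intro x ξ c hc hξ
  unfold RayTransform.centeredWeight
  have scale_powers : c ^ l * c ^ (-2 * l : ℤ) * c ^ d = c ^ (d - l) := by
    rw [← zpow_natCast, ← zpow_add₀ hc.ne', ← zpow_add₀ hc.ne']
    congr 1
    ring
  rw [hg x ξ c hc hξ, norm_smul, Real.norm_of_nonneg hc.le, real_inner_smul_right, mul_pow,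
    mul_zpow, ← scale_powers]
  ring

theorem rayMoment_zero_centeredWeight (g : E → E → ℝ) (l : ℕ) (x : E) {ξ : E} (hξ : ξ ≠ 0) :
    rayMoment 0 (centeredWeight l g) x ξ = rayMoment l g (x - (⟪x, ξ⟫ / ‖ξ‖ ^ 2) • ξ) ξ := by
  have norm_pos : 0 < ‖ξ‖ := norm_pos_iff.2 hξ
  set a : ℝ := ⟪x, ξ⟫ / ‖ξ‖ ^ 2 with ha
  unfold rayMoment centeredWeight
  have inner_line (t : ℝ) : ⟪x + t • ξ, ξ⟫ ^ l * ‖ξ‖ ^ (-2 * l : ℤ) = (t + a) ^ l := by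
    rw [inner_add_left, real_inner_smul_left, real_inner_self_eq_norm_sq,
      show ⟪x, ξ⟫ = a * ‖ξ‖ ^ 2 by rw [ha]; field_simp, ← add_mul, mul_pow, ← pow_mul, mul_assoc,
      ← zpow_natCast ‖ξ‖, ← zpow_add₀ norm_pos.ne']
    simp [add_comm]
  have line_eq (t : ℝ) :
      t ^ 0 * (⟪x + t • ξ, ξ⟫ ^ l * (‖ξ‖ ^ (-2 * l : ℤ) * g (x + t • ξ) ξ)) =
        (fun s : ℝ => s ^ l * g (x - a • ξ + s • ξ) ξ) (t + a) := by
    simp only [pow_zero, one_mul, ← mul_assoc, inner_line, add_smul]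
    congr 2
    abel
  simp_rw [line_eq]
  rw [integral_add_right_eq_self (fun s : ℝ => s ^ l * g (x - a • ξ + s • ξ) ξ) a]

end Lift

section LiftMoments

variable {n : ℕ} {u : En n → En n → ℝ} {d : ℤ}

theorem IsLocSchwartz.rayDeriv_iterate (hu : IsLocSchwartz u) (l : ℕ) :
    IsLocSchwartz (RayTransform.rayDeriv^[l] u) := by
  induction l with
  | zero => exact hu
  | succ l ih =>
    rw [Function.iterate_succ_apply']
    exact ih.rayDeriv

theorem rayMoment_rayDeriv_iterate (hu : IsLocSchwartz u) (l q : ℕ) (x : En n) {ξ : En n}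
    (hξ : ξ ≠ 0) :
    rayMoment q (rayDeriv^[l] u) x ξ = (-1) ^ l * q.descFactorial l * rayMoment (q - l) u x ξ := by
  induction l generalizing q with
  | zero => simp
  | succ l ih =>
    rw [Function.iterate_succ_apply', rayMoment_rayDeriv (hu.rayDeriv_iterate l) q x hξ, ih]
    rcases q with _ | q
    · simp
    · simp only [Nat.succ_descFactorial_succ, Nat.add_sub_cancel, Nat.add_sub_add_right]
      push_cast
      ring

theorem rayMoment_rayDeriv_iterate_const_mul (hu : IsLocSchwartz u) {l r : ℕ} (hr : r ≤ l)
    (x : En n) {ξ : En n} (hξ : ξ ≠ 0) :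
    rayMoment r (rayDeriv^[l] fun x ξ => (-1) ^ l / (l.factorial : ℝ) * u x ξ) x ξ =
      if r = l then rayMoment 0 u x ξ else 0 := by
  rw [rayMoment_rayDeriv_iterate (hu.const_mul _) l r x hξ, rayMoment_const_mul]
  split_ifs with eq
  · have neg_one_pow_mul_self : (-1 : ℝ) ^ l * (-1) ^ l = 1 := by rw [← mul_pow]; simp
    rw [eq, Nat.descFactorial_self, Nat.sub_self]
    field_simp
    linear_combination rayMoment 0 u x ξ * neg_one_pow_mul_self
  · rw [Nat.descFactorial_of_lt (lt_of_le_of_ne hr eq)]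
    simp

theorem IsPosHomogeneous.rayDeriv_iterate (hd : IsPosHomogeneous d u) (hu : IsLocSchwartz u)
    (l : ℕ) : IsPosHomogeneous (d + l) (RayTransform.rayDeriv^[l] u) := by
  induction l with
  | zero => simpa using hd
  | succ l ih =>
    rw [Function.iterate_succ_apply', Nat.cast_succ, ← add_assoc]
    exact ih.rayDeriv (hu.rayDeriv_iterate l)

/-- Once the moments of order `< N` are lifted, `centeredWeight` turns the missing `N`-th moment
into a `0`-th one, and the `N`-fold derivative along the ray brings a lift of it back to order `N`
without disturbing the lower moments. -/
theorem exists_lift_rayMoment (m : ℕ) (φ : ℕ → En n → En n → ℝ) (N : ℕ)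
    (hφ : ∀ ℓ < N, IsSchwartzOnTS (φ ℓ)) :
    ∃ U : En n → En n → ℝ, IsLocSchwartz U ∧ IsPosHomogeneous m U ∧
      ∀ r < N, ∀ x ξ : En n, ‖ξ‖ = 1 → ⟪x, ξ⟫ = 0 → φ r x ξ = rayMoment r U x ξ := by
  induction N with
  | zero => exact ⟨fun _ _ => 0, fun _ _ => ⟨0, by simp⟩, fun _ _ _ _ _ => by simp, by simp⟩
  | succ l ih =>
    obtain ⟨U, hU, hUd, moment_U⟩ := ih fun r hr => hφ r (by omega)
    obtain ⟨Φ, hΦ⟩ := hφ l (by omega)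
    obtain ⟨u, hu, hud, moment_u⟩ := exists_lift_rayMoment_zero Φ (m - l)
    have hv := hu.sub (hU.centeredWeight l)
    have hvd := (hud.sub (hUd.centeredWeight l)).const_mul ((-1) ^ l / (l.factorial : ℝ))
    have hDd := hvd.rayDeriv_iterate (hv.const_mul _) l
    rw [sub_add_cancel] at hDd
    refine ⟨_, hU.add ((hv.const_mul _).rayDeriv_iterate l), hUd.add hDd, fun r hr x ξ hξ hx => ?_⟩
    have ξ_ne_zero : ξ ≠ 0 := norm_ne_zero_iff.1 (by simp [hξ])
    rw [rayMoment_add hU ((hv.const_mul _).rayDeriv_iterate l) r x ξ_ne_zero,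
      rayMoment_rayDeriv_iterate_const_mul hv (Nat.lt_succ_iff.1 hr) x ξ_ne_zero]
    rcases (Nat.lt_succ_iff.1 hr).lt_or_eq with lt | rfl
    · simp [moment_U r lt x ξ hξ hx, lt.ne]
    · rw [if_pos rfl, rayMoment_sub hu (hU.centeredWeight r) 0 x ξ_ne_zero, moment_u x ξ hξ hx,
        rayMoment_zero_centeredWeight U r x ξ_ne_zero, hΦ x ξ hξ hx, hx]
      simp

end LiftMoments

/-! ### The Fourier transform in the first variable -/

section FourierFst

variable {V W : Type*} [NormedAddCommGroup V] [InnerProductSpace ℝ V]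

theorem continuous_fourierChar_neg_inner :
    Continuous fun p : V × V => (Real.fourierChar (-⟪p.1, p.2⟫) : ℂ) :=
  continuous_subtype_val.comp (Real.continuous_fourierChar.comp (by fun_prop))

theorem IsLocSchwartz.exists_slice_complex [NormedAddCommGroup W] [NormedSpace ℝ W]
    {u : V → W → ℝ} {ξ : W} (hu : IsLocSchwartz u) (hξ : ξ ≠ 0) :
    ∃ s : 𝓢(V, ℂ), ∀ x, s x = u x ξ := by
  obtain ⟨s, hs⟩ := hu.exists_slice hξ
  exact ⟨SchwartzMap.postcompCLM (𝕜 := ℝ) Complex.ofRealCLM s, fun x => by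
    rw [SchwartzMap.postcompCLM_apply, hs]; rfl⟩

variable [FiniteDimensional ℝ V] [MeasurableSpace V] [BorelSpace V]

/-- The partial Fourier transform `û (y, ξ)` of `u (x, ξ)` in the variable `x`. -/
def fourierFst (u : V → W → ℝ) (y : V) (ξ : W) : ℂ := 𝓕 (fun x => (u x ξ : ℂ)) y

variable {u v : V → W → ℝ} {ξ : W}

theorem fourierFst_eq_integral (u : V → W → ℝ) (y : V) (ξ : W) :
    fourierFst u y ξ = ∫ x, Real.fourierChar (-⟪x, y⟫) • (u x ξ : ℂ) :=
  Real.fourier_eq _ _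

theorem fourierFst_congr (h : ∀ x, u x ξ = v x ξ) (y : V) :
    fourierFst u y ξ = fourierFst v y ξ := by
  simp_rw [fourierFst, h]

theorem fourierFst_eq_fourier {s : 𝓢(V, ℂ)} (hs : ∀ x, s x = u x ξ) (y : V) :
    fourierFst u y ξ = (𝓕 s) y := by
  simp_rw [SchwartzMap.fourier_coe, fourierFst, ← hs]

theorem fourierFst_mul_left (a : W → ℝ) (u : V → W → ℝ) (y : V) (ξ : W) :
    fourierFst (fun x ξ => a ξ * u x ξ) y ξ = a ξ * fourierFst u y ξ := by
  simp only [fourierFst_eq_integral, Complex.ofReal_mul]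
  rw [← integral_const_mul]
  simp only [Circle.smul_def, smul_eq_mul, mul_left_comm]

variable [NormedAddCommGroup W] [NormedSpace ℝ W]

theorem IsLocSchwartz.exists_slice_fourierFst (hu : IsLocSchwartz u) (hξ : ξ ≠ 0) :
    ∃ s : 𝓢(V, ℂ), ∀ y, s y = fourierFst u y ξ := by
  obtain ⟨s, hs⟩ := hu.exists_slice_complex hξ
  exact ⟨𝓕 s, fun y => (fourierFst_eq_fourier hs y).symm⟩

theorem IsLocSchwartz.integrable_fourierChar_smul (hu : IsLocSchwartz u) (hξ : ξ ≠ 0) (y : V) :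
    Integrable (fun x => Real.fourierChar (-⟪x, y⟫) • (u x ξ : ℂ)) := by
  obtain ⟨s, hs⟩ := hu.exists_slice_complex hξ
  simp_rw [← hs]
  exact (Real.fourierIntegral_convergent_iff y).2 s.integrable

theorem fourierFst_sub (hu : IsLocSchwartz u) (hv : IsLocSchwartz v) (y : V) (hξ : ξ ≠ 0) :
    fourierFst (fun x ξ => u x ξ - v x ξ) y ξ = fourierFst u y ξ - fourierFst v y ξ := by
  simp only [fourierFst_eq_integral]
  rw [← integral_sub (hu.integrable_fourierChar_smul hξ y) (hv.integrable_fourierChar_smul hξ y)]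
  simp [smul_sub]

theorem fourierFst_sum {ι : Type*} (s : Finset ι) {u : ι → V → W → ℝ}
    (hu : ∀ i ∈ s, IsLocSchwartz (u i)) (y : V) (hξ : ξ ≠ 0) :
    fourierFst (fun x ξ => ∑ i ∈ s, u i x ξ) y ξ = ∑ i ∈ s, fourierFst (u i) y ξ := by
  simp only [fourierFst_eq_integral]
  rw [← integral_finsetSum _ fun i hi => (hu i hi).integrable_fourierChar_smul hξ y]
  simp [Finset.smul_sum]

theorem IsPosHomogeneous.fourierFst {d : ℤ} (hu : IsPosHomogeneous d u) (y : V) (hξ : ξ ≠ 0)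
    {c : ℝ} (hc : 0 < c) :
    fourierFst u y (c • ξ) = (c : ℂ) ^ d * fourierFst u y ξ := by
  have := fourierFst_mul_left (fun _ => c ^ d) u y ξ
  push_cast at this
  rw [← this]
  simp_rw [RayTransform.fourierFst, hu _ ξ c hc hξ]

theorem fderiv_fourierFst_slice (hu : IsLocSchwartz u) {s : 𝓢(V, ℂ)} (hξ : ξ ≠ 0)
    (hs : ∀ y, s y = fourierFst u y ξ) (v y : V) :
    fderiv ℝ s y v = -(2 * Real.pi * Complex.I) * fourierFst (fun x ξ => ⟪x, v⟫ * u x ξ) y ξ := by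
  obtain ⟨r, hr⟩ := hu.exists_slice_complex hξ
  have hsr : s = 𝓕 r := by
    ext y
    rw [hs, fourierFst_eq_fourier hr]
  have inner_mul_slice (x : V) :
      SchwartzMap.smulLeftCLM ℂ (inner ℝ · v) r x = ((⟪x, v⟫ * u x ξ : ℝ) : ℂ) := by
    rw [SchwartzMap.smulLeftCLM_apply_apply (Function.hasTemperateGrowth_inner_left _), hr]
    simp
  rw [← SchwartzMap.lineDerivOp_apply_eq_fderiv, hsr, SchwartzMap.lineDerivOp_fourier_eq,
    FourierTransform.fourier_smul, smul_apply, smul_eq_mul, fourierFst_eq_fourier inner_mul_slice]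

theorem exists_integrable_norm_slice_le {F : Type*} [NormedAddCommGroup F] [NormedSpace ℝ F]
    (U : 𝓢(V × W, F)) : ∃ b : V → ℝ, Integrable b ∧ ∀ x ξ, ‖U (x, ξ)‖ ≤ b x := by
  set N := Module.finrank ℝ V + 1 with hN
  obtain ⟨C, -, hC⟩ := exists_one_add_norm_pow_mul_le U N
  refine ⟨fun x => C * (1 + ‖x‖) ^ (-(N : ℝ)),
    (integrable_one_add_norm (by simp [hN])).const_mul C, fun x ξ => ?_⟩
  beta_reduce
  rw [Real.rpow_neg (by positivity), ← div_eq_mul_inv, le_div_iff₀ (by positivity),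
    Real.rpow_natCast, mul_comm]
  refine le_trans ?_ (hC (x, ξ))
  gcongr
  exact norm_fst_le (x, ξ)

theorem continuousAt_fourierFst (hu : IsLocSchwartz u) (y : V) (hξ : ξ ≠ 0) :
    ContinuousAt (fun p : V × W => fourierFst u p.1 p.2) (y, ξ) := by
  obtain ⟨U, hU⟩ := hu ξ hξ
  obtain ⟨b, integrable_b, hb⟩ := exists_integrable_norm_slice_le U
  have continuous_U : Continuous U := U.continuous
  have continuous_integral : Continuous (fun p : V × W =>
      ∫ x, Real.fourierChar (-⟪x, p.1⟫) • (U (x, p.2) : ℂ)) := by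
    have continuous_uncurry : Continuous fun q : V × (V × W) =>
        Real.fourierChar (-⟪q.1, q.2.1⟫) • (U (q.1, q.2.2) : ℂ) := by
      simp only [Circle.smul_def]
      exact (continuous_fourierChar_neg_inner.comp
        (f := fun q : V × (V × W) => (q.1, q.2.1)) (by fun_prop)).smul (by fun_prop)
    refine continuous_of_dominated (bound := b)
      (fun p => (continuous_uncurry.comp (Continuous.prodMk_left p)).aestronglyMeasurable)
      (fun p => Eventually.of_forall fun x => ?_) integrable_b
      (Eventually.of_forall fun x => continuous_uncurry.comp (Continuous.prodMk_right x))
    rw [Circle.norm_smul, Complex.norm_real]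
    exact hb x p.2
  refine continuous_integral.continuousAt.congr ?_
  have : Tendsto (fun p : V × W => p.2) (𝓝 (y, ξ)) (𝓝 ξ) := continuous_snd.tendsto _
  filter_upwards [this.eventually hU] with p hp
  simp_rw [fourierFst_eq_integral, hp]

theorem hasFDerivAt_integral_fourierChar_smul (U : 𝓢(V × W, ℝ)) (y : V) (hξ : ξ ≠ 0) :
    let F' : V → W →L[ℝ] ℂ := fun x => (Real.fourierChar (-⟪x, y⟫) : ℂ) • (Complex.ofRealCLM.comp
      ((fderiv ℝ U (x, ξ)).comp (ContinuousLinearMap.inr ℝ V W)))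
    Integrable F' ∧
      HasFDerivAt (fun ξ => ∫ x, Real.fourierChar (-⟪x, y⟫) • (U (x, ξ) : ℂ)) (∫ x, F' x) ξ := by
  intro F'
  obtain ⟨b, integrable_b, hb⟩ := exists_integrable_norm_slice_le (SchwartzMap.fderivCLM ℝ _ _ U)
  have continuous_U : Continuous U := U.continuous
  have continuous_fderiv : Continuous (fderiv ℝ U) := (U.smooth 1).continuous_fderiv (by simp)
  have continuous_char : Continuous fun x => (Real.fourierChar (-⟪x, y⟫) : ℂ) :=
    continuous_fourierChar_neg_inner.comp (Continuous.prodMk_left y)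
  set G : W → V → (W →L[ℝ] ℂ) := fun ξ x => (Real.fourierChar (-⟪x, y⟫) : ℂ) •
    (Complex.ofRealCLM.comp ((fderiv ℝ U (x, ξ)).comp (ContinuousLinearMap.inr ℝ V W)))
  have continuous_G : Continuous (G ξ) := continuous_char.smul (continuous_const.clm_comp
    ((continuous_fderiv.comp (Continuous.prodMk_left ξ)).clm_comp continuous_const))
  have norm_G_le (x : V) (ξ : W) : ‖G ξ x‖ ≤ b x := by
    rw [norm_smul, Circle.norm_coe, one_mul]
    refine (ContinuousLinearMap.opNorm_comp_le _ _).trans (le_trans ?_ (hb x ξ))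
    rw [Complex.ofRealCLM_norm, one_mul, SchwartzMap.fderivCLM_apply]
    exact (ContinuousLinearMap.opNorm_comp_le _ _).trans
      (mul_le_of_le_one_right (norm_nonneg _) (ContinuousLinearMap.norm_inr_le_one ℝ V W))
  refine ⟨integrable_b.mono' continuous_G.aestronglyMeasurable
    (Eventually.of_forall fun x => norm_G_le x ξ), ?_⟩
  have isLocSchwartz_U : IsLocSchwartz (fun x ξ => U (x, ξ)) :=
    fun _ _ => ⟨U, Eventually.of_forall fun _ _ => rfl⟩
  simp only [Circle.smul_def]
  refine hasFDerivAt_integral_of_dominated_of_fderiv_le (𝕜 := ℝ) (s := Set.univ) (bound := b)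
    (F' := G) univ_mem
    (Eventually.of_forall fun ξ => (continuous_char.smul (by fun_prop)).aestronglyMeasurable) ?_
    continuous_G.aestronglyMeasurable (Eventually.of_forall fun x ξ _ => norm_G_le x ξ)
    integrable_b (Eventually.of_forall fun x ξ _ => ?_)
  · simpa only [Circle.smul_def] using isLocSchwartz_U.integrable_fourierChar_smul hξ y
  · exact (Complex.ofRealCLM.hasFDerivAt.comp ξ (hasFDerivAt_snd U x ξ)).const_smul
      (Real.fourierChar (-⟪x, y⟫) : ℂ)

theorem exists_norm_fourierFst_le [FiniteDimensional ℝ W] (hu : IsLocSchwartz u) :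
    ∃ K : ℝ, ∀ y ξ, ‖ξ‖ = 1 → ‖fourierFst u y ξ‖ ≤ K := by
  have bounded_nhds : ∀ ξ₀ ∈ Metric.sphere (0 : W) 1, ∃ t ∈ 𝓝[Metric.sphere (0 : W) 1] ξ₀,
      ∃ K : ℝ, ∀ ξ ∈ t, ∀ y, ‖fourierFst u y ξ‖ ≤ K := by
    intro ξ₀ hξ₀
    obtain ⟨U, hU⟩ := hu ξ₀ (ne_zero_of_mem_unit_sphere ⟨ξ₀, hξ₀⟩)
    obtain ⟨b, integrable_b, hb⟩ := exists_integrable_norm_slice_le U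
    refine ⟨_, mem_nhdsWithin_of_mem_nhds hU, ∫ x, b x, fun ξ hξ y => ?_⟩
    rw [fourierFst_eq_integral]
    refine norm_integral_le_of_norm_le integrable_b (Eventually.of_forall fun x => ?_)
    rw [Circle.norm_smul, Complex.norm_real, hξ x]
    exact hb x ξ
  obtain ⟨K, hK⟩ := IsCompact.induction_on (isCompact_sphere (0 : W) 1)
    (p := fun s => ∃ K : ℝ, ∀ ξ ∈ s, ∀ y, ‖fourierFst u y ξ‖ ≤ K) ⟨0, by simp⟩
    (fun _ _ hst ⟨K, hK⟩ => ⟨K, fun ξ hξ => hK ξ (hst hξ)⟩)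
    (fun _ _ ⟨K, hK⟩ ⟨K', hK'⟩ => ⟨max K K', fun ξ hξ y => hξ.elim
      (fun h => (hK ξ h y).trans (le_max_left _ _))
      (fun h => (hK' ξ h y).trans (le_max_right _ _))⟩) bounded_nhds
  exact ⟨K, fun y ξ h => hK ξ (by simpa using h) y⟩

end FourierFst

section FourierFstCoordinates

variable {n : ℕ} {u : En n → En n → ℝ} {ξ : En n}

theorem lineDerivOp_slice_complex (hu : IsLocSchwartz u) (hξ : ξ ≠ 0) {s : 𝓢(En n, ℂ)}
    (hs : ∀ x, s x = u x ξ) (j : Fin n) (x : En n) :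
    (∂_{(EuclideanSpace.single j 1 : En n)} s) x = (pdx j u x ξ : ℂ) := by
  rw [SchwartzMap.lineDerivOp_apply_eq_fderiv, show (s : En n → ℂ) =
    Complex.ofRealCLM ∘ fun x' => u x' ξ from funext hs,
    (Complex.ofRealCLM.hasFDerivAt.comp x (hu.differentiableAt_fst hξ x).hasFDerivAt).fderiv]
  rfl

theorem fourierFst_pdx (hu : IsLocSchwartz u) (j : Fin n) (y : En n) (hξ : ξ ≠ 0) :
    fourierFst (pdx j u) y ξ = 2 * Real.pi * Complex.I * y j * fourierFst u y ξ := by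
  obtain ⟨s, hs⟩ := hu.exists_slice_complex hξ
  rw [fourierFst_eq_fourier hs, fourierFst_eq_fourier (lineDerivOp_slice_complex hu hξ hs j),
    SchwartzMap.fourier_lineDerivOp_eq, smul_apply,
    SchwartzMap.smulLeftCLM_apply_apply (Function.hasTemperateGrowth_inner_left _)]
  simp [mul_assoc, EuclideanSpace.inner_single_right]

theorem exists_hasFDerivAt_fourierFst (hu : IsLocSchwartz u) (y : En n) (hξ : ξ ≠ 0) :
    ∃ L : En n →L[ℝ] ℂ, HasFDerivAt (fun ξ => fourierFst u y ξ) L ξ ∧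
      ∀ j, L (EuclideanSpace.single j 1) = fourierFst (pdxi j u) y ξ := by
  obtain ⟨U, hU⟩ := hu ξ hξ
  obtain ⟨integrable_fderiv, hasFDerivAt⟩ := hasFDerivAt_integral_fourierChar_smul U y hξ
  refine ⟨_, hasFDerivAt.congr_of_eventuallyEq ?_, fun j => ?_⟩
  · filter_upwards [hU] with ξ' hξ'
    simp_rw [fourierFst_eq_integral, hξ']
  · rw [ContinuousLinearMap.integral_apply integrable_fderiv, fourierFst_eq_integral]
    refine integral_congr_ae (Eventually.of_forall fun x => ?_)
    beta_reduce
    rw [pdxi_eq_lineDerivOp hU j x, SchwartzMap.lineDerivOp_apply_eq_fderiv]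
    rfl

theorem norm_le_sum_abs_coord {ι : Type*} [Fintype ι] (y : EuclideanSpace ℝ ι) :
    ‖y‖ ≤ ∑ j, |y j| := by
  classical
  calc ‖y‖ = ‖∑ j, EuclideanSpace.single j (y j)‖ := by
        congr 1
        ext i
        simp [Finset.sum_apply, Pi.single_apply]
    _ ≤ ∑ j, |y j| := (norm_sum_le _ _).trans_eq (by simp)

theorem exists_norm_pow_mul_norm_fourierFst_le (hu : IsLocSchwartz u) (N : ℕ) :
    ∃ K : ℝ, ∀ y ξ, ‖ξ‖ = 1 → ‖y‖ ^ N * ‖fourierFst u y ξ‖ ≤ K := by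
  induction N generalizing u with
  | zero => simpa using exists_norm_fourierFst_le hu
  | succ N ih =>
    choose K hK using fun j => ih (hu.pdx j)
    refine ⟨∑ j, K j, fun y ξ h => ?_⟩
    have hξ : ξ ≠ 0 := norm_ne_zero_iff.1 (by simp [h])
    calc ‖y‖ ^ (N + 1) * ‖fourierFst u y ξ‖
        ≤ ∑ j, |y j| * (‖y‖ ^ N * ‖fourierFst u y ξ‖) := by
          rw [← Finset.sum_mul, pow_succ', mul_assoc]
          gcongr
          exact norm_le_sum_abs_coord y
      _ ≤ ∑ j, 2 * Real.pi * (|y j| * (‖y‖ ^ N * ‖fourierFst u y ξ‖)) := by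
          refine Finset.sum_le_sum fun j _ => le_mul_of_one_le_left (by positivity) ?_
          linarith [Real.pi_gt_three]
      _ = ∑ j, ‖y‖ ^ N * ‖fourierFst (pdx j u) y ξ‖ := by
          refine Finset.sum_congr rfl fun j _ => ?_
          rw [fourierFst_pdx hu j y hξ]
          simp only [norm_mul, Complex.norm_real, Complex.norm_I, Real.norm_eq_abs,
            Complex.norm_ofNat, abs_of_pos Real.pi_pos]
          ring
      _ ≤ ∑ j, K j := Finset.sum_le_sum fun j _ => hK j y ξ h

theorem fourierFst_johnOp (hu : IsLocSchwartz u) (i j : Fin n) (y : En n) (hξ : ξ ≠ 0) :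
    fourierFst (johnOp i j u) y ξ = 2 * Real.pi * Complex.I *
      (y i * fourierFst (pdxi j u) y ξ - y j * fourierFst (pdxi i u) y ξ) := by
  unfold johnOp
  rw [fourierFst_sub ((hu.pdxi j).pdx i) ((hu.pdxi i).pdx j) y hξ,
    fourierFst_pdx (hu.pdxi j) i y hξ, fourierFst_pdx (hu.pdxi i) j y hξ]
  ring

theorem fourierFst_euler {d : ℤ} (hd : IsPosHomogeneous d u)
    (hu : IsLocSchwartz u) (y : En n) (hξ : ξ ≠ 0) :
    ∑ j, (ξ j : ℂ) * fourierFst (pdxi j u) y ξ = d * fourierFst u y ξ := by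
  have euler := fourierFst_congr (u := fun x ξ => ∑ j, ξ j * pdxi j u x ξ)
    (v := fun x ξ => (d : ℝ) * u x ξ) (fun x => hd.euler hu x hξ) y
  rw [fourierFst_sum _ (fun j _ => .mul_left (isLocTemperate_coord j) (hu.pdxi j)) y hξ,
    fourierFst_mul_left (fun _ => (d : ℝ))] at euler
  simp_rw [fun j : Fin n => fourierFst_mul_left (fun ξ => ξ j) (pdxi j u) y ξ] at euler
  simpa using euler

end FourierFstCoordinates

theorem rayMoment_zero_eq_integral_sub_smul {E : Type*} [NormedAddCommGroup E]
    [NormedSpace ℝ E] (u : E → E → ℝ) (x ξ : E) :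
    (rayMoment 0 u x ξ : ℂ) = ∫ t : ℝ, (u (x - t • ξ) ξ : ℂ) := by
  rw [← integral_neg_eq_self (fun t : ℝ => (u (x - t • ξ) ξ : ℂ)), integral_complex_ofReal]
  simp [rayMoment]

section FourierSlice

variable {E : Type*} [NormedAddCommGroup E] [InnerProductSpace ℝ E] [FiniteDimensional ℝ E]
  [MeasurableSpace E] [BorelSpace E] {ξ : E}

theorem measurePreserving_inner_sub_smul (hξ : ‖ξ‖ = 1) :
    MeasurePreserving (fun p : ℝ × E => (⟪p.2, ξ⟫, p.2 - p.1 • ξ))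
      (volume.prod volume) (volume.prod volume) := by
  have shear_vector : MeasurePreserving (fun p : ℝ × E => (p.1, p.2 - p.1 • ξ))
      (volume.prod volume) (volume.prod volume) :=
    (MeasurePreserving.id _).skew_product (g := fun t x => x - t • ξ)
      (by fun_prop) (Eventually.of_forall fun t => map_sub_right_eq_self _ (t • ξ))
  have shear_scalar : MeasurePreserving (fun p : E × ℝ => (p.1, p.2 + ⟪p.1, ξ⟫))
      (volume.prod volume) (volume.prod volume) :=
    (MeasurePreserving.id _).skew_product (g := fun x t => t + ⟪x, ξ⟫)
      (by fun_prop) (Eventually.of_forall fun x => map_add_right_eq_self _ ⟪x, ξ⟫)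
  convert (Measure.measurePreserving_swap.comp shear_scalar).comp
    (Measure.measurePreserving_swap.comp shear_vector) using 2 with p
  simp [inner_sub_left, inner_smul_left, hξ]

theorem integrable_mul_sub_smul (hξ : ‖ξ‖ = 1) {w : ℝ → ℂ} {s : E → ℂ} (hw : Integrable w)
    (hs : Integrable s) :
    Integrable (fun p : ℝ × E => w ⟪p.2, ξ⟫ * s (p.2 - p.1 • ξ)) (volume.prod volume) :=
  (measurePreserving_inner_sub_smul hξ).integrable_comp_of_integrable (hw.mul_prod hs)

theorem integral_mul_integral_sub_smul (hξ : ‖ξ‖ = 1) {w : ℝ → ℂ} {s : E → ℂ} (hw : Integrable w)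
    (hs : Integrable s) :
    ∫ x, w ⟪x, ξ⟫ * ∫ t : ℝ, s (x - t • ξ) = (∫ t, w t) * ∫ x, s x := by
  have hΘ := measurePreserving_inner_sub_smul hξ
  calc ∫ x, w ⟪x, ξ⟫ * ∫ t : ℝ, s (x - t • ξ)
      = ∫ p : ℝ × E, w ⟪p.2, ξ⟫ * s (p.2 - p.1 • ξ) ∂(volume.prod volume) := by
        simp_rw [integral_prod_symm _ (integrable_mul_sub_smul hξ hw hs), integral_const_mul]
    _ = ∫ p : ℝ × E, w p.1 * s p.2 ∂(volume.prod volume) := by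
        conv_rhs => rw [← hΘ.map_eq]
        exact (integral_map (f := fun p : ℝ × E => w p.1 * s p.2) hΘ.aemeasurable
          (by rw [hΘ.map_eq]; exact (hw.mul_prod hs).aestronglyMeasurable)).symm
    _ = (∫ t, w t) * ∫ x, s x := integral_prod_mul w s

variable {u : E → E → ℝ}

theorem integrable_mul_rayMoment_zero (hu : IsLocSchwartz u) (hξ : ‖ξ‖ = 1) {w : ℝ → ℂ}
    (hw : Integrable w) : Integrable (fun x => w ⟪x, ξ⟫ * rayMoment 0 u x ξ) := by
  have integrable_u : Integrable (fun x => (u x ξ : ℂ)) := by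
    have ξ_ne_zero : ξ ≠ 0 := norm_ne_zero_iff.1 (by simp [hξ])
    simpa using hu.integrable_fourierChar_smul ξ_ne_zero 0
  simp_rw [rayMoment_zero_eq_integral_sub_smul, ← integral_const_mul]
  exact (integrable_mul_sub_smul hξ hw integrable_u).integral_prod_right

/-- The Fourier slice theorem. The ray transform is constant along `ξ`, so it is multiplied by an
integrable weight in that direction to make its Fourier transform a function. -/
theorem fourier_mul_rayMoment_zero (hu : IsLocSchwartz u) (hξ : ‖ξ‖ = 1) {w : ℝ → ℂ}
    (hw : Integrable w) (y : E) :
    𝓕 (fun x => w ⟪x, ξ⟫ * rayMoment 0 u x ξ) y =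
      𝓕 w ⟪y, ξ⟫ * fourierFst u (y - ⟪y, ξ⟫ • ξ) ξ := by
  have ξ_ne_zero : ξ ≠ 0 := norm_ne_zero_iff.1 (by simp [hξ])
  set a := ⟪y, ξ⟫ with ha
  have integrable_w : Integrable (fun t : ℝ => Real.fourierChar (-⟪t, a⟫) • w t) :=
    (Real.fourierIntegral_convergent_iff a).2 hw
  have integrable_u := hu.integrable_fourierChar_smul ξ_ne_zero (y - a • ξ)
  have inner_split (x : E) (t : ℝ) : -⟪x, y⟫ = -⟪⟪x, ξ⟫, a⟫ + -⟪x - t • ξ, y - a • ξ⟫ := by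
    simp only [inner_sub_left, inner_sub_right, inner_smul_left, inner_smul_right,
      real_inner_self_eq_norm_sq, hξ, real_inner_comm y ξ, ← ha]
    simp
    ring
  rw [Real.fourier_eq, Real.fourier_eq, fourierFst_eq_integral,
    ← integral_mul_integral_sub_smul hξ integrable_w integrable_u]
  refine integral_congr_ae (Eventually.of_forall fun x => ?_)
  beta_reduce
  rw [rayMoment_zero_eq_integral_sub_smul, Circle.smul_def, smul_eq_mul, ← mul_assoc,
    ← integral_const_mul, ← integral_const_mul]
  refine integral_congr_ae (Eventually.of_forall fun t => ?_)
  beta_reduce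
  rw [inner_split x t, AddChar.map_add_eq_mul]
  simp only [Circle.smul_def, Circle.coe_mul, smul_eq_mul]
  ring

theorem fourierFst_eq_zero_of_rayMoment_zero (hu : IsLocSchwartz u) (hξ : ‖ξ‖ = 1)
    (h : ∀ x, rayMoment 0 u x ξ = 0) {y : E} (hy : ⟪y, ξ⟫ = 0) : fourierFst u y ξ = 0 := by
  obtain ⟨w, hw⟩ := exists_schwartzMap_integral_eq_one
  have slice := fourier_mul_rayMoment_zero hu hξ (w := fun t => (w t : ℂ)) w.integrable.ofReal y
  rw [Real.fourier_eq (fun t => (w t : ℂ)), hy] at slice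
  simpa [h, Real.fourier_eq, integral_complex_ofReal, hw] using slice.symm

theorem rayMoment_zero_eq_zero_of_fourierFst (hu : IsLocSchwartz u) (hξ : ‖ξ‖ = 1)
    (h : ∀ y, ⟪y, ξ⟫ = 0 → fourierFst u y ξ = 0) (x : E) : rayMoment 0 u x ξ = 0 := by
  have ξ_ne_zero : ξ ≠ 0 := norm_ne_zero_iff.1 (by simp [hξ])
  obtain ⟨w, hw⟩ := exists_schwartzMap_integral_eq_one
  set V : E → ℂ := fun x => w ⟪x, ξ⟫ * rayMoment 0 u x ξ with hV
  have integrable_V : Integrable V := integrable_mul_rayMoment_zero hu hξ w.integrable.ofReal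
  have continuous_V : Continuous V := by
    have : Continuous fun x => rayMoment 0 u x ξ := continuous_iff_continuousAt.2 fun x =>
      (hu.differentiableAt_rayMoment 0 x ξ_ne_zero).continuousAt
    have := w.continuous
    fun_prop
  have fourier_V : 𝓕 V = 0 := by
    funext y
    have inner_proj : ⟪y - ⟪y, ξ⟫ • ξ, ξ⟫ = 0 := by
      simp [inner_sub_left, inner_smul_left, hξ]
    rw [hV, fourier_mul_rayMoment_zero hu hξ (w := fun t => (w t : ℂ)) w.integrable.ofReal,
      h _ inner_proj, mul_zero, Pi.zero_apply]
  have V_eq_zero : V = 0 := by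
    rw [← continuous_V.fourierInv_fourier_eq integrable_V (by simp [fourier_V]), fourier_V]
    funext x
    simp [Real.fourierInv_eq]
  obtain ⟨t, ht⟩ : ∃ t, w t ≠ 0 := by
    by_contra! h
    simp [h] at hw
  have vanish := congrFun V_eq_zero (x + (t - ⟪x, ξ⟫) • ξ)
  have inner_shift : ⟪x + (t - ⟪x, ξ⟫) • ξ, ξ⟫ = t := by
    simp [inner_add_left, inner_smul_left, hξ]
  rw [hV] at vanish
  simpa [inner_shift, ht, rayMoment_add_smul hu 0 x ξ_ne_zero] using vanish

/-- The Fourier transform of `u` vanishes for `y ⟂ ξ`; for homogeneous `u` this expresses that the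
ray transform of `u` vanishes. -/
def FourierVanishesOnPerp (u : E → E → ℝ) : Prop :=
  ∀ y ξ : E, ξ ≠ 0 → ⟪y, ξ⟫ = 0 → fourierFst u y ξ = 0

theorem fourierVanishesOnPerp_iff {d : ℤ} (hu : IsLocSchwartz u) (hd : IsPosHomogeneous d u) :
    FourierVanishesOnPerp u ↔ ∀ x ξ, ξ ≠ 0 → rayMoment 0 u x ξ = 0 := by
  have norm_unit {ξ : E} (hξ : ξ ≠ 0) : ‖‖ξ‖⁻¹ • ξ‖ = 1 := norm_smul_inv_norm (𝕜 := ℝ) hξ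
  have unit_ne_zero {ξ : E} (hξ : ξ ≠ 0) : ‖ξ‖⁻¹ • ξ ≠ 0 := by simp [hξ]
  have norm_smul_unit {ξ : E} (hξ : ξ ≠ 0) : ξ = ‖ξ‖ • ‖ξ‖⁻¹ • ξ := by simp [hξ]
  constructor
  · intro h x ξ hξ
    rw [norm_smul_unit hξ, hd.rayMoment 0 x _ _ (norm_pos_iff.2 hξ) (unit_ne_zero hξ),
      rayMoment_zero_eq_zero_of_fourierFst hu (norm_unit hξ)
        (fun y hy => h y _ (unit_ne_zero hξ) hy), mul_zero]
  · intro h y ξ hξ hy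
    rw [norm_smul_unit hξ, hd.fourierFst y (unit_ne_zero hξ) (norm_pos_iff.2 hξ),
      fourierFst_eq_zero_of_rayMoment_zero hu (norm_unit hξ) (fun x => h x _ (unit_ne_zero hξ))
        (by rw [inner_smul_right, hy, mul_zero]), mul_zero]

end FourierSlice

theorem exists_unit_orthogonal_pair {E : Type*} [NormedAddCommGroup E] [InnerProductSpace ℝ E]
    (hE : 3 ≤ Module.finrank ℝ E) (a b : E) : ∃ z : E, ‖z‖ = 1 ∧ ⟪a, z⟫ = 0 ∧ ⟪b, z⟫ = 0 := by
  classical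
  have : FiniteDimensional ℝ E := .of_finrank_pos (by omega)
  set P := Submodule.span ℝ ({a, b} : Set E)
  have finrank_le : Module.finrank ℝ P ≤ 2 := by
    have := (finrank_span_finset_le_card (R := ℝ) {a, b}).trans Finset.card_le_two
    rwa [Set.finrank, Finset.coe_pair] at this
  have finrank_add := P.finrank_add_finrank_orthogonal
  have : Nontrivial Pᗮ := (Module.finrank_pos_iff (R := ℝ)).1 (by omega)
  obtain ⟨z, hz⟩ := exists_norm_eq (Pᗮ) zero_le_one
  have orthogonal := (Submodule.mem_orthogonal _ _).1 z.2
  exact ⟨z, hz, orthogonal a (Submodule.subset_span (by simp)),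
    orthogonal b (Submodule.subset_span (by simp))⟩

section ConstantOnPerp

variable {n : ℕ} {u : En n → En n → ℝ} {y ξ η : En n}

theorem inner_eq_sum (a b : En n) : ⟪a, b⟫ = ∑ i, a i * b i := by
  simp [PiLp.inner_apply, mul_comm]

theorem sum_mul_fourierFst_pdxi_eq_zero (hu : IsLocSchwartz u)
    (hj : ∀ i j, FourierVanishesOnPerp (johnOp i j u)) (hy : y ≠ 0) (hξ : ξ ≠ 0)
    (hyξ : ⟪y, ξ⟫ = 0) (hyη : ⟪y, η⟫ = 0) :
    ∑ j, (η j : ℂ) * fourierFst (pdxi j u) y ξ = 0 := by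
  set F : Fin n → ℂ := fun j => fourierFst (pdxi j u) y ξ
  have symmetric (i j : Fin n) : (y i : ℂ) * F j = y j * F i := by
    have john_eq_zero := fourierFst_johnOp hu i j y hξ
    rw [hj i j y ξ hξ hyξ] at john_eq_zero
    exact sub_eq_zero.1 ((mul_eq_zero.1 john_eq_zero.symm).resolve_left Complex.two_pi_I_ne_zero)
  have sum_sq_ne_zero : ∑ i, (y i : ℂ) * y i ≠ 0 := by
    have : ⟪y, y⟫ ≠ 0 := by simpa using hy
    rw [inner_eq_sum] at this
    exact_mod_cast this
  have sum_mul_eq_zero : ∑ j, (y j : ℂ) * η j = 0 := by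
    rw [inner_eq_sum] at hyη
    exact_mod_cast hyη
  refine (mul_eq_zero.1 ?_).resolve_left sum_sq_ne_zero
  calc (∑ i, (y i : ℂ) * y i) * ∑ j, (η j : ℂ) * F j
      = (∑ i, (y i : ℂ) * F i) * ∑ j, (y j : ℂ) * η j := by
        simp only [Finset.sum_mul_sum]
        refine Finset.sum_congr rfl fun i _ => Finset.sum_congr rfl fun j _ => ?_
        linear_combination (y i : ℂ) * η j * symmetric i j
    _ = 0 := by rw [sum_mul_eq_zero, mul_zero]

theorem fourierFst_eq_of_perp_of_ne_zero (hn : 3 ≤ n) (hu : IsLocSchwartz u)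
    (hj : ∀ i j, FourierVanishesOnPerp (johnOp i j u)) (hy : y ≠ 0) (hξ : ξ ≠ 0) (hη : η ≠ 0)
    (hyξ : ⟪y, ξ⟫ = 0) (hyη : ⟪y, η⟫ = 0) : fourierFst u y ξ = fourierFst u y η := by
  let P := (ℝ ∙ y)ᗮ
  have mem_P {ζ : En n} : ζ ∈ P ↔ ⟪y, ζ⟫ = 0 := Submodule.mem_orthogonal_singleton_iff_inner_right
  have one_lt_rank : 1 < Module.rank ℝ P := by
    have finrank_add := (ℝ ∙ y).finrank_add_finrank_orthogonal
    rw [finrank_span_singleton hy, finrank_euclideanSpace_fin] at finrank_add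
    rw [← Module.finrank_eq_rank]
    exact_mod_cast show 1 < Module.finrank ℝ (ℝ ∙ y)ᗮ by omega
  have hasFDerivAt_zero : ∀ ζ ∈ ({0}ᶜ : Set P),
      HasFDerivAt (fun ζ : P => fourierFst u y ζ) (0 : P →L[ℝ] ℂ) ζ := by
    intro ζ hζ
    have ζ_ne_zero : (ζ : En n) ≠ 0 := mt ZeroMemClass.coe_eq_zero.1 hζ
    obtain ⟨L, hL, L_single⟩ := exists_hasFDerivAt_fourierFst hu y ζ_ne_zero
    have restrict_eq_zero : L.comp P.subtypeL = 0 := by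
      refine ContinuousLinearMap.ext fun θ => (clm_apply_eq_sum_single L θ).trans ?_
      simpa [L_single] using
        sum_mul_fourierFst_pdxi_eq_zero hu hj hy ζ_ne_zero (mem_P.1 ζ.2) (mem_P.1 θ.2)
    exact restrict_eq_zero ▸ hL.comp ζ P.subtypeL.hasFDerivAt
  exact isOpen_compl_singleton.is_const_of_fderiv_eq_zero (𝕜 := ℝ)
    (f := fun ζ : P => fourierFst u y ζ) (x := ⟨ξ, mem_P.2 hyξ⟩) (y := ⟨η, mem_P.2 hyη⟩)
    (isConnected_compl_singleton_of_one_lt_rank one_lt_rank 0).isPreconnected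
    (fun ζ hζ => (hasFDerivAt_zero ζ hζ).differentiableAt.differentiableWithinAt)
    (fun ζ hζ => (hasFDerivAt_zero ζ hζ).fderiv)
    (by simpa using hξ) (by simpa using hη)

theorem tendsto_fourierFst_smul_nhds_zero (hu : IsLocSchwartz u) (hξ : ξ ≠ 0) (z : En n) :
    Tendsto (fun t : ℝ => fourierFst u (t • z) ξ) (𝓝[≠] 0) (𝓝 (fourierFst u 0 ξ)) := by
  obtain ⟨s, hs⟩ := hu.exists_slice_fourierFst hξ
  have : Continuous fun t : ℝ => s (t • z) := s.continuous.comp (by fun_prop)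
  simpa [hs] using (this.tendsto 0).mono_left nhdsWithin_le_nhds

theorem fourierFst_eq_of_perp (hn : 3 ≤ n) (hu : IsLocSchwartz u)
    (hj : ∀ i j, FourierVanishesOnPerp (johnOp i j u)) (hξ : ξ ≠ 0) (hη : η ≠ 0)
    (hyξ : ⟪y, ξ⟫ = 0) (hyη : ⟪y, η⟫ = 0) : fourierFst u y ξ = fourierFst u y η := by
  obtain rfl | hy := eq_or_ne y 0
  · obtain ⟨z, hz, hξz, hηz⟩ := exists_unit_orthogonal_pair (by simpa using hn) ξ η
    have z_ne_zero : z ≠ 0 := norm_ne_zero_iff.1 (by simp [hz])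
    refine tendsto_nhds_unique (tendsto_fourierFst_smul_nhds_zero hu hξ z)
      ((tendsto_fourierFst_smul_nhds_zero hu hη z).congr' ?_)
    filter_upwards [self_mem_nhdsWithin] with t ht
    exact fourierFst_eq_of_perp_of_ne_zero hn hu hj (smul_ne_zero ht z_ne_zero) hη hξ
      (by simp [inner_smul_left, real_inner_comm, hηz])
      (by simp [inner_smul_left, real_inner_comm, hξz])
  · exact fourierFst_eq_of_perp_of_ne_zero hn hu hj hy hξ hη hyξ hyη

theorem fourierVanishesOnPerp_of_neg_degree (hn : 3 ≤ n) {N : ℕ} {e : ℤ} (he : e < 0)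
    (hu : IsLocSchwartz u) (hd : IsPosHomogeneous e u)
    (h : ∀ l : List (Fin n × Fin n), l.length = N → FourierVanishesOnPerp (johnIter l u)) :
    FourierVanishesOnPerp u := by
  induction N generalizing e u with
  | zero => exact h [] rfl
  | succ N ih =>
    have johnOp_vanishes (i j : Fin n) : FourierVanishesOnPerp (johnOp i j u) := by
      refine ih (by omega) (hu.johnOp i j) (hd.johnOp hu i j) fun l hl => ?_
      rw [← johnIter_append_singleton l (i, j) u]
      exact h _ (by simp [hl])
    intro y ξ hξ hyξ
    have homogeneous := hd.fourierFst y hξ two_pos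
    rw [fourierFst_eq_of_perp hn hu johnOp_vanishes (smul_ne_zero two_ne_zero hξ) hξ
      (by simp [inner_smul_right, hyξ]) hyξ] at homogeneous
    by_contra fourierFst_ne_zero
    have two_zpow_eq_one : (2 : ℝ) ^ e = 1 := by
      exact_mod_cast (right_eq_mul₀ fourierFst_ne_zero).1 homogeneous
    exact (zpow_lt_one_of_neg₀ one_lt_two he).ne two_zpow_eq_one

end ConstantOnPerp

theorem exists_norm_pow_mul_le_of_coord {ι : Type*} [Fintype ι] [Nonempty ι] {N : ℕ}
    {r : EuclideanSpace ℝ ι → ℝ} (hr : ∀ x, 0 ≤ r x) (h : ∀ j, ∃ K, ∀ x, |x j| ^ N * r x ≤ K) :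
    ∃ K, ∀ x, ‖x‖ ^ N * r x ≤ K := by
  choose K hK using h
  refine ⟨(Fintype.card ι : ℝ) ^ N * ∑ j, |K j|, fun x => ?_⟩
  obtain ⟨j, hj⟩ := Finite.exists_max fun j => |x j|
  have norm_le : ‖x‖ ≤ Fintype.card ι * |x j| :=
    (norm_le_sum_abs_coord x).trans
      ((Finset.sum_le_card_nsmul _ _ _ fun i _ => hj i).trans_eq (by simp))
  calc ‖x‖ ^ N * r x ≤ (Fintype.card ι * |x j|) ^ N * r x := by
        have := hr x
        gcongr
    _ = (Fintype.card ι : ℝ) ^ N * (|x j| ^ N * r x) := by ring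
    _ ≤ (Fintype.card ι : ℝ) ^ N * ∑ j, |K j| := by
        gcongr
        exact ((hK j x).trans (le_abs_self _)).trans
          (Finset.single_le_sum (f := fun j => |K j|) (fun i _ => abs_nonneg _) (Finset.mem_univ j))

theorem fourier_of_hasLineDerivAt {V : Type*} [NormedAddCommGroup V] [InnerProductSpace ℝ V]
    [FiniteDimensional ℝ V] [MeasurableSpace V] [BorelSpace V] {f f' : V → ℂ} {v : V}
    (hf : Integrable f) (hf' : Integrable f') (h : ∀ y, HasLineDerivAt ℝ f (f' y) y v) (x : V) :
    𝓕 f' x = 2 * Real.pi * Complex.I * ⟪v, x⟫ * 𝓕 f x := by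
  set g : V → ℂ := fun y => (Real.fourierChar (-⟪y, x⟫) : ℂ) with hg
  set c : ℂ := 2 * Real.pi * Complex.I * ⟪v, x⟫
  have integrable_mul_char {f : V → ℂ} (hf : Integrable f) : Integrable fun y => f y * g y := by
    simpa only [hg, Circle.smul_def, smul_eq_mul, mul_comm] using
      (Real.fourierIntegral_convergent_iff x).2 hf
  have fourier_eq (f : V → ℂ) : 𝓕 f x = ∫ y, f y * g y := by
    simp only [Real.fourier_eq, hg, Circle.smul_def, smul_eq_mul, mul_comm]
  have hasLineDerivAt_char (y : V) : HasLineDerivAt ℝ g (-c * g y) y v := by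
    have innerSL_eq (a b : V) : innerSL ℝ a b = ⟪a, b⟫ := rfl
    convert! (Real.hasFDerivAt_fourierChar_neg_bilinear_left (innerSL ℝ) y x).hasLineDerivAt v
      using 1
    simp [g, c, innerSL_eq, real_inner_comm v x]
    ring
  have parts := integral_bilinear_hasLineDerivAt_right_eq_neg_left_of_integrable (μ := volume)
    (B := ContinuousLinearMap.mul ℝ ℂ) (by simpa using integrable_mul_char hf')
    (by simpa [mul_left_comm] using (integrable_mul_char hf).const_mul c)
    (by simpa using integrable_mul_char hf) (fun y _ => h y) (fun y _ => hasLineDerivAt_char y)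
  simp only [ContinuousLinearMap.mul_apply', mul_left_comm _ (-c), integral_const_mul] at parts
  rw [fourier_eq, fourier_eq]
  linear_combination (norm := ring_nf) parts

/-- `f y` is the common value of `fourierFst w y ξ` over all nonzero `ξ` orthogonal to `y` and `v`.
Such an `f` is shown to be a Schwartz function when `v = 0`; the directions `v ≠ 0` serve to compute
the derivatives of `f`, since a `ξ` orthogonal to `v` and `y` remains admissible along the line
`y + ℝ v`. -/
structure IsFourierValueOnPerp {n : ℕ} (v : En n) (w : En n → En n → ℝ) (f : En n → ℂ) : Prop where
  isLocSchwartz : IsLocSchwartz w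
  fourierFst_eq : ∀ ⦃y ξ : En n⦄, ξ ≠ 0 → ⟪v, ξ⟫ = 0 → ⟪y, ξ⟫ = 0 → fourierFst w y ξ = f y

namespace IsFourierValueOnPerp

variable {n : ℕ} {v : En n} {w : En n → En n → ℝ} {f : En n → ℂ}

theorem of_zero (h : IsFourierValueOnPerp 0 w f) (v : En n) : IsFourierValueOnPerp v w f :=
  ⟨h.isLocSchwartz, fun _ _ hξ _ hyξ => h.fourierFst_eq hξ (inner_zero_left _) hyξ⟩

theorem exists_unit (h : IsFourierValueOnPerp v w f) (hn : 3 ≤ n) (y : En n) :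
    ∃ ξ : En n, ‖ξ‖ = 1 ∧ ⟪v, ξ⟫ = 0 ∧ ⟪y, ξ⟫ = 0 ∧ fourierFst w y ξ = f y := by
  obtain ⟨ξ, hξ, hvξ, hyξ⟩ := exists_unit_orthogonal_pair (by simpa using hn) v y
  exact ⟨ξ, hξ, hvξ, hyξ, h.fourierFst_eq (norm_ne_zero_iff.1 (by simp [hξ])) hvξ hyξ⟩

theorem hasLineDerivAt (h : IsFourierValueOnPerp v w f) {y ξ : En n} (hξ : ξ ≠ 0)
    (hvξ : ⟪v, ξ⟫ = 0) (hyξ : ⟪y, ξ⟫ = 0) :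
    HasLineDerivAt ℝ f
      (-(2 * Real.pi * Complex.I) * fourierFst (fun x ξ => ⟪x, v⟫ * w x ξ) y ξ) y v := by
  obtain ⟨s, hs⟩ := h.isLocSchwartz.exists_slice_fourierFst hξ
  have hasLineDerivAt_s := s.differentiableAt.hasFDerivAt.hasLineDerivAt (x := y) v
  rw [fderiv_fourierFst_slice h.isLocSchwartz hξ hs] at hasLineDerivAt_s
  have eq_on_line : (fun t : ℝ => f (y + t • v)) = fun t => s (y + t • v) := by
    funext t
    rw [hs, h.fourierFst_eq hξ hvξ (by simp [inner_add_left, inner_smul_left, hvξ, hyξ])]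
  unfold HasLineDerivAt at hasLineDerivAt_s ⊢
  rwa [eq_on_line]

theorem exists_hasLineDerivAt (h : IsFourierValueOnPerp v w f) (hn : 3 ≤ n) :
    ∃ g, IsFourierValueOnPerp v (fun x ξ => ⟪x, v⟫ * w x ξ) g ∧
      ∀ y, HasLineDerivAt ℝ f (-(2 * Real.pi * Complex.I) * g y) y v := by
  have factor_ne_zero : -(2 * Real.pi * Complex.I) ≠ 0 := neg_ne_zero.2 Complex.two_pi_I_ne_zero
  let g (y : En n) : ℂ := (-(2 * Real.pi * Complex.I))⁻¹ * lineDeriv ℝ f y v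
  have isValue : IsFourierValueOnPerp v (fun x ξ => ⟪x, v⟫ * w x ξ) g := by
    refine ⟨h.isLocSchwartz.mul_left (isLocTemperate_inner_const v), fun y ξ hξ hvξ hyξ => ?_⟩
    simp only [g, (h.hasLineDerivAt hξ hvξ hyξ).lineDeriv]
    rw [inv_mul_cancel_left₀ factor_ne_zero]
  refine ⟨g, isValue, fun y => ?_⟩
  obtain ⟨ξ, hξ, hvξ, hyξ, value⟩ := isValue.exists_unit hn y
  rw [← value]
  exact h.hasLineDerivAt (norm_ne_zero_iff.1 (by simp [hξ])) hvξ hyξ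

theorem continuous (h : IsFourierValueOnPerp v w f) (hn : 3 ≤ n) : Continuous f := by
  let F (p : En n × Metric.sphere (0 : En n) 1) : ℂ := fourierFst w p.1 p.2
  have continuous_F : Continuous F := by
    refine continuous_iff_continuousAt.2 fun p => ?_
    have inclusion :
        Continuous fun p : En n × Metric.sphere (0 : En n) 1 => (p.1, (p.2 : En n)) := by
      fun_prop
    have continuousAt_value :=
      continuousAt_fourierFst h.isLocSchwartz p.1 (ne_zero_of_mem_unit_sphere p.2)
    exact ContinuousAt.comp (g := fun q : En n × En n => fourierFst w q.1 q.2)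
      (f := fun q : En n × Metric.sphere (0 : En n) 1 => (q.1, (q.2 : En n))) (x := p)
      continuousAt_value inclusion.continuousAt
  refine continuous_iff_isClosed.2 fun S hS => ?_
  let T := {p : En n × Metric.sphere (0 : En n) 1 | ⟪v, (p.2 : En n)⟫ = 0} ∩
    ({p | ⟪p.1, (p.2 : En n)⟫ = 0} ∩ F ⁻¹' S)
  have isClosed_T : IsClosed T :=
    (isClosed_eq (by fun_prop) continuous_const).inter
      ((isClosed_eq (by fun_prop) continuous_const).inter (hS.preimage continuous_F))
  have preimage_eq : f ⁻¹' S = Prod.fst '' T := by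
    ext y
    constructor
    · intro hy
      obtain ⟨ξ, hξ, hvξ, hyξ, value⟩ := h.exists_unit hn y
      exact ⟨(y, ⟨ξ, by simpa using hξ⟩), ⟨hvξ, hyξ, value.symm ▸ Set.mem_preimage.1 hy⟩, rfl⟩
    · rintro ⟨⟨y, ξ⟩, ⟨hvξ, hyξ, hS⟩, rfl⟩
      exact Set.mem_preimage.2 (h.fourierFst_eq (ne_zero_of_mem_unit_sphere ξ) hvξ hyξ ▸ hS)
  rw [preimage_eq]
  exact isClosedMap_fst_of_compactSpace _ isClosed_T

theorem exists_norm_pow_mul_norm_le (h : IsFourierValueOnPerp v w f) (hn : 3 ≤ n) (N : ℕ) :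
    ∃ K : ℝ, ∀ y, ‖y‖ ^ N * ‖f y‖ ≤ K := by
  obtain ⟨K, hK⟩ := exists_norm_pow_mul_norm_fourierFst_le h.isLocSchwartz N
  refine ⟨K, fun y => ?_⟩
  obtain ⟨ξ, hξ, -, -, value⟩ := h.exists_unit hn y
  exact value ▸ hK y ξ hξ

theorem integrable_norm_pow_mul_norm (h : IsFourierValueOnPerp v w f) (hn : 3 ≤ n) (N : ℕ) :
    Integrable fun y => ‖y‖ ^ N * ‖f y‖ := by
  obtain ⟨K, hK⟩ := h.exists_norm_pow_mul_norm_le hn 0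
  obtain ⟨K', hK'⟩ :=
    h.exists_norm_pow_mul_norm_le hn (N + (volume : Measure (En n)).integrablePower)
  exact integrable_of_le_of_pow_mul_le (C₁ := K) (C₂ := K') (by simpa using hK) hK'
    (h.continuous hn).aestronglyMeasurable

theorem integrable (h : IsFourierValueOnPerp v w f) (hn : 3 ≤ n) : Integrable f := by
  refine (integrable_norm_iff (h.continuous hn).aestronglyMeasurable).1 ?_
  simpa using h.integrable_norm_pow_mul_norm hn 0

theorem exists_abs_inner_pow_mul_norm_fourier_le (h : IsFourierValueOnPerp v w f) (hn : 3 ≤ n)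
    (N : ℕ) : ∃ K : ℝ, ∀ x, |⟪v, x⟫| ^ N * ‖𝓕 f x‖ ≤ K := by
  induction N generalizing w f with
  | zero =>
    refine ⟨∫ y, ‖f y‖, fun x => ?_⟩
    rw [pow_zero, one_mul, Real.fourier_eq]
    exact (norm_integral_le_integral_norm _).trans_eq (by simp [Circle.norm_smul])
  | succ N ih =>
    obtain ⟨g, hg, hasLineDerivAt_f⟩ := h.exists_hasLineDerivAt hn
    obtain ⟨K, hK⟩ := ih hg
    refine ⟨K, fun x => (le_of_eq ?_).trans (hK x)⟩
    have fourier_const_mul (c : ℂ) : 𝓕 (fun y => c * g y) x = c * 𝓕 g x := by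
      simp only [Real.fourier_eq, Circle.smul_def, smul_eq_mul, mul_left_comm, integral_const_mul]
    have fourier_eq : 𝓕 g x = -⟪v, x⟫ * 𝓕 f x := by
      refine mul_left_cancel₀ (neg_ne_zero.2 Complex.two_pi_I_ne_zero) ?_
      rw [← fourier_const_mul, fourier_of_hasLineDerivAt (h.integrable hn)
        ((hg.integrable hn).const_mul _) hasLineDerivAt_f]
      ring
    rw [fourier_eq, norm_mul, norm_neg, Complex.norm_real, Real.norm_eq_abs]
    ring

theorem exists_norm_pow_mul_norm_fourier_le (h : IsFourierValueOnPerp 0 w f) (hn : 3 ≤ n) (N : ℕ) :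
    ∃ K : ℝ, ∀ x, ‖x‖ ^ N * ‖𝓕 f x‖ ≤ K := by
  have : Nonempty (Fin n) := ⟨⟨0, by omega⟩⟩
  refine exists_norm_pow_mul_le_of_coord (fun x => norm_nonneg _) fun j => ?_
  simpa [EuclideanSpace.inner_single_left] using
    (h.of_zero (EuclideanSpace.single j 1)).exists_abs_inner_pow_mul_norm_fourier_le hn N

theorem neg_pdx (h : IsFourierValueOnPerp 0 w f) (j : Fin n) :
    IsFourierValueOnPerp 0 (fun x ξ => -1 * pdx j w x ξ)
      (fun y => -(2 * Real.pi * Complex.I) * y j * f y) := by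
  refine ⟨(h.isLocSchwartz.pdx j).const_mul (-1), fun y ξ hξ hvξ hyξ => ?_⟩
  rw [fourierFst_mul_left (fun _ => -1), fourierFst_pdx h.isLocSchwartz j y hξ,
    h.fourierFst_eq hξ hvξ hyξ]
  push_cast
  ring

theorem exists_hasFDerivAt_fourier (h : IsFourierValueOnPerp 0 w f) (hn : 3 ≤ n) :
    ∃ L : En n → (En n →L[ℝ] ℂ), (∀ x, HasFDerivAt (𝓕 f) (L x) x) ∧ ∀ j,
      (fun x => L x (EuclideanSpace.single j 1)) =
        𝓕 (fun y => -(2 * Real.pi * Complex.I) * y j * f y) := by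
  refine ⟨_, fun x => Real.hasFDerivAt_fourier (h.integrable hn)
    (by simpa using h.integrable_norm_pow_mul_norm hn 1) x, fun j => funext fun x => ?_⟩
  have integrable_smulRight :
      Integrable (VectorFourier.fourierSMulRight (innerSL ℝ (E := En n)) f) := by
    refine ((h.integrable_norm_pow_mul_norm hn 1).const_mul (2 * Real.pi)).mono'
      (h.integrable hn).1.fourierSMulRight (Eventually.of_forall fun y => ?_)
    rw [VectorFourier.norm_fourierSMulRight, innerSL_apply_norm, pow_one, mul_assoc]
  rw [Real.fourier_eq, Real.fourier_eq, ContinuousLinearMap.integral_apply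
    ((Real.fourierIntegral_convergent_iff x).2 integrable_smulRight)]
  refine integral_congr_ae (Eventually.of_forall fun y => ?_)
  have innerSL_single : innerSL ℝ y (EuclideanSpace.single j 1) = y j := by
    simp [innerSL_apply_apply, EuclideanSpace.inner_single_right]
  simp [VectorFourier.fourierSMulRight_apply, innerSL_single, Circle.smul_def, mul_assoc]

theorem exists_schwartzMap_eq_fourier (h : IsFourierValueOnPerp 0 w f) (hn : 3 ≤ n) :
    ∃ s : 𝓢(En n, ℂ), ⇑s = 𝓕 f := by
  have regularity (p N : ℕ) : ContDiff ℝ N (𝓕 f) ∧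
      ∃ K : ℝ, ∀ y, ‖y‖ ^ p * ‖iteratedFDeriv ℝ N (𝓕 f) y‖ ≤ K := by
    refine contDiff_and_decay_of_partials_mem {g | ∃ w f, IsFourierValueOnPerp 0 w f ∧ g = 𝓕 f} p
      ?_ ?_ N _ ⟨w, f, h, rfl⟩
    · rintro g ⟨w, f, h, rfl⟩
      obtain ⟨L, hL, L_single⟩ := h.exists_hasFDerivAt_fourier hn
      exact ⟨L, hL, fun j => ⟨_, _, h.neg_pdx j, L_single j⟩⟩
    · rintro g ⟨w, f, h, rfl⟩
      exact h.exists_norm_pow_mul_norm_fourier_le hn p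
  exact ⟨⟨𝓕 f, contDiff_infty.2 fun N => (regularity 0 N).1, fun p N => (regularity p N).2⟩, rfl⟩

theorem exists_schwartzMap_eq (h : IsFourierValueOnPerp 0 w f) (hn : 3 ≤ n) :
    ∃ s : 𝓢(En n, ℂ), ⇑s = f := by
  obtain ⟨s, hs⟩ := h.exists_schwartzMap_eq_fourier hn
  refine ⟨𝓕⁻ s, ?_⟩
  rw [SchwartzMap.fourierInv_coe, hs]
  exact (h.continuous hn).fourierInv_fourier_eq (h.integrable hn) (hs ▸ s.integrable)

end IsFourierValueOnPerp

theorem exists_schwartzMap_eq_fourierFst_of_perp {n : ℕ} (hn : 3 ≤ n) {u : En n → En n → ℝ}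
    (hu : IsLocSchwartz u) (hj : ∀ i j, FourierVanishesOnPerp (johnOp i j u)) :
    ∃ s : 𝓢(En n, ℂ), ∀ y ξ : En n, ξ ≠ 0 → ⟪y, ξ⟫ = 0 → s y = fourierFst u y ξ := by
  choose z z_norm z_perp _ using fun y : En n => exists_unit_orthogonal_pair (by simpa using hn) y y
  have isValue : IsFourierValueOnPerp 0 u fun y => fourierFst u y (z y) :=
    ⟨hu, fun y ξ hξ _ hyξ => fourierFst_eq_of_perp hn hu hj hξ
      (norm_ne_zero_iff.1 (by simp [z_norm])) hyξ (z_perp y)⟩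
  obtain ⟨s, hs⟩ := isValue.exists_schwartzMap_eq hn
  exact ⟨s, fun y ξ hξ hyξ => hs ▸ (isValue.fourierFst_eq hξ (inner_zero_left _) hyξ).symm⟩

/-! ### Division by the Euler field on hyperplanes -/

section RadialAverage

variable {V F : Type*} [NormedAddCommGroup V] [NormedSpace ℝ V]
  [NormedAddCommGroup F] [NormedSpace ℝ F] {ι : Type*} [Fintype ι]

/-- The weighted average `∫₀¹ t ^ c • f (t • y) dt` of `f` over the segment from `0` to `y`. It
inverts `(c + 1) + y · ∂_y` and, applied to the partial derivatives of `f`, recovers `f - f 0`. -/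
def radialAverage (c : ℕ) (f : 𝓢(V, F)) (y : V) : F := ∫ t in (0 : ℝ)..1, t ^ c • f (t • y)

theorem continuous_pow_smul_comp_smul (c : ℕ) {f : V → F} (hf : Continuous f) (y : V) :
    Continuous fun t : ℝ => t ^ c • f (t • y) := by
  fun_prop

theorem intervalIntegrable_radialAverage (c : ℕ) (f : 𝓢(V, F)) (y : V) :
    IntervalIntegrable (fun t : ℝ => t ^ c • f (t • y)) volume 0 1 :=
  (continuous_pow_smul_comp_smul c f.continuous y).intervalIntegrable 0 1

theorem norm_pow_smul_le {c : ℕ} {t : ℝ} (ht : t ∈ Set.uIoc 0 1) {a : F} {K : ℝ} (ha : ‖a‖ ≤ K) :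
    ‖t ^ c • a‖ ≤ K := by
  rw [Set.uIoc_of_le zero_le_one] at ht
  rw [norm_smul, norm_pow, Real.norm_of_nonneg ht.1.le]
  exact (mul_le_of_le_one_left (norm_nonneg a) (pow_le_one₀ ht.1.le ht.2)).trans ha

theorem exists_norm_radialAverage_le (c : ℕ) (f : 𝓢(V, F)) :
    ∃ K, ∀ y, ‖radialAverage c f y‖ ≤ K := by
  obtain ⟨K, -, hK⟩ := exists_one_add_norm_pow_mul_le f 0
  simp only [pow_zero, one_mul] at hK
  refine ⟨K, fun y => ?_⟩
  simpa [radialAverage] using intervalIntegral.norm_integral_le_of_norm_le_const (a := 0) (b := 1)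
    fun t ht => norm_pow_smul_le (c := c) ht (hK (t • y))

theorem hasDerivAt_comp_smul (f : 𝓢(V, F)) (y : V) (t : ℝ) :
    HasDerivAt (fun t : ℝ => f (t • y)) (fderiv ℝ f (t • y) y) t := by
  have hasDerivAt_smul : HasDerivAt (fun t : ℝ => t • y) y t := by
    simpa using (hasDerivAt_id t).smul_const y
  exact (f.differentiableAt (x := t • y)).hasFDerivAt.comp_hasDerivAt t hasDerivAt_smul

theorem exists_hasFDerivAt_radialAverage [CompleteSpace F] (c : ℕ) (f : 𝓢(V, F)) (y : V) :
    ∃ L : V →L[ℝ] F, HasFDerivAt (radialAverage c f) L y ∧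
      ∀ v, L v = radialAverage (c + 1) (∂_{v} f) y := by
  obtain ⟨K, -, hK⟩ := exists_one_add_norm_pow_mul_le (SchwartzMap.fderivCLM ℝ _ _ f) 0
  simp only [pow_zero, one_mul, SchwartzMap.fderivCLM_apply] at hK
  have continuous_deriv : Continuous fun t : ℝ => t ^ (c + 1) • fderiv ℝ f (t • y) :=
    continuous_pow_smul_comp_smul _ ((f.smooth 1).continuous_fderiv (by simp)) y
  have hasFDerivAt_integrand (t : ℝ) (y : V) :
      HasFDerivAt (fun y => t ^ c • f (t • y)) (t ^ (c + 1) • fderiv ℝ f (t • y)) y := by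
    convert! (((f.differentiableAt (x := t • y)).hasFDerivAt.comp y
      ((hasFDerivAt_id y).const_smul t)).const_smul (t ^ c)) using 1
    ext v
    simp [pow_succ, smul_smul]
  refine ⟨_, intervalIntegral.hasFDerivAt_integral_of_dominated_of_fderiv_le (𝕜 := ℝ)
    (s := Set.univ) (bound := fun _ => K) univ_mem
    (Eventually.of_forall fun y =>
      (continuous_pow_smul_comp_smul c f.continuous y).aestronglyMeasurable)
    (intervalIntegrable_radialAverage c f y) continuous_deriv.aestronglyMeasurable
    (Eventually.of_forall fun t ht y _ => norm_pow_smul_le ht (hK _)) (by simp)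
    (Eventually.of_forall fun t _ y _ => hasFDerivAt_integrand t y), fun v => ?_⟩
  rw [ContinuousLinearMap.intervalIntegral_apply (continuous_deriv.intervalIntegrable _ _)]
  rfl

theorem hasTemperateGrowth_radialAverage [CompleteSpace F] (c : ℕ)
    (f : 𝓢(EuclideanSpace ℝ ι, F)) : (radialAverage c f).HasTemperateGrowth := by
  classical
  have regularity (N : ℕ) : ContDiff ℝ N (radialAverage c f) ∧
      ∃ K : ℝ, ∀ y, ‖y‖ ^ 0 * ‖iteratedFDeriv ℝ N (radialAverage c f) y‖ ≤ K := by
    refine contDiff_and_decay_of_partials_mem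
      {g | ∃ c, ∃ f : 𝓢(EuclideanSpace ℝ ι, F), g = radialAverage c f} 0 ?_ ?_ N _ ⟨c, f, rfl⟩
    · rintro g ⟨c, f, rfl⟩
      choose L hL hL_apply using exists_hasFDerivAt_radialAverage c f
      exact ⟨L, hL, fun j => ⟨c + 1, _, funext fun y => hL_apply y _⟩⟩
    · rintro g ⟨c, f, rfl⟩
      simpa using exists_norm_radialAverage_le c f
  refine ⟨contDiff_infty.2 fun N => (regularity N).1, fun N => ?_⟩
  obtain ⟨K, hK⟩ := (regularity N).2
  exact ⟨0, K, by simpa using hK⟩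

theorem isLinearMap_radialAverage (c : ℕ) (y : V) :
    IsLinearMap ℝ (fun f : 𝓢(V, F) => radialAverage c f y) where
  map_add f g := by
    simp only [radialAverage, add_apply, smul_add]
    exact intervalIntegral.integral_add (intervalIntegrable_radialAverage c f y)
      (intervalIntegrable_radialAverage c g y)
  map_smul a f := by
    simp only [radialAverage, smul_apply, smul_comm _ a]
    exact intervalIntegral.integral_smul a _

theorem radialAverage_of_euler [CompleteSpace F] (c : ℕ) (s h : 𝓢(V, F)) (y : V)
    (hh : ∀ t : ℝ, h (t • y) = (c + 1 : ℝ) • s (t • y) + fderiv ℝ s (t • y) (t • y)) :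
    radialAverage c h y = s y := by
  have hasDerivAt_primitive (t : ℝ) :
      HasDerivAt (fun t : ℝ => t ^ (c + 1) • s (t • y)) (t ^ c • h (t • y)) t := by
    convert! (hasDerivAt_pow (c + 1) t).smul (hasDerivAt_comp_smul s y t) using 1
    rw [hh, (fderiv ℝ s (t • y)).map_smul]
    push_cast [Nat.add_sub_cancel]
    module
  have integral_eq := intervalIntegral.integral_eq_sub_of_hasDerivAt (a := 0) (b := 1)
    (fun t _ => hasDerivAt_primitive t) (intervalIntegrable_radialAverage c h y)
  simpa [radialAverage] using integral_eq

theorem sum_smul_radialAverage_lineDerivOp [DecidableEq ι] [CompleteSpace F]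
    (s : 𝓢(EuclideanSpace ℝ ι, F)) (y : EuclideanSpace ℝ ι) :
    ∑ i, y i • radialAverage 0 (∂_{(EuclideanSpace.single i 1 : EuclideanSpace ℝ ι)} s) y =
      s y - s 0 := by
  have hasDerivAt_segment (t : ℝ) : HasDerivAt (fun t : ℝ => s (t • y))
      (t ^ 0 • (∂_{y} s) (t • y)) t := by
    simpa [SchwartzMap.lineDerivOp_apply_eq_fderiv] using hasDerivAt_comp_smul s y t
  have integral_eq := intervalIntegral.integral_eq_sub_of_hasDerivAt (a := 0) (b := 1)
    (fun t _ => hasDerivAt_segment t) (intervalIntegrable_radialAverage 0 (∂_{y} s) y)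
  have lineDerivOp_eq_sum : (∂_{y} s : 𝓢(EuclideanSpace ℝ ι, F)) =
      ∑ i, y i • ∂_{(EuclideanSpace.single i 1 : EuclideanSpace ℝ ι)} s := by
    ext z
    simp only [sum_apply, smul_apply, SchwartzMap.lineDerivOp_apply_eq_fderiv]
    exact clm_apply_eq_sum_single _ y
  let average := (isLinearMap_radialAverage (F := F) 0 y).mk'
  calc ∑ i, y i • radialAverage 0 (∂_{(EuclideanSpace.single i 1 : EuclideanSpace ℝ ι)} s) y
      = average (∂_{y} s) := by
        rw [lineDerivOp_eq_sum, map_sum]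
        simp only [map_smul]
        rfl
    _ = s y - s 0 := by simpa [average, radialAverage] using integral_eq

theorem isLinearMap_smulLeftCLM_radialAverage (χ : 𝓢(EuclideanSpace ℝ ι, ℂ)) (c : ℕ) :
    IsLinearMap ℝ (fun f : 𝓢(EuclideanSpace ℝ ι, ℂ) =>
      SchwartzMap.smulLeftCLM ℂ (radialAverage c f) χ) where
  map_add f g := by
    ext y
    simp only [SchwartzMap.smulLeftCLM_apply_apply (hasTemperateGrowth_radialAverage c _),
      add_apply, (isLinearMap_radialAverage c y).map_add, add_smul]
  map_smul a f := by
    ext y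
    simp only [SchwartzMap.smulLeftCLM_apply_apply (hasTemperateGrowth_radialAverage c _),
      smul_apply, (isLinearMap_radialAverage c y).map_smul, smul_assoc]

end RadialAverage

section Division

variable {ι F : Type*} [Fintype ι] [NormedAddCommGroup F] [NormedSpace ℝ F]
  {ξ y : EuclideanSpace ℝ ι}

theorem fderiv_apply_eq_zero_of_perp {V : Type*} [NormedAddCommGroup V] [InnerProductSpace ℝ V]
    {g : V → F} {y v ξ : V} (hg : DifferentiableAt ℝ g y) (h : ∀ y, ⟪y, ξ⟫ = 0 → g y = 0)
    (hy : ⟪y, ξ⟫ = 0) (hv : ⟪v, ξ⟫ = 0) : fderiv ℝ g y v = 0 := by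
  have eq_zero_on_line : (fun t : ℝ => g (y + t • v)) = fun _ => 0 :=
    funext fun t => h _ (by simp [inner_add_left, real_inner_smul_left, hy, hv])
  rw [← hg.lineDeriv_eq_fderiv, lineDeriv, eq_zero_on_line, deriv_const]

theorem hasFDerivAt_coord_smul {s : EuclideanSpace ℝ ι → F} (hs : DifferentiableAt ℝ s y) (i : ι) :
    HasFDerivAt (fun y => y i • s y)
      (y i • fderiv ℝ s y + (EuclideanSpace.proj i).smulRight (s y)) y :=
  (EuclideanSpace.proj i : EuclideanSpace ℝ ι →L[ℝ] ℝ).hasFDerivAt.fun_smul hs.hasFDerivAt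

variable [DecidableEq ι]

theorem sum_smul_apply_single_eq_zero (hξ : ξ ≠ 0) {W : ι → ι → EuclideanSpace ℝ ι →L[ℝ] F}
    (antisymm : ∀ i j, W i j = -W j i) (W_perp : ∀ i j v, ⟪v, ξ⟫ = 0 → W i j v = 0) :
    ∑ i, ∑ j, ξ j • W i j (EuclideanSpace.single i 1) = 0 := by
  have inner_ne_zero : ⟪ξ, ξ⟫ ≠ 0 := by simpa using hξ
  have apply_single (i j : ι) :
      W i j (EuclideanSpace.single i 1) = (ξ i / ⟪ξ, ξ⟫) • W i j ξ := by
    have := W_perp i j (EuclideanSpace.single i 1 - (ξ i / ⟪ξ, ξ⟫) • ξ) (by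
      rw [inner_sub_left, real_inner_smul_left, div_mul_cancel₀ _ inner_ne_zero]
      simp [EuclideanSpace.inner_single_left])
    rwa [map_sub, map_smul, sub_eq_zero] at this
  simp only [apply_single]
  have : IsAddTorsionFree F := .of_isTorsionFree ℝ F
  refine self_eq_neg.1 ?_
  calc ∑ i, ∑ j, ξ j • (ξ i / ⟪ξ, ξ⟫) • W i j ξ
      = ∑ i, ∑ j, ξ i • (ξ j / ⟪ξ, ξ⟫) • W j i ξ := Finset.sum_comm
    _ = -∑ i, ∑ j, ξ j • (ξ i / ⟪ξ, ξ⟫) • W i j ξ := by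
      simp only [← Finset.sum_neg_distrib]
      refine Finset.sum_congr rfl fun i _ => Finset.sum_congr rfl fun j _ => ?_
      rw [antisymm j i, neg_apply]
      module

variable {r : EuclideanSpace ℝ ι → F} {r' : ι → EuclideanSpace ℝ ι → F}
  {h : ι → ι → EuclideanSpace ℝ ι → F} {D : ℝ}

theorem sum_smul_fderiv_coord_smul_sub_coord_smul (hr : Differentiable ℝ r)
    (hr' : ∀ j, Differentiable ℝ (r' j)) (euler : ∀ y, ∑ j, ξ j • r' j y = D • r y)
    (hy : ⟪y, ξ⟫ = 0) :
    ∑ i, ∑ j, ξ j •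
        fderiv ℝ (fun y => y i • r' j y - y j • r' i y) y (EuclideanSpace.single i 1) =
      D • ((Fintype.card ι - 1 : ℝ) • r y + fderiv ℝ r y y) := by
  have fderiv_euler (v : EuclideanSpace ℝ ι) :
      ∑ j, ξ j • fderiv ℝ (r' j) y v = D • fderiv ℝ r y v := by
    have hasFDerivAt_sum := HasFDerivAt.fun_sum (u := Finset.univ)
      fun j _ => (hr' j y).hasFDerivAt.fun_const_smul (ξ j)
    simp only [euler] at hasFDerivAt_sum
    simpa using DFunLike.congr_fun
      (hasFDerivAt_sum.unique ((hr y).hasFDerivAt.fun_const_smul D)) v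
  have inner_eq_zero : ∑ j, ξ j * y j = 0 := by
    simpa [PiLp.inner_apply] using hy
  have row_sum (i : ι) : ∑ j, ξ j •
        fderiv ℝ (fun y => y i • r' j y - y j • r' i y) y (EuclideanSpace.single i 1) =
      D • y i • fderiv ℝ r y (EuclideanSpace.single i 1) + D • r y - ξ i • r' i y := by
    have entry (j : ι) : ξ j •
          fderiv ℝ (fun y => y i • r' j y - y j • r' i y) y (EuclideanSpace.single i 1) =
        y i • ξ j • fderiv ℝ (r' j) y (EuclideanSpace.single i 1) + ξ j • r' j y -
          (if i = j then ξ j • r' i y else 0) -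
          (ξ j * y j) • fderiv ℝ (r' i) y (EuclideanSpace.single i 1) := by
      rw [((hasFDerivAt_coord_smul (hr' j y) i).fun_sub
        (hasFDerivAt_coord_smul (hr' i y) j)).fderiv]
      rcases eq_or_ne i j with rfl | hij
      · simp only [sub_self, if_true, zero_apply, smul_zero]
        module
      · simp [hij, hij.symm]
        module
    simp only [entry, Finset.sum_sub_distrib, Finset.sum_add_distrib, ← Finset.smul_sum,
      ← Finset.sum_smul, inner_eq_zero, fderiv_euler, euler, Finset.sum_ite_eq, Finset.mem_univ,
      if_true]
    module
  simp only [row_sum, Finset.sum_add_distrib, Finset.sum_sub_distrib, euler]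
  rw [clm_apply_eq_sum_single (fderiv ℝ r y) y, ← Finset.smul_sum, Finset.sum_const,
    Finset.card_univ]
  module

/- Off the hyperplane `ξ^⊥` the antisymmetric family `h i j` need not equal
`y i • r' j y - y j • r' i y`, but the difference vanishes on `ξ^⊥`, so its derivative only sees the
`ξ`-direction, and antisymmetry removes that contribution from the double sum. -/
theorem sum_smul_fderiv_eq_of_perp (hξ : ξ ≠ 0) (hr : Differentiable ℝ r)
    (hr' : ∀ j, Differentiable ℝ (r' j)) (hh : ∀ i j, Differentiable ℝ (h i j))
    (euler : ∀ y, ∑ j, ξ j • r' j y = D • r y) (antisymm : ∀ i j y, h i j y = -h j i y)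
    (eq_of_perp : ∀ i j y, ⟪y, ξ⟫ = 0 → h i j y = y i • r' j y - y j • r' i y)
    (hy : ⟪y, ξ⟫ = 0) :
    ∑ i, ∑ j, ξ j • fderiv ℝ (h i j) y (EuclideanSpace.single i 1) =
      D • ((Fintype.card ι - 1 : ℝ) • r y + fderiv ℝ r y y) := by
  set p : ι → ι → EuclideanSpace ℝ ι → F := fun i j y => y i • r' j y - y j • r' i y
  have differentiableAt_p (i j : ι) : DifferentiableAt ℝ (p i j) y :=
    ((hasFDerivAt_coord_smul (hr' j y) i).fun_sub
      (hasFDerivAt_coord_smul (hr' i y) j)).differentiableAt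
  have sum_fderiv_sub :
      ∑ i, ∑ j, ξ j • fderiv ℝ (h i j - p i j) y (EuclideanSpace.single i 1) = 0 := by
    refine sum_smul_apply_single_eq_zero hξ (fun i j => ?_) fun i j v hv =>
      fderiv_apply_eq_zero_of_perp ((hh i j y).sub (differentiableAt_p i j))
        (fun y hy => sub_eq_zero.2 (eq_of_perp i j y hy)) hy hv
    rw [← fderiv_neg]
    congr 1
    funext z
    simp only [p, Pi.sub_apply, Pi.neg_apply, antisymm i j z]
    abel
  rw [← sum_smul_fderiv_coord_smul_sub_coord_smul hr hr' euler hy]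
  simpa only [fderiv_sub (hh _ _ y) (differentiableAt_p _ _), sub_apply, smul_sub,
    Finset.sum_sub_distrib, sub_eq_zero] using sum_fderiv_sub

end Division

section HyperplaneQuotient

variable {n : ℕ}

/-- The form `q` of degree `d + 1` with `q ξ y = D • r y` for `⟪y, ξ⟫ = 0` when `h` consists of the
forms `y i • r' j y - y j • r' i y` of degree `d` there, and `∑ j, ξ j • r' j = D • r`. The cutoff
`χ`, with `χ 0 = 1`, is needed since `radialAverage` does not decay at infinity. -/
def hyperplaneQuotient (χ : 𝓢(En n, ℂ)) (h : Fin n → Fin n → En n → 𝓢(En n, ℂ)) (ξ : En n) :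
    𝓢(En n, ℂ) :=
  ∑ i, ∑ j, ξ j •
    (SchwartzMap.smulLeftCLM ℂ (radialAverage (n - 2) (∂_{(EuclideanSpace.single i 1 : En n)}
        (h i j ξ))) χ -
      SchwartzMap.smulLeftCLM ℂ (radialAverage 0 (∂_{(EuclideanSpace.single i 1 : En n)} χ))
        (h i j ξ))

variable {χ : 𝓢(En n, ℂ)} {h : Fin n → Fin n → En n → 𝓢(En n, ℂ)}

theorem IsSchwartzForm.hyperplaneQuotient {d : ℕ} (hh : ∀ i j, IsSchwartzForm d (h i j)) :
    IsSchwartzForm (d + 1) (hyperplaneQuotient χ h) := by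
  refine .sum _ fun i _ => .sum _ fun j _ => .mul j (.sub ?_ ?_)
  · exact ((hh i j).map (isLinearMap_lineDerivOp _)).map
      (isLinearMap_smulLeftCLM_radialAverage χ (n - 2))
  · exact (hh i j).map ((SchwartzMap.smulLeftCLM ℂ (radialAverage 0
      (∂_{(EuclideanSpace.single i 1 : En n)} χ))).restrictScalars ℝ).toLinearMap.isLinear

theorem hyperplaneQuotient_apply (y ξ : En n) : hyperplaneQuotient χ h ξ y =
    radialAverage (n - 2)
        (∑ i, ∑ j, ξ j • ∂_{(EuclideanSpace.single i 1 : En n)} (h i j ξ)) y * χ y -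
      ∑ i, radialAverage 0 (∂_{(EuclideanSpace.single i 1 : En n)} χ) y * ∑ j, ξ j • h i j ξ y := by
  let average := (isLinearMap_radialAverage (F := ℂ) (n - 2) y).mk'
  have average_sum : radialAverage (n - 2)
      (∑ i, ∑ j, ξ j • ∂_{(EuclideanSpace.single i 1 : En n)} (h i j ξ)) y =
      ∑ i, ∑ j, ξ j •
        radialAverage (n - 2) (∂_{(EuclideanSpace.single i 1 : En n)} (h i j ξ)) y := by
    change average _ = _
    simp only [map_sum, map_smul]
    rfl
  simp only [hyperplaneQuotient, average_sum, sum_apply, smul_apply, sub_apply,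
    SchwartzMap.smulLeftCLM_apply_apply (hasTemperateGrowth_radialAverage _ _), Finset.sum_mul,
    Finset.mul_sum, ← Finset.sum_sub_distrib, smul_eq_mul, smul_sub, smul_mul_assoc, mul_smul_comm]

variable {ξ y : En n} {r : 𝓢(En n, ℂ)} {r' : Fin n → 𝓢(En n, ℂ)} {D : ℝ}

theorem hyperplaneQuotient_apply_of_perp (hn : 2 ≤ n) (hχ : χ 0 = 1) (hξ : ξ ≠ 0)
    (euler : ∀ y, ∑ j, ξ j • r' j y = D • r y) (antisymm : ∀ i j y, h i j ξ y = -h j i ξ y)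
    (eq_of_perp : ∀ i j y, ⟪y, ξ⟫ = 0 → h i j ξ y = y i • r' j y - y j • r' i y)
    (hy : ⟪y, ξ⟫ = 0) : hyperplaneQuotient χ h ξ y = D • r y := by
  have average_divergence : radialAverage (n - 2)
      (∑ i, ∑ j, ξ j • ∂_{(EuclideanSpace.single i 1 : En n)} (h i j ξ)) y = D • r y := by
    refine radialAverage_of_euler (n - 2) (D • r) _ y fun t => ?_
    have divergence := sum_smul_fderiv_eq_of_perp hξ r.differentiable
      (fun j => (r' j).differentiable) (fun i j => (h i j ξ).differentiable) euler antisymm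
      eq_of_perp (y := t • y) (by rw [real_inner_smul_left, hy, mul_zero])
    simp only [sum_apply, smul_apply, SchwartzMap.lineDerivOp_apply_eq_fderiv, divergence,
      Fintype.card_fin]
    rw [FunLike.coe_smul, fderiv_const_smul r.differentiableAt]
    push_cast [hn]
    rw [Pi.smul_apply]
    module
  have inner_eq_zero : ∑ j, ξ j * y j = 0 := by simpa [PiLp.inner_apply] using hy
  have row_sum (i : Fin n) : ∑ j, ξ j • h i j ξ y = y i • D • r y := by
    have entry (j : Fin n) : ξ j • h i j ξ y = y i • ξ j • r' j y - (ξ j * y j) • r' i y := by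
      rw [eq_of_perp i j y hy]
      module
    simp only [entry, Finset.sum_sub_distrib, ← Finset.smul_sum, ← Finset.sum_smul, euler,
      inner_eq_zero, zero_smul, sub_zero]
  have sum_average : ∑ i, radialAverage 0 (∂_{(EuclideanSpace.single i 1 : En n)} χ) y *
      (y i • D • r y) = (χ y - 1) * D • r y := by
    rw [← hχ, ← sum_smul_radialAverage_lineDerivOp χ y, Finset.sum_mul]
    exact Finset.sum_congr rfl fun i _ => by rw [mul_smul_comm, smul_mul_assoc]
  rw [hyperplaneQuotient_apply, average_divergence]
  simp only [row_sum, sum_average]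
  ring

end HyperplaneQuotient

section FourierFormOnPerp

variable {n : ℕ} {u : En n → En n → ℝ}

theorem exists_schwartzMap_apply_zero_eq_one : ∃ χ : 𝓢(En n, ℂ), χ 0 = 1 := by
  let b : ContDiffBump (0 : En n) := ⟨1, 2, by norm_num, by norm_num⟩
  refine ⟨SchwartzMap.postcompCLM (𝕜 := ℝ) Complex.ofRealCLM
    (b.hasCompactSupport.toSchwartzMap b.contDiff), ?_⟩
  have apply_zero : b 0 = 1 := b.one_of_mem_closedBall (by simp [b])
  simp [apply_zero]

theorem exists_isSchwartzForm_succ_eq_fourierFst (hn : 2 ≤ n) {d : ℕ} (hu : IsLocSchwartz u)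
    (hd : IsPosHomogeneous (d + 1 : ℕ) u) {P : Fin n → Fin n → En n → 𝓢(En n, ℂ)}
    (hP : ∀ i j, IsSchwartzForm d (P i j))
    (P_eq : ∀ i j y ξ, ξ ≠ 0 → ⟪y, ξ⟫ = 0 → P i j ξ y = fourierFst (johnOp i j u) y ξ) :
    ∃ s : En n → 𝓢(En n, ℂ), IsSchwartzForm (d + 1) s ∧
      ∀ y ξ, ξ ≠ 0 → ⟪y, ξ⟫ = 0 → s ξ y = fourierFst u y ξ := by
  obtain ⟨χ, hχ⟩ := exists_schwartzMap_apply_zero_eq_one (n := n)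
  set D : ℝ := ((d + 1 : ℕ) : ℝ)
  have D_ne_zero : D ≠ 0 := Nat.cast_ne_zero.2 d.succ_ne_zero
  let h (i j : Fin n) (ξ : En n) : 𝓢(En n, ℂ) :=
    (2 * (2 * Real.pi * Complex.I))⁻¹ • (P i j ξ - P j i ξ)
  have isSchwartzForm_h (i j : Fin n) : IsSchwartzForm d (h i j) :=
    ((hP i j).sub (hP j i)).map
      ((2 * (2 * Real.pi * Complex.I))⁻¹ • (LinearMap.id (R := ℝ) (M := 𝓢(En n, ℂ)))).isLinear
  refine ⟨fun ξ => D⁻¹ • hyperplaneQuotient χ h ξ,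
    (IsSchwartzForm.hyperplaneQuotient isSchwartzForm_h).smul D⁻¹, fun y ξ hξ hy => ?_⟩
  obtain ⟨r, hr⟩ := hu.exists_slice_fourierFst hξ
  choose r' hr' using fun j => (hu.pdxi j).exists_slice_fourierFst hξ
  have euler (y : En n) : ∑ j, ξ j • r' j y = D • r y := by
    simp only [hr', hr, Complex.real_smul]
    rw [fourierFst_euler hd hu y hξ]
    simp [D]
  have antisymm (i j : Fin n) (y : En n) : h i j ξ y = -h j i ξ y := by
    simp only [h, smul_apply, sub_apply, smul_eq_mul]
    ring
  have h_eq_of_perp (i j : Fin n) (y : En n) (hy : ⟪y, ξ⟫ = 0) :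
      h i j ξ y = y i • r' j y - y j • r' i y := by
    simp only [h, smul_apply, sub_apply, smul_eq_mul, P_eq _ _ y ξ hξ hy,
      fourierFst_johnOp hu _ _ y hξ, hr', Complex.real_smul]
    field_simp [Complex.two_pi_I_ne_zero]
    ring
  rw [smul_apply, hyperplaneQuotient_apply_of_perp hn hχ hξ euler antisymm h_eq_of_perp hy,
    inv_smul_smul₀ D_ne_zero, hr]

theorem exists_isSchwartzForm_eq_fourierFst (hn : 3 ≤ n) {d N : ℕ} (hdN : d < N)
    (hu : IsLocSchwartz u) (hd : IsPosHomogeneous d u)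
    (h : ∀ l, l.length = N → FourierVanishesOnPerp (johnIter l u)) :
    ∃ s : En n → 𝓢(En n, ℂ), IsSchwartzForm d s ∧
      ∀ y ξ, ξ ≠ 0 → ⟪y, ξ⟫ = 0 → s ξ y = fourierFst u y ξ := by
  have johnOp_vanishes {N : ℕ} {u : En n → En n → ℝ}
      (h : ∀ l, l.length = N + 1 → FourierVanishesOnPerp (johnIter l u)) (i j : Fin n)
      (l : List (Fin n × Fin n)) (hl : l.length = N) :
      FourierVanishesOnPerp (johnIter l (johnOp i j u)) := by
    simpa only [johnIter_append_singleton] using h (l ++ [(i, j)]) (by simp [hl])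
  obtain ⟨N, rfl⟩ := Nat.exists_eq_succ_of_ne_zero hdN.ne_bot
  induction d generalizing N u with
  | zero =>
    obtain ⟨s, hs⟩ := exists_schwartzMap_eq_fourierFst_of_perp hn hu fun i j =>
      fourierVanishesOnPerp_of_neg_degree hn (by norm_num) (hu.johnOp i j) (hd.johnOp hu i j)
        (johnOp_vanishes h i j)
    exact ⟨fun _ => s, .base s, hs⟩
  | succ d ih =>
    obtain ⟨N, rfl⟩ := Nat.exists_eq_succ_of_ne_zero (Nat.lt_of_succ_lt_succ hdN).ne_bot
    choose P hP P_eq using fun i j => ih (hu.johnOp i j)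
      (by simpa using hd.johnOp hu i j) N (by omega) (johnOp_vanishes h i j)
    exact exists_isSchwartzForm_succ_eq_fourierFst (by omega) hu hd hP P_eq

end FourierFormOnPerp

section RealFourier

variable {V : Type*} [NormedAddCommGroup V] [InnerProductSpace ℝ V] [FiniteDimensional ℝ V]
  [MeasurableSpace V] [BorelSpace V]

/-- The real part of the inverse Fourier transform, which turns Fourier-side forms into forms with
real Schwartz coefficients. -/
def reFourierInv (f : 𝓢(V, ℂ)) : 𝓢(V, ℝ) := SchwartzMap.postcompCLM (𝕜 := ℝ) Complex.reCLM (𝓕⁻ f)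

theorem isLinearMap_reFourierInv : IsLinearMap ℝ (reFourierInv (V := V)) where
  map_add f g := by simp only [reFourierInv, FourierTransform.fourierInv_add, map_add]
  map_smul c f := by simp only [reFourierInv, FourierTransform.fourierInv_smul, map_smul]

theorem conj_fourier_neg (f : V → ℂ) (y : V) :
    (starRingEnd ℂ) (𝓕 f (-y)) = 𝓕 (fun x => (starRingEnd ℂ) (f x)) y := by
  rw [Real.fourier_eq, Real.fourier_eq, ← integral_conj]
  congr 1 with x
  simp only [Circle.smul_def, smul_eq_mul, map_mul, inner_neg_right, neg_neg]
  rw [← Circle.coe_inv_eq_conj, ← AddChar.map_neg_eq_inv]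

theorem fourier_re {f : V → ℂ} (hf : Integrable f) (y : V) :
    𝓕 (fun x => ((f x).re : ℂ)) y = (1 / 2) * (𝓕 f y + (starRingEnd ℂ) (𝓕 f (-y))) := by
  have integrable_left := (Real.fourierIntegral_convergent_iff y).2 hf
  have integrable_right : Integrable fun x => Real.fourierChar (-⟪x, y⟫) • (starRingEnd ℂ) (f x) :=
    (Real.fourierIntegral_convergent_iff y).2
      (Complex.conjCLE.toContinuousLinearMap.integrable_comp hf)
  rw [conj_fourier_neg, Real.fourier_eq, Real.fourier_eq, Real.fourier_eq]
  rw [← integral_add integrable_left integrable_right, ← integral_const_mul]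
  congr 1 with x
  rw [← smul_add, Complex.add_conj]
  simp only [Circle.smul_def, smul_eq_mul]
  push_cast
  ring

theorem conj_fourierFst_neg {W : Type*} (u : V → W → ℝ) (y : V) (ξ : W) :
    (starRingEnd ℂ) (fourierFst u (-y) ξ) = fourierFst u y ξ := by
  simp [fourierFst, conj_fourier_neg]

end RealFourier

section Range

variable {n : ℕ}

theorem fourierFst_ofSlices_reFourierInv (s : En n → 𝓢(En n, ℂ)) (y ξ : En n) :
    fourierFst (ofSlices fun ξ => reFourierInv (s ξ)) y ξ =
      (1 / 2) * (s ξ y + (starRingEnd ℂ) (s ξ (-y))) := by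
  have := fourier_re (𝓕⁻ (s ξ)).integrable y
  rwa [← SchwartzMap.fourier_coe, FourierTransform.fourier_fourierInv_eq] at this

theorem exists_isSchwartzForm_rayMoment_zero_eq (hn : 3 ≤ n) {d N : ℕ} (hdN : d < N)
    {u : En n → En n → ℝ} (hu : IsLocSchwartz u) (hd : IsPosHomogeneous d u)
    (h : ∀ l : List (Fin n × Fin n), l.length = N →
      ∀ x ξ, ξ ≠ 0 → rayMoment 0 (johnIter l u) x ξ = 0) :
    ∃ s : En n → 𝓢(En n, ℝ), IsSchwartzForm d s ∧
      ∀ x ξ, ξ ≠ 0 → rayMoment 0 (ofSlices s) x ξ = rayMoment 0 u x ξ := by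
  obtain ⟨s, hs, eq_of_perp⟩ := exists_isSchwartzForm_eq_fourierFst hn hdN hu hd fun l hl =>
    (fourierVanishesOnPerp_iff (hu.johnIter l) (hd.johnIter hu l)).2 (h l hl)
  have hp := hs.map isLinearMap_reFourierInv
  refine ⟨fun ξ => reFourierInv (s ξ), hp, fun x ξ hξ => ?_⟩
  have vanishes : FourierVanishesOnPerp
      fun x ξ => ofSlices (fun ξ => reFourierInv (s ξ)) x ξ - u x ξ := by
    intro y ξ hξ hy
    rw [fourierFst_sub hp.isLocSchwartz hu y hξ, fourierFst_ofSlices_reFourierInv,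
      eq_of_perp y ξ hξ hy, eq_of_perp (-y) ξ hξ (by rw [inner_neg_left, hy, neg_zero]),
      conj_fourierFst_neg]
    ring
  have := (fourierVanishesOnPerp_iff (hp.isLocSchwartz.sub hu) (hp.isPosHomogeneous.sub hd)).1
    vanishes x ξ hξ
  rwa [rayMoment_sub hp.isLocSchwartz hu 0 x hξ, sub_eq_zero] at this

/-- As in the construction of lifts, `centeredWeight` reduces the `ℓ`-th moment to a `0`-th one and
the `ℓ`-fold derivative along the ray goes back. -/
theorem exists_isSchwartzForm_rayMoment_eq_of_forall_lt (hn : 3 ≤ n) {m ℓ : ℕ} (hℓm : ℓ ≤ m)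
    {u : En n → En n → ℝ} (hu : IsLocSchwartz u) (hd : IsPosHomogeneous m u)
    (h : ∀ r < ℓ, ∀ x ξ, ξ ≠ 0 → rayMoment r u x ξ = 0)
    (john : ∀ l : List (Fin n × Fin n), l.length = m + 1 →
      ∀ x ξ, ξ ≠ 0 → rayMoment ℓ (johnIter l u) x ξ = 0) :
    ∃ s : En n → 𝓢(En n, ℝ), IsSchwartzForm m s ∧
      ∀ r ≤ ℓ, ∀ x ξ, ξ ≠ 0 → rayMoment r (ofSlices s) x ξ = rayMoment r u x ξ := by
  have hw := hu.centeredWeight ℓ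
  have hwd : IsPosHomogeneous (m - ℓ : ℕ) (centeredWeight ℓ u) := by
    simpa [hℓm] using hd.centeredWeight ℓ
  have moment_weight (x ξ : En n) (hξ : ξ ≠ 0) :
      rayMoment 0 (centeredWeight ℓ u) x ξ = rayMoment ℓ u x ξ := by
    rw [rayMoment_zero_centeredWeight u ℓ x hξ, sub_eq_add_neg, ← neg_smul,
      rayMoment_add_smul hu ℓ x hξ, Finset.sum_range_succ, Finset.sum_eq_zero]
    · simp
    · intro r hr
      rw [h r (Finset.mem_range.1 hr) x ξ hξ, mul_zero]
  obtain ⟨p, hp, moment_p⟩ := exists_isSchwartzForm_rayMoment_zero_eq hn (N := m + 1)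
    (Nat.lt_succ_of_le (m.sub_le ℓ)) hw hwd fun l hl x ξ hξ => by
      rw [← johnIter_rayMoment hw 0 l x ξ hξ, johnIter_congr moment_weight l x ξ hξ,
        johnIter_rayMoment hu ℓ l x ξ hξ, john l hl x ξ hξ]
  obtain ⟨s, hs, rayDeriv_eq⟩ :=
    (hp.smul ((-1) ^ ℓ / (ℓ.factorial : ℝ))).exists_rayDeriv_iterate ℓ
  rw [Nat.sub_add_cancel hℓm] at hs
  refine ⟨s, hs, fun r hr x ξ hξ => ?_⟩
  rw [← rayDeriv_eq]
  refine (rayMoment_rayDeriv_iterate_const_mul hp.isLocSchwartz hr x hξ).trans ?_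
  split_ifs with eq
  · rw [moment_p x ξ hξ, moment_weight x ξ hξ, eq]
  · rw [h r (lt_of_le_of_ne hr eq) x ξ hξ]

theorem pdx_pdxi_sub {u v : En n → En n → ℝ} (hu : IsLocSchwartz u) (hv : IsLocSchwartz v)
    (i j : Fin n) (x : En n) {ξ : En n} (hξ : ξ ≠ 0) :
    pdx i (pdxi j fun x ξ => u x ξ - v x ξ) x ξ = pdx i (pdxi j u) x ξ - pdx i (pdxi j v) x ξ := by
  have pdxi_sub (x : En n) :
      pdxi j (fun x ξ => u x ξ - v x ξ) x ξ = pdxi j u x ξ - pdxi j v x ξ := by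
    unfold pdxi
    rw [fderiv_fun_sub (hu.differentiableAt_snd hξ x) (hv.differentiableAt_snd hξ x), sub_apply]
  unfold pdx
  simp_rw [pdxi_sub]
  rw [fderiv_fun_sub ((hu.pdxi j).differentiableAt_fst hξ x)
    ((hv.pdxi j).differentiableAt_fst hξ x), sub_apply]

theorem johnIter_sub {u v : En n → En n → ℝ} (hu : IsLocSchwartz u) (hv : IsLocSchwartz v)
    (l : List (Fin n × Fin n)) : ∀ (x ξ : En n), ξ ≠ 0 →
    johnIter l (fun x ξ => u x ξ - v x ξ) x ξ = johnIter l u x ξ - johnIter l v x ξ := by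
  induction l with
  | nil => exact fun _ _ _ => rfl
  | cons a l ih =>
    intro x ξ hξ
    refine (johnOp_congr ih a.1 a.2 x hξ).trans ?_
    change _ = johnOp a.1 a.2 (johnIter l u) x ξ - johnOp a.1 a.2 (johnIter l v) x ξ
    simp only [johnOp, pdx_pdxi_sub (hu.johnIter l) (hv.johnIter l) _ _ x hξ]
    ring

theorem exists_isSchwartzForm_rayMoment_eq (hn : 3 ≤ n) {m N : ℕ} (hNm : N ≤ m + 1)
    {U : En n → En n → ℝ} (hU : IsLocSchwartz U) (hUd : IsPosHomogeneous m U)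
    (john : ∀ r < N, ∀ l : List (Fin n × Fin n), l.length = m + 1 →
      ∀ x ξ, ξ ≠ 0 → rayMoment r (johnIter l U) x ξ = 0) :
    ∃ s : En n → 𝓢(En n, ℝ), IsSchwartzForm m s ∧
      ∀ r < N, ∀ x ξ, ξ ≠ 0 → rayMoment r (ofSlices s) x ξ = rayMoment r U x ξ := by
  induction N with
  | zero => exact ⟨fun _ => 0, .zero m, by simp⟩
  | succ ℓ ih =>
    obtain ⟨p, hp, moment_p⟩ := ih (by omega) fun r hr => john r (by omega)
    have hpL := hp.isLocSchwartz
    have john_sub (l : List (Fin n × Fin n)) (hl : l.length = m + 1) (x ξ : En n) (hξ : ξ ≠ 0) :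
        rayMoment ℓ (johnIter l fun x ξ => U x ξ - ofSlices p x ξ) x ξ = 0 := by
      rw [← john ℓ (by omega) l hl x ξ hξ]
      simp only [rayMoment, johnIter_sub hU hpL l _ ξ hξ, hp.johnIter_eq_zero l (by omega),
        sub_zero]
    obtain ⟨s, hs, moment_s⟩ := exists_isSchwartzForm_rayMoment_eq_of_forall_lt hn
      (Nat.le_of_succ_le_succ hNm) (hU.sub hpL) (hUd.sub hp.isPosHomogeneous)
      (fun r hr x ξ hξ => by rw [rayMoment_sub hU hpL r x hξ, moment_p r hr x ξ hξ, sub_self])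
      john_sub
    refine ⟨fun ξ => p ξ + s ξ, hp.add hs, fun r hr x ξ hξ => ?_⟩
    refine (rayMoment_add hpL hs.isLocSchwartz r x hξ).trans ?_
    rw [moment_s r (Nat.le_of_lt_succ hr) x ξ hξ, rayMoment_sub hU hpL r x hξ]
    ring

end Range

section Symmetrization

variable {M : Type*} [AddCommMonoid M] [Module ℝ M] {n m : ℕ}

theorem symz_comp_perm (F : (Fin m → Fin n) → M)
    (σ : Equiv.Perm (Fin m)) (I : Fin m → Fin n) : symz F (I ∘ σ) = symz F I := by
  unfold symz
  congr 1
  exact Equiv.sum_comp (Equiv.mulLeft σ) fun π => F (I ∘ π)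

theorem sum_prod_smul_symz (c : Fin n → ℝ)
    (F : (Fin m → Fin n) → M) :
    ∑ I, (∏ r, c (I r)) • symz F I = ∑ I, (∏ r, c (I r)) • F I := by
  have sum_comp_perm (π : Equiv.Perm (Fin m)) :
      ∑ I, (∏ r, c (I r)) • F (I ∘ π) = ∑ I, (∏ r, c (I r)) • F I := by
    rw [← Equiv.sum_comp (π.symm.arrowCongr (Equiv.refl (Fin n))) fun I => (∏ r, c (I r)) • F I]
    refine Finset.sum_congr rfl fun I _ => ?_
    change _ = (∏ r, c (I (π r))) • F (I ∘ π)
    rw [Equiv.prod_comp π fun r => c (I r)]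
  simp only [symz, smul_comm _ ((m.factorial : ℝ)⁻¹), Finset.smul_sum]
  rw [Finset.sum_comm]
  simp only [← Finset.smul_sum, sum_comp_perm]
  rw [Finset.sum_const, Finset.card_univ, Fintype.card_perm, Fintype.card_fin,
    ← Nat.cast_smul_eq_nsmul ℝ, inv_smul_smul₀ (by positivity)]

theorem IsSchwartzForm.exists_momRT_eq {s : En n → 𝓢(En n, ℝ)}
    (hs : IsSchwartzForm m s) :
    ∃ f : (Fin m → Fin n) → En n → ℝ, IsSchwartzField f ∧ IsSymField f ∧
      ∀ q, momRT q f = rayMoment q (ofSlices s) := by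
  obtain ⟨a, coeff⟩ := hs.exists_coeff
  refine ⟨fun I => ⇑(symz a I), fun I => ⟨symz a I, rfl⟩,
    fun σ I => congrArg (⇑) (symz_comp_perm a σ I), fun q => ?_⟩
  rw [momRT_eq_rayMoment_ofSlices]
  congr
  funext ξ
  rw [coeff, sum_prod_smul_symz]

end Symmetrization

section Sufficiency

variable {n m k : ℕ}

theorem forall_map_finRange_prodMk_iff {α β : Type*} {N : ℕ} {p : List (α × β) → Prop} :
    (∀ (a : Fin N → α) (b : Fin N → β), p ((List.finRange N).map fun i => (a i, b i))) ↔
      ∀ l : List (α × β), l.length = N → p l := by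
  refine ⟨?_, fun h a b => h _ (by simp)⟩
  rintro h l rfl
  simpa [← List.ofFn_eq_map] using h (fun i => (l.get i).1) (fun i => (l.get i).2)

theorem exists_momRT_eq_of_johnPotential (hn : 3 ≤ n) (hkm : k ≤ m) {φ : ℕ → En n → En n → ℝ}
    (hφ : ∀ ℓ ≤ k, IsSchwartzOnTS (φ ℓ))
    (john : ∀ l : List (Fin n × Fin n), l.length = m + 1 →
      ∀ x ξ, ξ ≠ 0 → johnIter l (johnPotential m k φ) x ξ = 0) :
    ∃ f : (Fin m → Fin n) → En n → ℝ, IsSchwartzField f ∧ IsSymField f ∧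
      ∀ ℓ ≤ k, ∀ x ξ : En n, ‖ξ‖ = 1 → ⟪x, ξ⟫ = 0 → φ ℓ x ξ = momRT ℓ f x ξ := by
  obtain ⟨U, hU, hUd, moment_U⟩ :=
    exists_lift_rayMoment m φ (k + 1) fun ℓ hℓ => hφ ℓ (Nat.le_of_lt_succ hℓ)
  have potential_eq :=
    johnPotential_eq_rayMoment hU hUd fun r hr => moment_U r (Nat.lt_succ_of_le hr)
  have john_U (l : List (Fin n × Fin n)) (hl : l.length = m + 1) (x ξ : En n) (hξ : ξ ≠ 0) :
      rayMoment k (johnIter l U) x ξ = 0 := by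
    rw [← johnIter_rayMoment hU k l x ξ hξ, ← johnIter_congr potential_eq l x ξ hξ,
      john l hl x ξ hξ]
  obtain ⟨s, hs, moment_s⟩ := exists_isSchwartzForm_rayMoment_eq hn (Nat.succ_le_succ hkm) hU hUd
    fun r hr l hl => rayMoment_eq_zero_of_le (hU.johnIter l) (Nat.le_of_lt_succ hr) (john_U l hl)
  obtain ⟨f, schwartz, symmetric, momRT_f⟩ := hs.exists_momRT_eq
  refine ⟨f, schwartz, symmetric, fun ℓ hℓ x ξ hξ hx => ?_⟩
  have ξ_ne_zero : ξ ≠ 0 := norm_ne_zero_iff.1 (by simp [hξ])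
  rw [moment_U ℓ (by omega) x ξ hξ hx, momRT_f, moment_s ℓ (by omega) x ξ ξ_ne_zero]

end Sufficiency

end RayTransform

theorem momRT_range_characterization_general
    (n m k : ℕ) (hn : 3 ≤ n) (hkm : k ≤ m)
    (φ : ℕ → En n → En n → ℝ) (hφ : ∀ ℓ, ℓ ≤ k → IsSchwartzOnTS (φ ℓ)) :
    (∃ f : (Fin m → Fin n) → En n → ℝ, IsSchwartzField f ∧ IsSymField f ∧
      ∀ ℓ, ℓ ≤ k → ∀ x ξ : En n, ‖ξ‖ = 1 → ⟪x, ξ⟫ = 0 → φ ℓ x ξ = momRT ℓ f x ξ) ↔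
    ∀ idx jdx : Fin (m + 1) → Fin n, ∀ x ξ : En n, ξ ≠ 0 →
      johnIter ((List.finRange (m + 1)).map (fun s => (idx s, jdx s)))
        (RayTransform.johnPotential m k φ) x ξ = 0 := by
  rw [RayTransform.forall_map_finRange_prodMk_iff
    (p := fun l => ∀ x ξ, ξ ≠ 0 → johnIter l (RayTransform.johnPotential m k φ) x ξ = 0)]
  constructor
  · rintro ⟨f, schwartz, -, eq⟩ l hl
    exact RayTransform.johnIter_johnPotential_eq_zero schwartz eq l (by omega)
  · exact RayTransform.exists_momRT_eq_of_johnPotential hn hkm hφ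

/-- range characterization of `𝓘^k = (I^0,…,I^k)` on Schwartz
symmetric `m`-tensor fields (n ≥ 3, 1 ≤ k ≤ m).  A tuple
`(φ⁰,…,φ^k) ∈ 𝒮(TSⁿ⁻¹)^{k+1}` (encoded as `φ : ℕ → …` used for indices `≤ k`)
is in the range iff (1) the parity conditions hold, and (2) the function `ψ^k`
built from the tuple satisfies the iterated John equations. -/
theorem momRT_range_characterization
    (n m k : ℕ) (hn : 3 ≤ n) (hk1 : 1 ≤ k) (hkm : k ≤ m)
    (φ : ℕ → En n → En n → ℝ) (hφ : ∀ ℓ, ℓ ≤ k → IsSchwartzOnTS (φ ℓ)) :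
    (∃ f : (Fin m → Fin n) → En n → ℝ, IsSchwartzField f ∧ IsSymField f ∧
      ∀ ℓ, ℓ ≤ k → ∀ x ξ : En n, ‖ξ‖ = 1 → ⟪x, ξ⟫ = 0 → φ ℓ x ξ = momRT ℓ f x ξ) ↔
    ((∀ ℓ, ℓ ≤ k → ∀ x ξ : En n, ‖ξ‖ = 1 → ⟪x, ξ⟫ = 0 →
        φ ℓ x (-ξ) = (-1 : ℝ) ^ (m - ℓ) * φ ℓ x ξ) ∧
      (∀ idx jdx : Fin (m + 1) → Fin n, ∀ x ξ : En n, ξ ≠ 0 →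
        johnIter ((List.finRange (m + 1)).map (fun s => (idx s, jdx s)))
          (fun x' ξ' => ‖ξ'‖ ^ ((m : ℤ) - 2 * k - 1) *
            ∑ r ∈ Finset.range (k + 1),
              (-1 : ℝ) ^ (k - r) * (k.choose r) * ‖ξ'‖ ^ r * (⟪ξ', x'⟫ : ℝ) ^ (k - r) *
                φ r (x' - ((⟪x', ξ'⟫ : ℝ) / ‖ξ'‖ ^ 2) • ξ') (‖ξ'‖⁻¹ • ξ'))
          x ξ = 0)) := by
  have general := momRT_range_characterization_general n m k hn hkm φ hφ
  refine ⟨fun h => ⟨?_, general.1 h⟩, fun h => general.2 h.2⟩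
  obtain ⟨f, -, -, eq⟩ := h
  intro ℓ hℓ x ξ hξ hx
  rw [eq ℓ hℓ x ξ hξ hx, eq ℓ hℓ x (-ξ) (by rwa [norm_neg]) (by rw [inner_neg_right, hx, neg_zero]),
    RayTransform.momRT_neg f (hℓ.trans hkm)]
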